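/- arXiv:2102.04994 — 2 statements merged into one kernel-verified Lean document; each statement's English description precedes it below -/
import Mathlib

section
/- For every integer k ≥ 3 and every integer ℓ ≥ 3, there exists a real number τ > 0 such that every graph G that is C_k-free and, for every m ≥ ℓ, is (complement of C_m)-free, satisfies max(α(G), ω(G)) ≥ |G|^τ; that is, the set consisting of the cycle C_k together with the complements of all cycles of length at least ℓ has the Erdős–Hajnal property. -/
open SimpleGraph

/-- The independence (stable set) number of a graph: the clique number of the complement. -/
noncomputable def alphaNum {V : Type*} (G : SimpleGraph V) : ℕ := Gᶜ.cliqueNum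

/-- The clique number of a graph. -/
noncomputable def omegaNum {V : Type*} (G : SimpleGraph V) : ℕ := G.cliqueNum

/-- κ(G) = α(G)·ω(G). -/
noncomputable def kappaNum {V : Type*} (G : SimpleGraph V) : ℕ := alphaNum G * omegaNum G

section Basics
open Classical Finset

variable {V : Type*}

/-- No edge of `G` joins a vertex of `A` to a vertex of `B`. -/
def Anti (G : SimpleGraph V) (A B : Finset V) : Prop :=
  ∀ a ∈ A, ∀ b ∈ B, ¬ G.Adj a b

/-- The neighbours of `v` in `A`. -/
noncomputable def nb (G : SimpleGraph V) (v : V) (A : Finset V) : Finset V :=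
  A.filter (G.Adj v)

/-- The vertices of `A` with a neighbour in `S`. -/
noncomputable def nbs (G : SimpleGraph V) (S A : Finset V) : Finset V :=
  A.filter (fun b => ∃ a ∈ S, G.Adj a b)

/-- The largest cardinality of a stable subset of `A`. -/
noncomputable def stab (G : SimpleGraph V) (A : Finset V) : ℕ :=
  (A.powerset.filter (fun S => Anti G S S)).sup card

/-- The product of the stability and clique numbers of `G[A]`. -/
noncomputable def kap (G : SimpleGraph V) (A : Finset V) : ℕ :=
  stab G A * stab Gᶜ A

lemma mem_nb {G : SimpleGraph V} {v x : V} {A : Finset V} :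
    x ∈ nb G v A ↔ x ∈ A ∧ G.Adj v x := by simp [nb]

lemma mem_nbs {G : SimpleGraph V} {x : V} {S A : Finset V} :
    x ∈ nbs G S A ↔ x ∈ A ∧ ∃ a ∈ S, G.Adj a x := by simp [nbs]

lemma nb_subset (G : SimpleGraph V) (v : V) (A : Finset V) : nb G v A ⊆ A :=
  filter_subset _ _

lemma nbs_subset (G : SimpleGraph V) (S A : Finset V) : nbs G S A ⊆ A :=
  filter_subset _ _

lemma nb_mono (G : SimpleGraph V) (v : V) {A B : Finset V} (h : A ⊆ B) : nb G v A ⊆ nb G v B :=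
  filter_subset_filter _ h

lemma nbs_insert (G : SimpleGraph V) (v : V) (S A : Finset V) :
    nbs G (insert v S) A = nb G v A ∪ nbs G S A := by
  ext x; simp only [mem_nbs, mem_nb, mem_union, mem_insert]; grind

lemma Anti.symm {G : SimpleGraph V} {A B : Finset V} (h : Anti G A B) : Anti G B A :=
  fun a ha b hb hab => h b hb a ha hab.symm

lemma Anti.mono {G : SimpleGraph V} {A B A' B' : Finset V} (h : Anti G A B) (hA : A' ⊆ A)
    (hB : B' ⊆ B) : Anti G A' B' :=
  fun a ha b hb => h a (hA ha) b (hB hb)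

lemma card_le_stab {G : SimpleGraph V} {A S : Finset V} (hS : S ⊆ A) (h : Anti G S S) :
    S.card ≤ stab G A :=
  le_sup (f := card) (by simp [hS, h])

lemma exists_stab (G : SimpleGraph V) (A : Finset V) :
    ∃ S ⊆ A, Anti G S S ∧ S.card = stab G A := by
  have hne : (A.powerset.filter (fun S => Anti G S S)).Nonempty :=
    ⟨∅, mem_filter.2 ⟨by simp, fun a ha => by simp at ha⟩⟩
  obtain ⟨S, hS, h⟩ := exists_mem_eq_sup _ hne card
  simp only [mem_filter, mem_powerset] at hS
  exact ⟨S, hS.1, hS.2, h.symm⟩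

lemma stab_mono (G : SimpleGraph V) {A B : Finset V} (h : A ⊆ B) : stab G A ≤ stab G B := by
  obtain ⟨S, hS, hs, hc⟩ := exists_stab G A
  exact hc ▸ card_le_stab (hS.trans h) hs

lemma stab_pos (G : SimpleGraph V) {A : Finset V} (h : A.Nonempty) : 1 ≤ stab G A := by
  obtain ⟨a, ha⟩ := h
  have := card_le_stab (G := G) (A := A) (S := {a}) (by simpa using ha) (by simp [Anti])
  simpa using this

lemma stab_add_le {G : SimpleGraph V} {A B X : Finset V} (hA : A ⊆ X) (hB : B ⊆ X)
    (hd : Disjoint A B) (h : Anti G A B) : stab G A + stab G B ≤ stab G X := by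
  obtain ⟨S, hS, hs, hc⟩ := exists_stab G A
  obtain ⟨T, hT, ht, hc'⟩ := exists_stab G B
  rw [← hc, ← hc', ← card_union_of_disjoint (disjoint_of_subset_left hS
    (disjoint_of_subset_right hT hd))]
  refine card_le_stab (union_subset (hS.trans hA) (hT.trans hB)) ?_
  intro a ha b hb
  rcases mem_union.1 ha with ha | ha <;> rcases mem_union.1 hb with hb | hb
  · exact hs a ha b hb
  · exact h a (hS ha) b (hT hb)
  · exact fun hab => h b (hS hb) a (hT ha) hab.symm
  · exact ht a ha b hb

lemma kap_mono (G : SimpleGraph V) {A B : Finset V} (h : A ⊆ B) : kap G A ≤ kap G B :=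
  Nat.mul_le_mul (stab_mono G h) (stab_mono Gᶜ h)

lemma kap_pos (G : SimpleGraph V) {A : Finset V} (h : A.Nonempty) : 1 ≤ kap G A :=
  Nat.mul_pos (stab_pos G h) (stab_pos Gᶜ h)

lemma kap_compl (G : SimpleGraph V) (A : Finset V) : kap Gᶜ A = kap G A := by
  simp [kap, mul_comm]

lemma two_le_kap (G : SimpleGraph V) {A : Finset V} (h : 2 ≤ A.card) : 2 ≤ kap G A := by
  obtain ⟨a, ha, b, hb, hab⟩ := one_lt_card.1 h
  have hne : A.Nonempty := ⟨a, ha⟩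
  have hsub : ({a, b} : Finset V) ⊆ A := by
    intro x; simp only [mem_insert, mem_singleton]; rintro (rfl | rfl) <;> assumption
  by_cases h1 : G.Adj a b
  · have := card_le_stab (G := Gᶜ) hsub (by
      intro x hx y hy; simp only [mem_insert, mem_singleton] at hx hy
      rcases hx with rfl | rfl <;> rcases hy with rfl | rfl <;> simp [h1, h1.symm])
    rw [card_pair hab] at this
    exact Nat.mul_le_mul (stab_pos G hne) this
  · have := card_le_stab (G := G) hsub (by
      intro x hx y hy; simp only [mem_insert, mem_singleton] at hx hy
      have h2 : ¬ G.Adj b a := fun h => h1 h.symm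
      rcases hx with rfl | rfl <;> rcases hy with rfl | rfl <;> simp [h1, h2])
    rw [card_pair hab] at this
    exact Nat.mul_le_mul this (stab_pos Gᶜ hne)

/-- `HasFam S P X p`: `X` contains `p` nonempty pairwise disjoint subsets satisfying `P`,
pairwise in the relation `S`. -/
def HasFam (S : Finset V → Finset V → Prop) (P : Finset V → Prop) (X : Finset V) (p : ℕ) : Prop :=
  ∃ F : Finset (Finset V), F.card = p ∧ (∀ A ∈ F, A ⊆ X ∧ A.Nonempty ∧ P A) ∧
    ∀ A ∈ F, ∀ B ∈ F, A ≠ B → Disjoint A B ∧ S A B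

lemma HasFam.mono {S S' : Finset V → Finset V → Prop} {P P' : Finset V → Prop} {X Y : Finset V}
    {p : ℕ} (h : HasFam S P X p) (hXY : X ⊆ Y) (hP : ∀ A ⊆ X, P A → P' A)
    (hS : ∀ A ⊆ X, ∀ B ⊆ X, P A → P B → S A B → S' A B) : HasFam S' P' Y p := by
  obtain ⟨F, hF, h1, h2⟩ := h
  refine ⟨F, hF, fun A hA => ⟨(h1 A hA).1.trans hXY, (h1 A hA).2.1, hP A (h1 A hA).1 (h1 A hA).2.2⟩,
    fun A hA B hB hAB => ⟨(h2 A hA B hB hAB).1, ?_⟩⟩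
  exact hS A (h1 A hA).1 B (h1 B hB).1 (h1 A hA).2.2 (h1 B hB).2.2 (h2 A hA B hB hAB).2

lemma HasFam.single {S : Finset V → Finset V → Prop} {P : Finset V → Prop} {X A : Finset V}
    (hA : A ⊆ X) (hne : A.Nonempty) (hP : P A) : HasFam S P X 1 := by
  refine ⟨{A}, by simp, by simp [hA, hne, hP], by simp⟩

lemma HasFam.merge {S : Finset V → Finset V → Prop} {P : Finset V → Prop} {X A B : Finset V}
    {p q : ℕ} (hA : HasFam S P A p) (hB : HasFam S P B q) (hAX : A ⊆ X) (hBX : B ⊆ X)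
    (hd : Disjoint A B)
    (hS : ∀ A' ⊆ A, ∀ B' ⊆ B, P A' → P B' → S A' B' ∧ S B' A') : HasFam S P X (p + q) := by
  obtain ⟨F, hF, h1, h2⟩ := hA
  obtain ⟨F', hF', h1', h2'⟩ := hB
  have hdis : ∀ A' ∈ F, ∀ B' ∈ F', Disjoint A' B' := fun A' hA' B' hB' =>
    disjoint_of_subset_left (h1 A' hA').1 (disjoint_of_subset_right (h1' B' hB').1 hd)
  refine ⟨F ∪ F', ?_, ?_, ?_⟩
  · rw [card_union_of_disjoint, hF, hF']
    rw [Finset.disjoint_left]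
    intro C hC hC'
    have := hdis C hC C hC'
    rw [disjoint_self_iff_empty] at this
    exact (h1 C hC).2.1.ne_empty this
  · intro C hC
    rcases mem_union.1 hC with hC | hC
    · exact ⟨(h1 C hC).1.trans hAX, (h1 C hC).2⟩
    · exact ⟨(h1' C hC).1.trans hBX, (h1' C hC).2⟩
  · intro C hC D hD hCD
    rcases mem_union.1 hC with hC | hC <;> rcases mem_union.1 hD with hD | hD
    · exact h2 C hC D hD hCD
    · exact ⟨hdis C hC D hD, (hS C (h1 C hC).1 D (h1' D hD).1 (h1 C hC).2.2 (h1' D hD).2.2).1⟩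
    · exact ⟨(hdis D hD C hC).symm,
        (hS D (h1 D hD).1 C (h1' C hC).1 (h1 D hD).2.2 (h1' C hC).2.2).2⟩
    · exact h2' C hC D hD hCD

lemma sum_stab_le {G : SimpleGraph V} {P : Finset V → Prop} {X : Finset V} {p c : ℕ}
    (h : HasFam (Anti G) P X p) (hc : ∀ A ⊆ X, P A → c ≤ stab G A) : p * c ≤ stab G X := by
  obtain ⟨F, hF, h1, h2⟩ := h
  have key : ∀ F' ⊆ F, F'.card * c ≤ stab G (F'.biUnion id) := by
    intro F'
    induction F' using Finset.induction_on with
    | empty => simp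
    | insert A F' hA ih =>
      intro hsub
      have hAF : A ∈ F := hsub (mem_insert_self _ _)
      have ih' := ih (fun x hx => hsub (mem_insert_of_mem hx))
      rw [card_insert_of_notMem hA, biUnion_insert]
      have := stab_add_le (G := G) (A := A) (B := F'.biUnion id) (X := A ∪ F'.biUnion id)
        subset_union_left subset_union_right ?_ ?_
      · have h3 := hc A (h1 A hAF).1 (h1 A hAF).2.2
        simp only [id] at this ⊢
        nlinarith
      · rw [disjoint_biUnion_right]
        intro B hB
        exact (h2 A hAF B (hsub (mem_insert_of_mem hB)) (fun e => hA (e ▸ hB))).1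
      · intro a ha b hb
        obtain ⟨B, hB, hb⟩ := mem_biUnion.1 hb
        exact (h2 A hAF B (hsub (mem_insert_of_mem hB)) (fun e => hA (e ▸ hB))).2 a ha b hb
  rw [← hF]
  exact (key F subset_rfl).trans (stab_mono G (biUnion_subset.2 fun A hA => (h1 A hA).1))

/-- `X` minimises `kap / card ^ τ` among its subsets. -/
def Crit (G : SimpleGraph V) (τ : ℝ) (X : Finset V) : Prop :=
  ∀ Y ⊆ X, (kap G X : ℝ) * (Y.card : ℝ) ^ τ ≤ kap G Y * (X.card : ℝ) ^ τ

lemma Crit.compl {G : SimpleGraph V} {τ : ℝ} {X : Finset V} (h : Crit G τ X) : Crit Gᶜ τ X := by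
  intro Y hY; rw [kap_compl, kap_compl]; exact h Y hY

lemma exists_crit (G : SimpleGraph V) {τ : ℝ} (hτ : 0 < τ) {X : Finset V} (hX : X.Nonempty) :
    ∃ Y ⊆ X, Y.Nonempty ∧ Crit G τ Y ∧
      (kap G Y : ℝ) * (X.card : ℝ) ^ τ ≤ kap G X * (Y.card : ℝ) ^ τ := by
  obtain ⟨Y, hY, hmin⟩ := exists_min_image (X.powerset.filter Finset.Nonempty)
    (fun Y => (kap G Y : ℝ) / (Y.card : ℝ) ^ τ) ⟨X, by simp [hX]⟩
  simp only [mem_filter, mem_powerset] at hY hmin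
  have key : ∀ Z ⊆ X, Z.Nonempty → (kap G Y : ℝ) * (Z.card : ℝ) ^ τ ≤ kap G Z * (Y.card : ℝ) ^ τ := by
    intro Z hZ hne
    have h := hmin Z ⟨hZ, hne⟩
    have h1 : (0 : ℝ) < (Y.card : ℝ) ^ τ :=
      Real.rpow_pos_of_pos (by exact_mod_cast hY.2.card_pos) _
    have h2 : (0 : ℝ) < (Z.card : ℝ) ^ τ :=
      Real.rpow_pos_of_pos (by exact_mod_cast hne.card_pos) _
    rwa [div_le_div_iff₀ h1 h2] at h
  refine ⟨Y, hY.1, hY.2, ?_, key X subset_rfl hX⟩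
  intro Z hZ
  rcases Z.eq_empty_or_nonempty with rfl | hne
  · simp [Real.zero_rpow hτ.ne']; positivity
  · exact key Z (hZ.trans hY.1) hne

lemma Crit.stab_le {G : SimpleGraph V} {τ : ℝ} {X Y : Finset V} (h : Crit G τ X)
    (hX : X.Nonempty) (hY : Y ⊆ X) :
    (stab G X : ℝ) * ((Y.card : ℝ) / X.card) ^ τ ≤ stab G Y := by
  have h1 := h Y hY
  have hx : (0 : ℝ) < (X.card : ℝ) := by exact_mod_cast hX.card_pos
  have hx' : (0 : ℝ) < (X.card : ℝ) ^ τ := Real.rpow_pos_of_pos hx _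
  have hw : (0 : ℝ) < stab Gᶜ X := by exact_mod_cast stab_pos Gᶜ hX
  have hw' : (stab Gᶜ Y : ℝ) ≤ stab Gᶜ X := by exact_mod_cast stab_mono Gᶜ hY
  rw [Real.div_rpow (by positivity) hx.le, ← mul_div_assoc, div_le_iff₀ hx']
  simp only [kap, Nat.cast_mul] at h1
  have h2 : (stab G Y : ℝ) * stab Gᶜ Y * (X.card : ℝ) ^ τ ≤
      stab G Y * stab Gᶜ X * (X.card : ℝ) ^ τ := by gcongr
  nlinarith

lemma Crit.fam_le {G : SimpleGraph V} {τ : ℝ} {X : Finset V} (h : Crit G τ X) (hτ : 0 < τ)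
    (hX : X.Nonempty) {p : ℕ} {b : ℝ} (hb : 0 ≤ b)
    (hF : HasFam (Anti G) (fun A => b ≤ A.card) X p) :
    (p : ℝ) * (b / X.card) ^ τ ≤ 1 := by
  have hx : (0 : ℝ) < (X.card : ℝ) := by exact_mod_cast hX.card_pos
  have hs : (0 : ℝ) < stab G X := by exact_mod_cast stab_pos G hX
  have h1 := sum_stab_le (c := ⌈(stab G X : ℝ) * (b / X.card) ^ τ⌉₊) hF (by
    intro A hA hbA
    rw [Nat.ceil_le]
    refine le_trans ?_ (h.stab_le hX hA)
    gcongr)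
  have h1' : (p : ℝ) * (⌈(stab G X : ℝ) * (b / X.card) ^ τ⌉₊ : ℝ) ≤ stab G X := by
    exact_mod_cast h1
  have h2 : (p : ℝ) * ((stab G X : ℝ) * (b / X.card) ^ τ) ≤ stab G X := by
    refine le_trans ?_ h1'
    gcongr
    exact Nat.le_ceil _
  have : (stab G X : ℝ) * ((p : ℝ) * (b / X.card) ^ τ) ≤ stab G X * 1 := by linarith
  exact le_of_mul_le_mul_left this hs

end Basics

section Cycles
open Classical Finset

variable {V : Type*}

/-- `p 0, …, p r` is an induced path of `G`. -/
def IndPath (G : SimpleGraph V) (p : ℕ → V) (r : ℕ) : Prop :=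
  ∀ i j, i < j → j ≤ r → p i ≠ p j ∧ (G.Adj (p i) (p j) ↔ j = i + 1)

lemma nonempty_cycleGraph_embedding {G : SimpleGraph V} {m : ℕ} (f : ℕ → V)
    (h : ∀ i j, i < j → j < m → f i ≠ f j ∧
      (G.Adj (f i) (f j) ↔ j = i + 1 ∨ (i = 0 ∧ j + 1 = m))) :
    Nonempty (cycleGraph m ↪g G) := by
  have hinj : Function.Injective (fun i : Fin m => f i) := by
    intro i j hij
    by_contra hne
    rcases lt_or_gt_of_ne (fun e => hne (Fin.ext e) : (i : ℕ) ≠ j) with hlt | hlt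
    · exact (h i j hlt j.2).1 hij
    · exact (h j i hlt i.2).1 hij.symm
  refine ⟨⟨⟨fun i => f i, hinj⟩, ?_⟩⟩
  have key : ∀ i j : Fin m, (i : ℕ) < j → (G.Adj (f i) (f j) ↔ (cycleGraph m).Adj i j) := by
    intro i j hij
    rw [(h i j hij j.2).2, cycleGraph_adj']
    have hi := i.2
    have hj := j.2
    have h1 : ((j - i : Fin m) : ℕ) = j - i := Fin.sub_val_of_le (le_of_lt hij)
    have h2 : ((i - j : Fin m) : ℕ) = m - j + i := by
      rw [Fin.val_sub, Nat.mod_eq_of_lt (by omega)]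
    omega
  intro i j
  change G.Adj (f i) (f j) ↔ (cycleGraph m).Adj i j
  rcases lt_trichotomy (i : ℕ) j with hlt | heq | hlt
  · exact key i j hlt
  · have : i = j := Fin.ext heq
    subst this
    simp
  · rw [G.adj_comm, (cycleGraph m).adj_comm]
    exact key j i hlt

/-- Two induced paths with the same ends and no other contact form an induced cycle. -/
lemma IndPath.glue {G : SimpleGraph V} {p q : ℕ → V} {r d : ℕ} (hp : IndPath G p r)
    (hq : IndPath G q d) (hr : 2 ≤ r) (hd : 2 ≤ d) (h0 : q 0 = p 0) (h1 : q d = p r)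
    (h : ∀ i j, 0 < i → i < r → 0 < j → j < d → p i ≠ q j ∧ ¬ G.Adj (p i) (q j)) :
    Nonempty (cycleGraph (r + d) ↪g G) := by
  refine nonempty_cycleGraph_embedding
    (fun i => if i ≤ d then q i else p (r + d - i)) ?_
  intro i j hij hj
  by_cases hjd : j ≤ d
  · have hid : i ≤ d := by omega
    simp only [hjd, hid, if_true]
    refine ⟨(hq i j hij hjd).1, ?_⟩
    rw [(hq i j hij hjd).2]
    omega
  · by_cases hid : i ≤ d
    · simp only [hjd, hid, if_true, if_false]
      rcases Nat.eq_zero_or_pos i with rfl | hi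
      · have := hp 0 (r + d - j) (by omega) (by omega)
        rw [h0]
        refine ⟨this.1, ?_⟩
        rw [this.2]
        omega
      · rcases hid.lt_or_eq with hlt | rfl
        · have := h (r + d - j) i (by omega) (by omega) hi hlt
          refine ⟨this.1.symm, ?_⟩
          rw [G.adj_comm]
          simp only [this.2, false_iff]
          omega
        · have := hp (r + i - j) r (by omega) le_rfl
          rw [h1]
          refine ⟨this.1.symm, ?_⟩
          rw [G.adj_comm, this.2]
          omega
    · simp only [hjd, hid, if_false]
      have := hp (r + d - j) (r + d - i) (by omega) (by omega)
      refine ⟨this.1.symm, ?_⟩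
      rw [G.adj_comm, this.2]
      omega

/-- The induced subgraph on `C` is connected (or empty), phrased through closed sets. -/
def Conn (G : SimpleGraph V) (C : Finset V) : Prop :=
  ∀ T : Set V, (∃ x ∈ C, x ∈ T) → (∀ a ∈ C, ∀ b ∈ C, a ∈ T → G.Adj a b → b ∈ T) →
    ∀ x ∈ C, x ∈ T

lemma Conn.singleton (G : SimpleGraph V) (v : V) : Conn G {v} := by
  intro T hT _; simpa using hT

lemma Conn.union {G : SimpleGraph V} {A B : Finset V} (hA : Conn G A) (hB : Conn G B)
    (h : ∃ a ∈ A, ∃ b ∈ B, G.Adj a b) : Conn G (A ∪ B) := by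
  obtain ⟨a, ha, b, hb, hab⟩ := h
  rintro T ⟨x, hx, hxT⟩ hT
  have cA : (∃ x ∈ A, x ∈ T) → ∀ x ∈ A, x ∈ T := fun h => hA T h fun a ha b hb =>
    hT a (mem_union_left _ ha) b (mem_union_left _ hb)
  have cB : (∃ x ∈ B, x ∈ T) → ∀ x ∈ B, x ∈ T := fun h => hB T h fun a ha b hb =>
    hT a (mem_union_right _ ha) b (mem_union_right _ hb)
  have hab' := hT a (mem_union_left _ ha) b (mem_union_right _ hb)
  have hba' := hT b (mem_union_right _ hb) a (mem_union_left _ ha)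
  have hall : (∀ x ∈ A, x ∈ T) ∧ ∀ x ∈ B, x ∈ T := by
    rcases mem_union.1 hx with hx | hx
    · have h1 := cA ⟨x, hx, hxT⟩
      exact ⟨h1, cB ⟨b, hb, hab' (h1 a ha) hab⟩⟩
    · have h1 := cB ⟨x, hx, hxT⟩
      exact ⟨cA ⟨a, ha, hba' (h1 b hb) hab.symm⟩, h1⟩
  intro y hy
  rcases mem_union.1 hy with hy | hy
  · exact hall.1 y hy
  · exact hall.2 y hy

lemma Conn.insert_vertex {G : SimpleGraph V} {A : Finset V} (hA : Conn G A) {v : V}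
    (h : ∃ a ∈ A, G.Adj v a) : Conn G (insert v A) := by
  obtain ⟨a, ha, hva⟩ := h
  rw [insert_eq]
  exact (Conn.singleton G v).union hA ⟨v, by simp, a, ha, hva⟩

/-- A proper nonempty subset of a connected set has an outside neighbour in that set. -/
lemma Conn.exists_adj {G : SimpleGraph V} {C A : Finset V} (hC : Conn G C) (hA : A ⊆ C)
    (hne : A.Nonempty) (hpr : ∃ x ∈ C, x ∉ A) : ∃ a ∈ A, ∃ b ∈ C, b ∉ A ∧ G.Adj a b := by
  by_contra hcon
  push Not at hcon
  obtain ⟨x, hx, hxA⟩ := hpr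
  obtain ⟨y, hy⟩ := hne
  refine hxA (hC (A : Set V) ⟨y, hA hy, hy⟩ ?_ x hx)
  intro a _ b hb haT hab
  by_contra hbA
  exact hcon a haT b hb hbA hab

/-- Any two vertices of a connected set are joined by an induced path inside it. -/
lemma Conn.exists_indPath {G : SimpleGraph V} {C : Finset V} (hC : Conn G C) {x y : V}
    (hx : x ∈ C) (hy : y ∈ C) :
    ∃ (q : ℕ → V) (d : ℕ), IndPath G q d ∧ q 0 = x ∧ q d = y ∧ ∀ i ≤ d, q i ∈ C := by
  let H : SimpleGraph V :=
    { Adj := fun a b => G.Adj a b ∧ a ∈ C ∧ b ∈ C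
      symm := ⟨fun a b h => ⟨h.1.symm, h.2.2, h.2.1⟩⟩
      loopless := ⟨fun a h => G.loopless.irrefl a h.1⟩ }
  have hr : H.Reachable x y := by
    refine hC {z | H.Reachable x z} ⟨x, hx, Reachable.refl x⟩ ?_ y hy
    intro a ha b hb haT hab
    exact Reachable.trans haT (Adj.reachable (show H.Adj a b from ⟨hab, ha, hb⟩))
  obtain ⟨w, hw⟩ := hr.exists_walk_length_eq_dist
  have hreach : ∀ i, H.Reachable x (w.getVert i) := fun i => ⟨w.take i⟩
  have hdist : ∀ i ≤ w.length, H.dist x (w.getVert i) = i := by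
    intro i hi
    have h1 : H.dist x (w.getVert i) ≤ i := by
      refine (dist_le (w.take i)).trans ?_
      rw [Walk.take_length]; omega
    have h2 : H.dist (w.getVert i) y ≤ w.length - i := by
      refine (dist_le (w.drop i)).trans ?_
      rw [Walk.drop_length]
    have h3 : H.dist x y ≤ H.dist x (w.getVert i) + H.dist (w.getVert i) y := by
      obtain ⟨w1, hw1⟩ := (hreach i).exists_walk_length_eq_dist
      obtain ⟨w2, hw2⟩ := Reachable.exists_walk_length_eq_dist (G := H) (u := w.getVert i) (v := y)
        ⟨w.drop i⟩
      rw [← hw1, ← hw2, ← Walk.length_append]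
      exact dist_le _
    omega
  have hmem : ∀ i ≤ w.length, w.getVert i ∈ C := by
    intro i hi
    rcases Nat.eq_zero_or_pos i with rfl | hpos
    · simpa using hx
    · have := w.adj_getVert_succ (i := i - 1) (by omega)
      rw [Nat.sub_add_cancel hpos] at this
      exact this.2.2
  refine ⟨w.getVert, w.length, ?_, by simp, by simp, hmem⟩
  intro i j hij hj
  have hi := hdist i (by omega)
  have hj' := hdist j hj
  refine ⟨fun e => by rw [e] at hi; omega, fun hadj => ?_, ?_⟩
  · have h1 : H.Adj (w.getVert i) (w.getVert j) := ⟨hadj, hmem i (by omega), hmem j hj⟩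
    have h2 : H.dist x (w.getVert j) ≤ H.dist x (w.getVert i) + 1 := by
      obtain ⟨w1, hw1⟩ := (hreach i).exists_walk_length_eq_dist
      rw [← hw1]
      refine (dist_le (w1.concat h1)).trans ?_
      rw [Walk.length_concat]
    omega
  · rintro rfl
    exact (w.adj_getVert_succ (i := i) (by omega)).1

end Cycles

section LongCycle
open Classical Finset

variable {V : Type*}

/-- If no two large disjoint sets are anticomplete, every large set has a giant component. -/
lemma exists_giant {G : SimpleGraph V} {W : Finset V} {θ : ℝ}
    (hna : ∀ A ⊆ W, ∀ B ⊆ W, Disjoint A B → Anti G A B → θ ≤ A.card → (B.card : ℝ) < θ)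
    (hW : 3 * θ ≤ W.card) (hθ : 0 < θ) :
    ∃ C ⊆ W, Conn G C ∧ Anti G C (W \ C) ∧ (W.card : ℝ) - θ < C.card := by
  obtain ⟨C, hC, hmin⟩ := exists_min_image
    (W.powerset.filter (fun C => Anti G C (W \ C) ∧ (W.card : ℝ) < 2 * C.card)) card
    ⟨W, by
      simp only [mem_filter, mem_powerset, subset_refl, true_and]
      refine ⟨fun a _ b hb => by simp at hb, by linarith⟩⟩
  simp only [mem_filter, mem_powerset] at hC hmin
  obtain ⟨hCW, hCa, hCc⟩ := hC
  have hsplit : ∀ A ⊆ W, (A.card : ℝ) + (W \ A).card = W.card := by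
    intro A hA
    rw [add_comm]; exact_mod_cast card_sdiff_add_card_eq_card hA
  have hdich : ∀ A ⊆ W, Anti G A (W \ A) → (A.card : ℝ) < θ ∨ ((W \ A).card : ℝ) < θ := by
    intro A hA ha
    by_contra hcon
    push Not at hcon
    exact absurd (hna A hA (W \ A) sdiff_subset disjoint_sdiff ha hcon.1) (not_lt.2 hcon.2)
  refine ⟨C, hCW, ?_, hCa, ?_⟩
  · rintro T ⟨x, hx, hxT⟩ hT
    by_contra hcon
    push Not at hcon
    obtain ⟨y, hy, hyT⟩ := hcon
    set A := C.filter (· ∈ T) with hA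
    set B := C.filter (· ∉ T) with hB
    have hAC : A ⊆ C := filter_subset _ _
    have hBC : B ⊆ C := filter_subset _ _
    have hAB : A.card + B.card = C.card := card_filter_add_card_filter_not _
    have hApos : 0 < A.card := card_pos.2 ⟨x, by simp [hA, hx, hxT]⟩
    have hBpos : 0 < B.card := card_pos.2 ⟨y, by simp [hB, hy, hyT]⟩
    have hABanti : Anti G A B := by
      intro a ha b hb hab
      simp only [hA, hB, mem_filter] at ha hb
      exact hb.2 (hT a ha.1 b hb.1 ha.2 hab)
    have hAcl : Anti G A (W \ A) := by
      intro a ha b hb hab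
      by_cases hbC : b ∈ C
      · refine hABanti a ha b ?_ hab
        simp only [hA, mem_sdiff, mem_filter, not_and] at hb
        simp only [hB, mem_filter]
        exact ⟨hbC, hb.2 hbC⟩
      · exact hCa a (hAC ha) b (mem_sdiff.2 ⟨(mem_sdiff.1 hb).1, hbC⟩) hab
    have hBcl : Anti G B (W \ B) := by
      intro a ha b hb hab
      by_cases hbC : b ∈ C
      · refine hABanti b ?_ a ha hab.symm
        simp only [hB, mem_sdiff, mem_filter, not_and, not_not] at hb
        simp only [hA, mem_filter]
        exact ⟨hbC, hb.2 hbC⟩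
      · exact hCa a (hBC ha) b (mem_sdiff.2 ⟨(mem_sdiff.1 hb).1, hbC⟩) hab
    have hA2 : ¬ (W.card : ℝ) < 2 * A.card := fun h => by
      have := hmin A ⟨hAC.trans hCW, hAcl, h⟩
      omega
    have hB2 : ¬ (W.card : ℝ) < 2 * B.card := fun h => by
      have := hmin B ⟨hBC.trans hCW, hBcl, h⟩
      omega
    have h1 := hdich A (hAC.trans hCW) hAcl
    have h2 := hdich B (hBC.trans hCW) hBcl
    have h3 := hsplit A (hAC.trans hCW)
    have h4 := hsplit B (hBC.trans hCW)
    have h5 := hdich C hCW hCa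
    have h6 := hsplit C hCW
    have h7 : (A.card : ℝ) + B.card = C.card := by exact_mod_cast hAB
    rcases h1 with h1 | h1 <;> rcases h2 with h2 | h2 <;> rcases h5 with h5 | h5 <;> linarith
  · have h5 := hdich C hCW hCa
    have h6 := hsplit C hCW
    rcases h5 with h5 | h5 <;> linarith

/-- Growing an induced path into a connected set, leaving a large connected remainder. -/
lemma exists_gyarfas_path {G : SimpleGraph V} {W₀ : Finset V} {θ : ℝ} (hθ : 0 < θ)
    (hna : ∀ A ⊆ W₀, ∀ B ⊆ W₀, Disjoint A B → Anti G A B → θ ≤ A.card → (B.card : ℝ) < θ)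
    {p₀ : V} (hp₀ : p₀ ∉ W₀) (hdeg₀ : ((nb G p₀ W₀).card : ℝ) ≤ θ)
    (hdeg : ∀ v ∈ W₀, ((nb G v W₀).card : ℝ) ≤ θ) (hconn : Conn G W₀)
    (hadj : ∃ w ∈ W₀, G.Adj p₀ w) (r : ℕ) (hsz : (2 * r + 4) * θ ≤ W₀.card) :
    ∃ (p : ℕ → V) (W : Finset V), p 0 = p₀ ∧ W ⊆ W₀ ∧ IndPath G p r ∧ Conn G W ∧
      (∃ w ∈ W, G.Adj (p r) w) ∧ (∀ j ≤ r, p j ∉ W) ∧ (∀ j < r, ∀ w ∈ W, ¬ G.Adj (p j) w) ∧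
      (∀ j, 0 < j → j ≤ r → p j ∈ W₀) ∧ (W₀.card : ℝ) - 2 * r * θ ≤ W.card := by
  induction r with
  | zero =>
    refine ⟨fun _ => p₀, W₀, rfl, subset_rfl, fun i j _ _ => by omega, hconn, hadj,
      fun _ _ => hp₀, fun _ _ => by omega, fun _ _ => by omega, by simp⟩
  | succ r ih =>
    push_cast at hsz
    obtain ⟨p, W, h0, hWW, hip, hWc, ⟨w, hw, hpw⟩, hpW, hanti, hpW₀, hcard⟩ := ih (by nlinarith)
    have hdegp : ((nb G (p r) W).card : ℝ) ≤ θ := by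
      have h1 : ((nb G (p r) W).card : ℝ) ≤ (nb G (p r) W₀).card := by
        exact_mod_cast card_le_card (nb_mono G _ hWW)
      refine h1.trans ?_
      rcases Nat.eq_zero_or_pos r with rfl | hr
      · rw [h0]; exact hdeg₀
      · exact hdeg _ (hpW₀ r hr le_rfl)
    have hsub : W \ nb G (p r) W ⊆ W₀ := sdiff_subset.trans hWW
    have hc1 : ((W \ nb G (p r) W).card : ℝ) = W.card - (nb G (p r) W).card := by
      have := card_sdiff_add_card_eq_card (nb_subset G (p r) W)
      rw [eq_sub_iff_add_eq]; exact_mod_cast this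
    obtain ⟨C, hC, hCc, hCa, hCs⟩ := exists_giant (G := G) (W := W \ nb G (p r) W) (θ := θ)
      (fun A hA B hB => hna A (hA.trans hsub) B (hB.trans hsub)) (by nlinarith) hθ
    have hCW : C ⊆ W := hC.trans sdiff_subset
    have hCne : C.Nonempty := by
      rw [← card_pos]
      have : (0 : ℝ) < C.card := by nlinarith
      exact_mod_cast this
    have hwC : w ∉ C := fun h => (mem_sdiff.1 (hC h)).2 (mem_nb.2 ⟨hw, hpw⟩)
    obtain ⟨c, hc, u, hu, huC, hcu⟩ := hWc.exists_adj hCW hCne ⟨w, hw, hwC⟩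
    have hpu : G.Adj (p r) u := by
      by_contra hcon
      refine hCa c hc u (mem_sdiff.2 ⟨mem_sdiff.2 ⟨hu, ?_⟩, huC⟩) hcu
      rw [mem_nb]; exact fun h => hcon h.2
    refine ⟨fun j => if j ≤ r then p j else u, C, by simp [h0], hCW.trans hWW, ?_, hCc, ?_, ?_,
      ?_, ?_, ?_⟩
    · intro i j hij hj
      rcases Nat.lt_or_ge r j with hrj | hrj
      · have hj' : j = r + 1 := by omega
        subst hj'
        have hi : i ≤ r := by omega
        simp only [hi, if_true, Nat.not_succ_le_self, if_false]
        refine ⟨fun e => hpW i hi (e ▸ hu), ?_⟩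
        rcases hi.lt_or_eq with hlt | rfl
        · simp only [hanti i hlt u hu, false_iff]; omega
        · simp [hpu]
      · have hi : i ≤ r := by omega
        simp only [hi, hrj, if_true]
        exact hip i j hij hrj
    · exact ⟨c, hc, by simpa using hcu.symm⟩
    · intro j hj
      by_cases hjr : j ≤ r
      · simp only [hjr, if_true]; exact fun h => hpW j hjr (hCW h)
      · simp only [hjr, if_false]; exact huC
    · intro j hj x hx
      have hjr : j ≤ r := by omega
      simp only [hjr, if_true]
      rcases hjr.lt_or_eq with hlt | rfl
      · exact hanti j hlt x (hCW hx)
      · exact fun h => (mem_sdiff.1 (hC hx)).2 (mem_nb.2 ⟨hCW hx, h⟩)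
    · intro j hj0 hj
      by_cases hjr : j ≤ r
      · simp only [hjr, if_true]; exact hpW₀ j hj0 hjr
      · simp only [hjr, if_false]; exact hWW hu
    · push_cast
      nlinarith

/-- A connected graph contains a connected set whose closed neighbourhood has prescribed size. -/
lemma Conn.exists_closedNbhd {G : SimpleGraph V} {C : Finset V} {θ s : ℝ} (hC : Conn G C)
    (hCne : C.Nonempty) (hdeg : ∀ v ∈ C, ((nb G v C).card : ℝ) + 1 ≤ θ) (hs : θ < s)
    (hsC : s ≤ C.card) :
    ∃ E ⊆ C, E.Nonempty ∧ Conn G E ∧ s ≤ (E ∪ nbs G E C).card ∧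
      ((E ∪ nbs G E C).card : ℝ) ≤ s + θ := by
  obtain ⟨v, hv⟩ := hCne
  have hstep : ∀ E ⊆ C, ∀ u ∈ C, ((insert u E ∪ nbs G (insert u E) C).card : ℝ) ≤
      (E ∪ nbs G E C).card + θ := by
    intro E _ u hu
    have h1 : insert u E ∪ nbs G (insert u E) C ⊆ (E ∪ nbs G E C) ∪ (insert u (nb G u C)) := by
      rw [nbs_insert]
      intro x hx
      simp only [mem_union, mem_insert] at hx ⊢
      tauto
    have h2 := (card_le_card h1).trans (card_union_le _ _)
    have h3 := card_insert_le u (nb G u C)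
    have h4 : ((insert u E ∪ nbs G (insert u E) C).card : ℝ) ≤
        (E ∪ nbs G E C).card + ((nb G u C).card + 1) := by
      exact_mod_cast h2.trans (by omega)
    linarith [hdeg u hu]
  obtain ⟨E, hE, hmax⟩ := exists_max_image
    (C.powerset.filter (fun E => E.Nonempty ∧ Conn G E ∧ ((E ∪ nbs G E C).card : ℝ) < s)) card
    ⟨{v}, by
      simp only [mem_filter, mem_powerset, singleton_subset_iff, singleton_nonempty, true_and]
      refine ⟨hv, Conn.singleton G v, ?_⟩
      have := hstep ∅ (empty_subset _) v hv
      have h0 : (∅ ∪ nbs G ∅ C : Finset V) = ∅ := by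
        ext x; simp [mem_nbs]
      rw [h0] at this
      simp only [card_empty, Nat.cast_zero, zero_add] at this
      exact lt_of_le_of_lt this hs⟩
  simp only [mem_filter, mem_powerset] at hE hmax
  obtain ⟨hEC, hEne, hEc, hEs⟩ := hE
  have hpr : ∃ x ∈ C, x ∉ E := by
    by_contra hcon
    push Not at hcon
    have h1 : C.card ≤ (E ∪ nbs G E C).card :=
      card_le_card (fun x hx => mem_union_left _ (hcon x hx))
    have h2 : (C.card : ℝ) ≤ (E ∪ nbs G E C).card := by exact_mod_cast h1
    linarith
  obtain ⟨a, ha, u, hu, huE, hau⟩ := hC.exists_adj hEC hEne hpr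
  have hsub : insert u E ⊆ C := insert_subset hu hEC
  have hconn : Conn G (insert u E) := hEc.insert_vertex ⟨a, ha, hau.symm⟩
  refine ⟨insert u E, hsub, insert_nonempty _ _, hconn, ?_, ?_⟩
  · by_contra hcon
    push Not at hcon
    have := hmax (insert u E) ⟨hsub, insert_nonempty _ _, hconn, hcon⟩
    rw [card_insert_of_notMem huE] at this
    omega
  · linarith [hstep E hEC u hu]

/-- A sparse graph without large anticomplete pairs has a long induced cycle. -/
lemma exists_long_cycle {G : SimpleGraph V} {X : Finset V} {θ : ℝ} (hθ : 0 < θ) {r : ℕ}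
    (hr : 2 ≤ r) (hX : (3 * r + 11) * θ ≤ X.card)
    (hdeg : ∀ v ∈ X, ((nb G v X).card : ℝ) + 1 ≤ θ)
    (hna : ∀ A ⊆ X, ∀ B ⊆ X, Disjoint A B → Anti G A B → θ ≤ A.card → (B.card : ℝ) < θ) :
    ∃ m, r ≤ m ∧ Nonempty (cycleGraph m ↪g G) := by
  have hr' : (2 : ℝ) ≤ r := by exact_mod_cast hr
  obtain ⟨C, hCX, hCc, -, hCs⟩ := exists_giant hna (by nlinarith) hθ
  have hdegC : ∀ v ∈ X, ((nb G v C).card : ℝ) + 1 ≤ θ := by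
    intro v hv
    have : ((nb G v C).card : ℝ) ≤ (nb G v X).card := by
      exact_mod_cast card_le_card (nb_mono G v hCX)
    linarith [hdeg v hv]
  have hCne : C.Nonempty := by
    rw [← card_pos]
    have : (0 : ℝ) < C.card := by nlinarith
    exact_mod_cast this
  obtain ⟨E, hEC, hEne, hEc, hEl, hEu⟩ := hCc.exists_closedNbhd (θ := θ) (s := (r + 3) * θ) hCne
    (fun v hv => hdegC v (hCX hv)) (by nlinarith) (by nlinarith)
  set N := E ∪ nbs G E C with hN
  have hNC : N ⊆ C := union_subset hEC (nbs_subset _ _ _)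
  have hCN : ((C \ N).card : ℝ) = C.card - N.card := by
    rw [eq_sub_iff_add_eq]; exact_mod_cast card_sdiff_add_card_eq_card hNC
  have hCNX : C \ N ⊆ X := sdiff_subset.trans hCX
  obtain ⟨W₀, hW₀, hW₀c, hW₀a, hW₀s⟩ := exists_giant (G := G) (W := C \ N) (θ := θ)
    (fun A hA B hB => hna A (hA.trans hCNX) B (hB.trans hCNX)) (by nlinarith) hθ
  have hW₀C : W₀ ⊆ C := hW₀.trans sdiff_subset
  have hW₀card : (2 * r + 4) * θ ≤ W₀.card := by nlinarith
  have hW₀ne : W₀.Nonempty := by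
    rw [← card_pos]
    have : (0 : ℝ) < W₀.card := by nlinarith
    exact_mod_cast this
  have hEW : Anti G E W₀ := by
    intro a ha b hb hab
    have := mem_sdiff.1 (hW₀ hb)
    exact this.2 (mem_union_right _ (mem_nbs.2 ⟨this.1, a, ha, hab⟩))
  have hEW₀d : Disjoint E W₀ := by
    rw [Finset.disjoint_left]
    intro x hx hx'
    exact (mem_sdiff.1 (hW₀ hx')).2 (mem_union_left _ hx)
  obtain ⟨e₀, he₀⟩ := hEne
  obtain ⟨w₀, hw₀, p₀, hp₀C, hp₀W, hwp⟩ := hCc.exists_adj hW₀C hW₀ne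
    ⟨e₀, hEC he₀, Finset.disjoint_left.1 hEW₀d he₀⟩
  have hp₀N : p₀ ∈ N := by
    by_contra hcon
    exact hW₀a w₀ hw₀ p₀ (mem_sdiff.2 ⟨mem_sdiff.2 ⟨hp₀C, hcon⟩, hp₀W⟩) hwp
  have hp₀E : p₀ ∉ E := fun h => hEW p₀ h w₀ hw₀ hwp.symm
  obtain ⟨e₁, he₁, hep⟩ : ∃ a ∈ E, G.Adj a p₀ := by
    rcases mem_union.1 hp₀N with h | h
    · exact absurd h hp₀E
    · exact (mem_nbs.1 h).2
  have hdegW : ∀ v ∈ X, ((nb G v W₀).card : ℝ) ≤ θ := by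
    intro v hv
    have : ((nb G v W₀).card : ℝ) ≤ (nb G v X).card := by
      exact_mod_cast card_le_card (nb_mono G v (hW₀C.trans hCX))
    linarith [hdeg v hv]
  have hW₀X := hW₀C.trans hCX
  obtain ⟨p, W, h0, hWW, hip, hWc, ⟨w, hw, hpw⟩, hpW, hanti, hpW₀, hcard⟩ :=
    exists_gyarfas_path hθ (fun A hA B hB => hna A (hA.trans hW₀X) B (hB.trans hW₀X)) hp₀W
      (hdegW p₀ (hCX hp₀C)) (fun v hv => hdegW v (hW₀X hv)) hW₀c ⟨w₀, hw₀, hwp.symm⟩ r hW₀card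
  have hpX : ∀ j ≤ r, p j ∈ X := by
    intro j hj
    rcases Nat.eq_zero_or_pos j with rfl | hj0
    · rw [h0]; exact hCX hp₀C
    · exact hW₀X (hpW₀ j hj0 hj)
  -- the vertices of the neighbourhood of `E` away from the path
  set Q := (range (r + 1)).biUnion (fun j => insert (p j) (nb G (p j) C)) with hQ
  have hQcard : (Q.card : ℝ) ≤ (r + 1) * θ := by
    have h1 : Q.card ≤ ∑ j ∈ range (r + 1), (insert (p j) (nb G (p j) C)).card := card_biUnion_le
    have h2 : (Q.card : ℝ) ≤ ∑ j ∈ range (r + 1), ((insert (p j) (nb G (p j) C)).card : ℝ) := by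
      exact_mod_cast h1
    refine h2.trans ((sum_le_card_nsmul _ _ θ ?_).trans ?_)
    · intro j hj
      have h3 : ((insert (p j) (nb G (p j) C)).card : ℝ) ≤ (nb G (p j) C).card + 1 := by
        exact_mod_cast card_insert_le _ _
      exact h3.trans (hdegC _ (hpX j (by simpa [Nat.lt_succ_iff] using hj)))
    · simp
  have hEcard : (E.card : ℝ) < θ :=
    hna W₀ hW₀X E (hEC.trans hCX) hEW₀d.symm hEW.symm (by nlinarith)
  set F := (N \ E) \ Q with hF
  have hFcard : θ ≤ F.card := by
    have h1 : N.card ≤ F.card + Q.card + E.card := by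
      have : N ⊆ F ∪ Q ∪ E := by
        intro x hx; simp only [hF, mem_union, mem_sdiff]; tauto
      exact (card_le_card this).trans ((card_union_le _ _).trans
        (Nat.add_le_add_right (card_union_le _ _) _))
    have h2 : (N.card : ℝ) ≤ F.card + Q.card + E.card := by exact_mod_cast h1
    nlinarith
  have hFC : F ⊆ C := sdiff_subset.trans (sdiff_subset.trans hNC)
  have hFW : Disjoint F W := by
    rw [Finset.disjoint_left]
    intro x hx hx'
    exact (mem_sdiff.1 (hW₀ (hWW hx'))).2 (mem_sdiff.1 (mem_sdiff.1 hx).1).1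
  obtain ⟨f, hf, w', hw', hfw⟩ : ∃ f ∈ F, ∃ w ∈ W, G.Adj f w := by
    by_contra hcon
    push Not at hcon
    have := hna F (hFC.trans hCX) W (hWW.trans hW₀X) hFW hcon hFcard
    nlinarith
  have hfN := (mem_sdiff.1 (mem_sdiff.1 hf).1).1
  have hfE := (mem_sdiff.1 (mem_sdiff.1 hf).1).2
  have hfQ := (mem_sdiff.1 hf).2
  obtain ⟨e₂, he₂, hef⟩ : ∃ a ∈ E, G.Adj a f := by
    rcases mem_union.1 hfN with h | h
    · exact absurd h hfE
    · exact (mem_nbs.1 h).2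
  have hfp : ∀ j ≤ r, p j ≠ f ∧ ¬ G.Adj (p j) f := by
    intro j hj
    have h1 : f ∉ insert (p j) (nb G (p j) C) := fun h =>
      hfQ (mem_biUnion.2 ⟨j, by simp; omega, h⟩)
    rw [mem_insert, not_or, mem_nb] at h1
    exact ⟨fun e => h1.1 e.symm, fun h => h1.2 ⟨hFC hf, h⟩⟩
  have hconn : Conn G (insert (p r) (insert p₀ (insert f E ∪ W))) := by
    refine Conn.insert_vertex (Conn.insert_vertex (Conn.union (hEc.insert_vertex ⟨e₂, he₂, hef.symm⟩) hWc
      ⟨f, by simp, w', hw', hfw⟩) ⟨e₁, by simp [he₁], hep.symm⟩) ⟨w, by simp [hw], hpw⟩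
  obtain ⟨q, d, hq, hq0, hqd, hqm⟩ := hconn.exists_indPath (x := p₀) (y := p r)
    (by simp) (by simp)
  have hpr := hip 0 r (by omega) le_rfl
  have hd : 2 ≤ d := by
    by_contra hcon
    rcases (by omega : d = 0 ∨ d = 1) with rfl | rfl
    · exact hpr.1 (by rw [h0, ← hq0, hqd])
    · have := (hq 0 1 (by omega) le_rfl).2.2 rfl
      rw [hq0, hqd, ← h0, hpr.2] at this
      omega
  refine ⟨r + d, by omega, hip.glue hq hr hd (by rw [hq0, h0]) hqd ?_⟩
  intro i j hi hir hj hjd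
  have h1 : q j ∈ insert f E ∪ W := by
    have h2 := hqm j (by omega)
    have h3 := (hq j d hjd le_rfl).1
    have h4 := (hq 0 j hj (by omega)).1
    rw [hqd] at h3
    rw [hq0] at h4
    simp only [mem_insert, h3, Ne.symm h4, false_or] at h2
    simpa using h2
  have hpi := hpW₀ i hi hir.le
  rcases mem_union.1 h1 with h2 | h2
  · rcases mem_insert.1 h2 with h2 | h2
    · rw [h2]; exact hfp i hir.le
    · exact ⟨fun e => Finset.disjoint_left.1 hEW₀d h2 (e ▸ hpi),
        fun h => hEW _ h2 _ hpi h.symm⟩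
  · exact ⟨fun e => hpW i hir.le (e ▸ h2), hanti i hir _ h2⟩

end LongCycle

section PathsAndCombs
open Classical Finset

variable {V : Type*}

/-- In a sparse graph without large anticomplete pairs, large blocks allow an induced path
with one vertex in each block. -/
lemma exists_transversal_path {G : SimpleGraph V} {U : Finset V} {θ : ℝ} (hθ : 0 < θ)
    (hdeg : ∀ v ∈ U, ((nb G v U).card : ℝ) ≤ θ)
    (hna : ∀ A ⊆ U, ∀ B ⊆ U, Disjoint A B → Anti G A B → θ ≤ A.card → (B.card : ℝ) < θ)
    (g : V → ℕ) (s : ℕ) : ∀ (E : Finset V) (J : Finset ℕ) (R : ℕ → Finset V), J.card = s →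
    E ⊆ U → (∀ u ∈ E, g u ∉ J) → (∀ u ∈ E, ∀ u' ∈ E, g u = g u') → (∀ j ∈ J, R j ⊆ U) →
    (∀ j ∈ J, ∀ u ∈ R j, g u = j) →
    3 ^ (s + 1) * θ ≤ E.card → (∀ j ∈ J, 3 ^ (s + 1) * θ ≤ (R j).card) →
    ∃ p : ℕ → V, IndPath G p s ∧ p 0 ∈ E ∧ (∀ i, 0 < i → i ≤ s → g (p i) ∈ J ∧
      p i ∈ R (g (p i))) ∧ ∀ i j, i < j → j ≤ s → g (p i) ≠ g (p j) := by
  induction s with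
  | zero =>
    intro E J R _ _ _ _ _ _ hE _
    have hne : E.Nonempty := by
      rw [← card_pos]
      have : (0 : ℝ) < E.card := lt_of_lt_of_le (by positivity) hE
      exact_mod_cast this
    obtain ⟨e, he⟩ := hne
    exact ⟨fun _ => e, fun i j _ _ => by omega, he, fun i _ _ => by omega, fun i j _ _ => by omega⟩
  | succ s ih =>
    intro E J R hJ hEU hgE hgE' hRU hgR hE hR
    have h3 : (1 : ℝ) ≤ 3 ^ s := one_le_pow₀ (by norm_num)
    have hpow : (3 : ℝ) ^ (s + 1 + 1) = 9 * 3 ^ s := by ring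
    have hpow' : (3 : ℝ) ^ (s + 1) = 3 * 3 ^ s := by ring
    rw [hpow] at hE hR
    rw [hpow'] at ih
    have h3θ : θ ≤ 3 ^ s * θ := by nlinarith
    obtain ⟨j₀, hj₀⟩ : J.Nonempty := by rw [← card_pos]; omega
    have hEdisj : ∀ A ⊆ E, ∀ j ∈ J, ∀ B ⊆ R j, Disjoint A B := by
      intro A hA j hj B hB
      rw [Finset.disjoint_left]
      intro x hx hx'
      exact hgE x (hA hx) (by rw [hgR j hj x (hB hx')]; exact hj)
    have hcompl : ∀ E' : Finset V, ∀ j, ((R j \ nbs G E' (R j)).card : ℝ) +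
        (nbs G E' (R j)).card = (R j).card := by
      intro E' j
      exact_mod_cast card_sdiff_add_card_eq_card (nbs_subset G E' (R j))
    have hantin : ∀ E' : Finset V, ∀ j, Anti G E' (R j \ nbs G E' (R j)) := by
      intro E' j a ha b hb hab
      exact (mem_sdiff.1 hb).2 (mem_nbs.2 ⟨(mem_sdiff.1 hb).1, a, ha, hab⟩)
    obtain ⟨E', hE', hmin⟩ := exists_min_image
      (E.powerset.filter (fun E' => ∃ j ∈ J, ((R j).card : ℝ) ≤ 3 * (nbs G E' (R j)).card)) card
      ⟨E, by
        simp only [mem_filter, mem_powerset, subset_refl, true_and]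
        refine ⟨j₀, hj₀, ?_⟩
        have h1 := hna E hEU (R j₀ \ nbs G E (R j₀)) (sdiff_subset.trans (hRU j₀ hj₀))
          (hEdisj E subset_rfl j₀ hj₀ _ sdiff_subset) (hantin E j₀) (by nlinarith)
        have h2 := hcompl E j₀
        have h4 := hR j₀ hj₀
        nlinarith⟩
    simp only [mem_filter, mem_powerset] at hE' hmin
    obtain ⟨hE'E, j, hj, hjc⟩ := hE'
    have hE'ne : E'.Nonempty := by
      by_contra hcon
      rw [not_nonempty_iff_eq_empty] at hcon
      subst hcon
      have : nbs G ∅ (R j) = ∅ := by ext x; simp [mem_nbs]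
      rw [this] at hjc
      have := hR j hj
      simp only [card_empty, Nat.cast_zero, mul_zero] at hjc
      nlinarith
    obtain ⟨x, hx⟩ := hE'ne
    have hup : ∀ i ∈ J, 3 * ((nbs G E' (R i)).card : ℝ) ≤ (R i).card + 3 * θ := by
      intro i hi
      have h1 : ¬ ((R i).card : ℝ) ≤ 3 * (nbs G (E'.erase x) (R i)).card := fun h => by
        have := hmin (E'.erase x) ⟨(erase_subset _ _).trans hE'E, i, hi, h⟩
        rw [card_erase_of_mem hx] at this
        have := card_pos.2 ⟨x, hx⟩
        omega
      have h2 : nbs G E' (R i) = nb G x (R i) ∪ nbs G (E'.erase x) (R i) := by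
        rw [← nbs_insert, insert_erase hx]
      have h4 : ((nbs G E' (R i)).card : ℝ) ≤ (nb G x (R i)).card +
          (nbs G (E'.erase x) (R i)).card := by
        rw [h2]; exact_mod_cast card_union_le _ _
      have h5 : ((nb G x (R i)).card : ℝ) ≤ (nb G x U).card := by
        exact_mod_cast card_le_card (nb_mono G x (hRU i hi))
      have h6 := hdeg x (hEU (hE'E hx))
      linarith
    obtain ⟨p, hp, hp0, hpR, hpg⟩ := ih (nbs G E' (R j)) (J.erase j) (fun i => R i \ nbs G E' (R i))
      (by rw [card_erase_of_mem hj]; omega) ((nbs_subset _ _ _).trans (hRU j hj))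
      (fun u hu => by rw [hgR j hj u (nbs_subset _ _ _ hu)]; simp)
      (fun u hu u' hu' => by
        rw [hgR j hj u (nbs_subset _ _ _ hu), hgR j hj u' (nbs_subset _ _ _ hu')])
      (fun i hi => sdiff_subset.trans (hRU i (mem_of_mem_erase hi)))
      (fun i hi u hu => hgR i (mem_of_mem_erase hi) u (sdiff_subset hu))
      (by have := hR j hj; nlinarith)
      (fun i hi => by
        have h1 := hup i (mem_of_mem_erase hi)
        have h2 := hcompl E' i
        have h4 := hR i (mem_of_mem_erase hi)
        nlinarith)
    obtain ⟨hp0R, e, he, hep⟩ := mem_nbs.1 hp0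
    have hgp : ∀ i ≤ s, g (p i) ∈ J ∧ p i ∈ R (g (p i)) := by
      intro i hi
      rcases Nat.eq_zero_or_pos i with rfl | hi0
      · rw [hgR j hj _ hp0R]; exact ⟨hj, hp0R⟩
      · have := hpR i hi0 hi
        exact ⟨mem_of_mem_erase this.1, sdiff_subset this.2⟩
    have hgne : ∀ i ≤ s, g e ≠ g (p i) := fun i hi h => hgE e (hE'E he) (h ▸ (hgp i hi).1)
    refine ⟨fun i => if i = 0 then e else p (i - 1), ?_, by simpa using hE'E he, ?_, ?_⟩
    · intro a b hab hb
      have hb0 : b ≠ 0 := by omega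
      rcases Nat.eq_zero_or_pos a with rfl | ha
      · simp only [hb0, if_true, if_false]
        refine ⟨fun h => hgne (b - 1) (by omega) (by rw [← h]), ?_⟩
        rcases Nat.lt_or_ge 1 b with hb1 | hb1
        · have := hpR (b - 1) (by omega) (by omega)
          have h2 : ¬ G.Adj e (p (b - 1)) := hantin E' _ e he _ this.2
          simp only [h2, false_iff]; omega
        · have : b = 1 := by omega
          subst this
          simp [hep]
      · have ha0 : a ≠ 0 := by omega
        simp only [hb0, ha0, if_false]
        have := hp (a - 1) (b - 1) (by omega) (by omega)
        refine ⟨this.1, ?_⟩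
        rw [this.2]; omega
    · intro i hi his
      have : i ≠ 0 := by omega
      simp only [this, if_false]
      exact hgp (i - 1) (by omega)
    · intro a b hab hb
      have hb0 : b ≠ 0 := by omega
      rcases Nat.eq_zero_or_pos a with rfl | ha
      · simp only [hb0, if_true, if_false]
        exact hgne (b - 1) (by omega)
      · have ha0 : a ≠ 0 := by omega
        simp only [hb0, ha0, if_false]
        exact hpg (a - 1) (b - 1) (by omega) (by omega)

/-- The neighbours of `a` in `B` that have no other neighbour in `T`. -/
noncomputable def priv (G : SimpleGraph V) (T : Finset V) (a : V) (B : Finset V) : Finset V :=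
  B.filter (fun b => G.Adj a b ∧ ∀ a' ∈ T, G.Adj a' b → a' = a)

lemma mem_priv {G : SimpleGraph V} {T : Finset V} {a b : V} {B : Finset V} :
    b ∈ priv G T a B ↔ b ∈ B ∧ G.Adj a b ∧ ∀ a' ∈ T, G.Adj a' b → a' = a := by simp [priv]

lemma two_mul_card_nbs_le (G : SimpleGraph V) (M B : Finset V) :
    2 * (nbs G M B).card ≤ ∑ a ∈ M, ((nb G a B).card + (priv G M a B).card) := by
  have h1 : ∀ a ∈ M, (nb G a B).card + (priv G M a B).card =
      ∑ b ∈ nbs G M B, ((if G.Adj a b then 1 else 0) + if b ∈ priv G M a B then 1 else 0) := by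
    intro a ha
    rw [sum_add_distrib, ← card_filter, ← card_filter]
    congr 2
    · ext b; simp only [mem_nb, mem_filter, mem_nbs]; grind
    · ext b; simp only [mem_filter, mem_nbs, mem_priv]; grind
  rw [sum_congr rfl h1, sum_comm, mul_comm, ← smul_eq_mul]
  refine card_nsmul_le_sum _ _ _ ?_
  intro b hb
  obtain ⟨hbB, a, ha, hab⟩ := mem_nbs.1 hb
  by_cases h : ∀ a' ∈ M, G.Adj a' b → a' = a
  · have h2 : b ∈ priv G M a B := mem_priv.2 ⟨hbB, hab, h⟩
    have := single_le_sum (f := fun a => ((if G.Adj a b then 1 else 0) +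
      if b ∈ priv G M a B then 1 else 0 : ℕ)) (fun _ _ => Nat.zero_le _) ha
    simpa [h2, hab] using this
  · push Not at h
    obtain ⟨a', ha', hab', hne⟩ := h
    have hsub : ({a, a'} : Finset V) ⊆ M := by
      intro x; simp only [mem_insert, mem_singleton]; rintro (rfl | rfl) <;> assumption
    refine le_trans ?_ (sum_le_sum_of_subset hsub)
    rw [sum_pair hne.symm]
    simp only [hab, hab', if_true]
    omega

/-- Comb lemma: a bipartite graph in which `A` covers `B` and degrees from `A` are small
either has a large comb or `B` is small. -/
lemma exists_comb (G : SimpleGraph V) (A : Finset V) {n : ℝ} (hn : 0 < n) (B : Finset V) :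
    (∀ b ∈ B, ∃ a ∈ A, G.Adj a b) → ∀ Δ : ℝ, (∀ a ∈ A, ((nb G a B).card : ℝ) ≤ Δ) →
    (∃ T ⊆ A, T.Nonempty ∧ ∀ a ∈ T, n ≤ (priv G T a B).card * (T.card : ℝ) ^ 2) ∨
      (B.card : ℝ) ≤ 100 * √(n * Δ) := by
  induction B using Finset.strongInduction with
  | H B ih =>
  intro hcov Δ hΔ
  rcases B.eq_empty_or_nonempty with rfl | ⟨b₀, hb₀⟩
  · right; simp
  obtain ⟨a₁, ha₁, hab₁⟩ := hcov b₀ hb₀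
  obtain ⟨a₀, ha₀, hmax₀⟩ := exists_max_image A (fun a => (nb G a B).card) ⟨a₁, ha₁⟩
  obtain ⟨Δ₀, hΔ₀⟩ : ∃ Δ₀ : ℝ, Δ₀ = ((nb G a₀ B).card : ℝ) := ⟨_, rfl⟩
  have hΔ₀1 : 1 ≤ Δ₀ := by
    have h1 : 1 ≤ (nb G a₁ B).card := card_pos.2 ⟨b₀, mem_nb.2 ⟨hb₀, hab₁⟩⟩
    rw [hΔ₀]; exact_mod_cast h1.trans (hmax₀ a₁ ha₁)
  have hmax₀' : ∀ a ∈ A, ((nb G a B).card : ℝ) ≤ Δ₀ := fun a ha => by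
    rw [hΔ₀]; exact_mod_cast hmax₀ a ha
  obtain ⟨M, hM, hmaxM⟩ := exists_max_image
    (A.powerset.filter (fun M => 2 / 3 * Δ₀ * M.card ≤ ((nbs G M B).card : ℝ))) card
    ⟨∅, by simp⟩
  simp only [mem_filter, mem_powerset] at hM hmaxM
  obtain ⟨hMA, hMc⟩ := hM
  have hM1 : 1 ≤ M.card := by
    have := hmaxM {a₀} ⟨by simpa using ha₀, by
      have h1 : nbs G {a₀} B = nb G a₀ B := by ext x; simp [mem_nbs, mem_nb]
      rw [h1, ← hΔ₀]
      simp only [card_singleton, Nat.cast_one, mul_one]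
      linarith⟩
    simpa using this
  have hM1' : (1 : ℝ) ≤ M.card := by exact_mod_cast hM1
  set B' := B \ nbs G M B with hB'
  have hnbsub := nbs_subset G M B
  have hBc : (B'.card : ℝ) + (nbs G M B).card = B.card := by
    exact_mod_cast card_sdiff_add_card_eq_card hnbsub
  have hB'B : B' ⊂ B := by
    refine ⟨sdiff_subset, fun h => ?_⟩
    have h1 : (B.card : ℝ) ≤ B'.card := by exact_mod_cast card_le_card h
    nlinarith
  have hdeg' : ∀ a ∈ A, ((nb G a B').card : ℝ) ≤ 2 / 3 * Δ₀ := by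
    intro a ha
    by_cases haM : a ∈ M
    · have : nb G a B' = ∅ := by
        ext x
        simp only [mem_nb, hB', mem_sdiff, mem_nbs]
        grind
      rw [this]; simp; linarith
    · by_contra hcon
      push Not at hcon
      have h1 : nbs G (insert a M) B = nb G a B' ∪ nbs G M B := by
        ext x
        have h0 : x ∈ nbs G M B → x ∈ B := fun h => hnbsub h
        have h3 : x ∈ nbs G (insert a M) B ↔ x ∈ B ∧ (G.Adj a x ∨ x ∈ nbs G M B) := by
          simp only [mem_nbs, mem_insert, exists_eq_or_imp]
          tauto
        rw [h3, mem_union, mem_nb, hB', mem_sdiff]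
        tauto
      have h2 : Disjoint (nb G a B') (nbs G M B) :=
        disjoint_of_subset_left (nb_subset _ _ _) sdiff_disjoint
      have := hmaxM (insert a M) ⟨insert_subset ha hMA, by
        rw [h1, card_union_of_disjoint h2, card_insert_of_notMem haM]
        push_cast
        linarith⟩
      rw [card_insert_of_notMem haM] at this
      omega
  have hpos : 0 < Δ₀ := by linarith
  rcases ih B' hB'B (fun b hb => hcov b (sdiff_subset hb)) _ hdeg' with ⟨T, hT, hne, h⟩ | hsmall
  · left
    refine ⟨T, hT, hne, fun a ha => (h a ha).trans ?_⟩
    gcongr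
    exact filter_subset_filter _ sdiff_subset
  · set T := M.filter (fun a => Δ₀ / 6 ≤ (priv G M a B).card) with hT
    have hTM : T ⊆ M := filter_subset _ _
    have hsum : 2 * ((nbs G M B).card : ℝ) ≤ ∑ a ∈ M, (Δ₀ + (priv G M a B).card) := by
      have h1 : 2 * ((nbs G M B).card : ℝ) ≤ ∑ a ∈ M, (((nb G a B).card : ℝ) + (priv G M a B).card) := by
        exact_mod_cast two_mul_card_nbs_le G M B
      refine h1.trans (sum_le_sum fun a ha => ?_)
      linarith [hmax₀' a (hMA ha)]
    have hsum2 : ∑ a ∈ M, (Δ₀ + ((priv G M a B).card : ℝ)) ≤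
        ∑ a ∈ M, (Δ₀ + Δ₀ / 6 + if Δ₀ / 6 ≤ (priv G M a B).card then Δ₀ else 0) := by
      refine sum_le_sum fun a ha => ?_
      have h1 : ((priv G M a B).card : ℝ) ≤ (nb G a B).card := by
        have : priv G M a B ⊆ nb G a B := fun x hx => by
          rw [mem_priv] at hx; exact mem_nb.2 ⟨hx.1, hx.2.1⟩
        exact_mod_cast card_le_card this
      have h2 := hmax₀' a (hMA ha)
      split_ifs with h
      · linarith
      · push Not at h; linarith
    have hsum3 : ∑ a ∈ M, (Δ₀ + Δ₀ / 6 + if Δ₀ / 6 ≤ (priv G M a B).card then Δ₀ else 0) =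
        M.card * (Δ₀ + Δ₀ / 6) + T.card * Δ₀ := by
      rw [sum_add_distrib, sum_const, ← sum_filter, sum_const]
      simp [hT]
      ring
    have hTc : (M.card : ℝ) ≤ 6 * T.card := by
      have h1 : (M.card : ℝ) * Δ₀ ≤ 6 * T.card * Δ₀ := by nlinarith
      exact le_of_mul_le_mul_right h1 hpos
    by_cases hcomb : n ≤ Δ₀ / 6 * (T.card : ℝ) ^ 2
    · left
      refine ⟨T, hTM.trans hMA, ?_, fun a ha => hcomb.trans ?_⟩
      · rw [← card_pos]
        have : (0 : ℝ) < T.card := by linarith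
        exact_mod_cast this
      · gcongr
        have h1 := (mem_filter.1 ha).2
        have h2 : priv G M a B ⊆ priv G T a B := fun x hx => by
          rw [mem_priv] at hx ⊢
          exact ⟨hx.1, hx.2.1, fun a' ha' => hx.2.2 a' (hTM ha')⟩
        exact h1.trans (by exact_mod_cast card_le_card h2)
    · right
      push Not at hcomb
      have hnbs : ((nbs G M B).card : ℝ) ≤ M.card * Δ₀ := by
        have h1 : nbs G M B ⊆ M.biUnion (fun a => nb G a B) := by
          intro x hx
          obtain ⟨hx, a, ha, hax⟩ := mem_nbs.1 hx
          exact mem_biUnion.2 ⟨a, ha, mem_nb.2 ⟨hx, hax⟩⟩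
        have h2 := (card_le_card h1).trans card_biUnion_le
        have h3 : ((nbs G M B).card : ℝ) ≤ ∑ a ∈ M, ((nb G a B).card : ℝ) := by exact_mod_cast h2
        refine h3.trans ((sum_le_card_nsmul _ _ Δ₀ fun a ha => hmax₀' a (hMA ha)).trans ?_)
        simp
      have hle : Δ₀ ≤ Δ := hΔ₀ ▸ hΔ a₀ ha₀
      have hmono : √(n * Δ₀) ≤ √(n * Δ) := Real.sqrt_le_sqrt (by gcongr)
      have h1 : ((nbs G M B).card : ℝ) ≤ 15 * √(n * Δ₀) := by
        refine hnbs.trans ?_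
        have h2 : (M.card : ℝ) * Δ₀ ≤ 6 * T.card * Δ₀ := by gcongr
        refine h2.trans ?_
        refine (sq_le_sq₀ (by positivity) (by positivity)).1 ?_
        rw [mul_pow 15, Real.sq_sqrt (by positivity)]
        nlinarith
      have h2 : √(n * (2 / 3 * Δ₀)) ≤ 0.82 * √(n * Δ₀) := by
        refine (sq_le_sq₀ (by positivity) (by positivity)).1 ?_
        rw [mul_pow, Real.sq_sqrt (by positivity), Real.sq_sqrt (by positivity)]
        nlinarith [mul_pos hn hpos]
      nlinarith [Real.sqrt_nonneg (n * Δ₀)]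

/-- Grouping small fibres of `a` into blocks of comparable size. -/
lemma exists_grouping (a : V → V) (s : ℝ) (hs : 0 < s) (L : ℕ) : ∀ X : Finset V,
    (∀ x, ((X.filter (fun u => a u = x)).card : ℝ) ≤ s) → 2 * s * L ≤ X.card →
    ∃ g : V → ℕ, ∀ j < L, s ≤ (X.filter (fun u => g (a u) = j)).card := by
  induction L with
  | zero => exact fun X _ _ => ⟨fun _ => 0, fun j hj => by omega⟩
  | succ L ih =>
    intro X hfib hX
    push_cast at hX
    have hL : (0 : ℝ) ≤ L := by positivity
    obtain ⟨T, hT, hmin⟩ := exists_min_image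
      ((X.image a).powerset.filter (fun T => s ≤ ((X.filter (fun u => a u ∈ T)).card : ℝ))) card
      ⟨X.image a, by
        simp only [mem_filter, mem_powerset, subset_refl, true_and]
        rw [filter_true_of_mem fun u hu => mem_image_of_mem a hu]
        nlinarith⟩
    simp only [mem_filter, mem_powerset] at hT hmin
    obtain ⟨hTX, hTs⟩ := hT
    have hTu : ((X.filter (fun u => a u ∈ T)).card : ℝ) ≤ 2 * s := by
      rcases T.eq_empty_or_nonempty with rfl | ⟨x, hx⟩
      · simp; linarith
      · have h1 : ¬ s ≤ ((X.filter (fun u => a u ∈ T.erase x)).card : ℝ) := fun h => by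
          have := hmin (T.erase x) ⟨(erase_subset _ _).trans hTX, h⟩
          rw [card_erase_of_mem hx] at this
          have := card_pos.2 ⟨x, hx⟩
          omega
        have h2 : X.filter (fun u => a u ∈ T) ⊆
            X.filter (fun u => a u ∈ T.erase x) ∪ X.filter (fun u => a u = x) := by
          intro u; simp only [mem_filter, mem_union, mem_erase]; tauto
        have h3 : ((X.filter (fun u => a u ∈ T)).card : ℝ) ≤
            (X.filter (fun u => a u ∈ T.erase x)).card + (X.filter (fun u => a u = x)).card := by
          exact_mod_cast (card_le_card h2).trans (card_union_le _ _)
        linarith [hfib x]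
    have hsplit : ((X.filter (fun u => a u ∈ T)).card : ℝ) + (X.filter (fun u => a u ∉ T)).card =
        X.card := by exact_mod_cast card_filter_add_card_filter_not (s := X) (fun u => a u ∈ T)
    obtain ⟨g, hg⟩ := ih (X.filter (fun u => a u ∉ T))
      (fun x => le_trans (by
        exact_mod_cast card_le_card (filter_subset_filter _ (filter_subset _ _))) (hfib x))
      (by nlinarith)
    refine ⟨fun x => if x ∈ T then L else g x, fun j hj => ?_⟩
    rcases (Nat.lt_succ_iff.1 hj).lt_or_eq with hlt | rfl
    · refine (hg j hlt).trans ?_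
      have : (X.filter (fun u => a u ∉ T)).filter (fun u => g (a u) = j) ⊆
          X.filter (fun u => (if a u ∈ T then L else g (a u)) = j) := by
        intro u; simp only [mem_filter]; rintro ⟨⟨h1, h2⟩, h3⟩; simp [h1, h2, h3]
      exact_mod_cast card_le_card this
    · refine hTs.trans ?_
      have : X.filter (fun u => a u ∈ T) ⊆
          X.filter (fun u => (if a u ∈ T then j else g (a u)) = j) := by
        intro u; simp only [mem_filter]; rintro ⟨h1, h2⟩; simp [h1, h2]
      exact_mod_cast card_le_card this

end PathsAndCombs

section Sparse
open Classical Finset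

variable {V : Type*}

/-- `X` contains a family of `p` sets pairwise in relation `S` and a family of `q` sets pairwise
in relation `S'`, with `2 ^ D ≤ p * q`. -/
def CoFam (S S' : Finset V → Finset V → Prop) (P : Finset V → Prop) (X : Finset V) (D : ℕ) :
    Prop :=
  ∃ p q : ℕ, 2 ^ D ≤ p * q ∧ HasFam S P X p ∧ HasFam S' P X q

lemma CoFam.symm {S S' : Finset V → Finset V → Prop} {P : Finset V → Prop} {X : Finset V} {D : ℕ}
    (h : CoFam S S' P X D) : CoFam S' S P X D := by
  obtain ⟨p, q, hpq, hp, hq⟩ := h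
  exact ⟨q, p, by rwa [mul_comm], hq, hp⟩

lemma CoFam.merge {S S' : Finset V → Finset V → Prop} {P : Finset V → Prop} {X A B : Finset V}
    {D : ℕ} (hA : CoFam S S' P A D) (hB : CoFam S S' P B D) (hAX : A ⊆ X) (hBX : B ⊆ X)
    (hd : Disjoint A B)
    (hS : ∀ A' ⊆ A, ∀ B' ⊆ B, P A' → P B' → S A' B' ∧ S B' A') : CoFam S S' P X (D + 1) := by
  obtain ⟨p₁, q₁, h₁, hp₁, hq₁⟩ := hA
  obtain ⟨p₂, q₂, h₂, hp₂, hq₂⟩ := hB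
  have hp := hp₁.merge hp₂ hAX hBX hd hS
  rcases le_total q₁ q₂ with h | h
  · exact ⟨p₁ + p₂, q₂, by rw [pow_succ]; nlinarith [Nat.mul_le_mul_left p₁ h], hp,
      hq₂.mono hBX (fun _ _ h => h) (fun _ _ _ _ _ _ h => h)⟩
  · exact ⟨p₁ + p₂, q₁, by rw [pow_succ]; nlinarith [Nat.mul_le_mul_left p₂ h], hp,
      hq₁.mono hAX (fun _ _ h => h) (fun _ _ _ _ _ _ h => h)⟩

lemma HasFam.anti {S : Finset V → Finset V → Prop} {P : Finset V → Prop} {X : Finset V}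
    {p q : ℕ} (h : HasFam S P X p) (hq : q ≤ p) : HasFam S P X q := by
  obtain ⟨F, hF, h1, h2⟩ := h
  obtain ⟨F', hF', hc⟩ := exists_subset_card_eq (hF ▸ hq)
  exact ⟨F', hc, fun A hA => h1 A (hF' hA), fun A hA B hB => h2 A (hF' hA) B (hF' hB)⟩

lemma CoFam.exists_large {S S' : Finset V → Finset V → Prop} {P : Finset V → Prop} {X : Finset V}
    {d : ℕ} (h : CoFam S S' P X (2 * d)) : HasFam S P X (2 ^ d) ∨ HasFam S' P X (2 ^ d) := by
  obtain ⟨p, q, hpq, hp, hq⟩ := h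
  by_cases h1 : 2 ^ d ≤ p
  · exact .inl (hp.anti h1)
  by_cases h2 : 2 ^ d ≤ q
  · exact .inr (hq.anti h2)
  push Not at h1 h2
  rw [two_mul, pow_add] at hpq
  exact absurd hpq (not_le.2 (Nat.mul_lt_mul'' h1 h2))

/-- Either a copy of `H` meets the sets `W i` in a prescribed way, or two of the sets contain
large subsets with a sparse or very dense pair. -/
lemma exists_sparse_pair {k : ℕ} (H : SimpleGraph (Fin k)) {G : SimpleGraph V} {ε N : ℝ}
    (hε : 0 < ε) (hε1 : ε ≤ 1) (hN : 0 < N) (W : ℕ → Finset V)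
    (hd : ∀ i j, i < j → j < k → Disjoint (W i) (W j)) (hW : ∀ i < k, N ≤ (W i).card)
    (hfree : ¬ Nonempty (H ↪g G)) :
    ∃ i j, i < j ∧ j < k ∧ ∃ A ⊆ W i, ∃ B ⊆ W j, ε ^ k / k * N ≤ A.card ∧ ε ^ k / k * N ≤ B.card ∧
      ((∀ a ∈ A, ((nb G a B).card : ℝ) ≤ ε * B.card) ∨
        (∀ a ∈ A, ((nb Gᶜ a B).card : ℝ) ≤ ε * B.card)) := by
  by_contra hcon
  push Not at hcon
  set Q : ℕ → ℕ → Prop := fun i j => ∃ hi : i < k, ∃ hj : j < k, H.Adj ⟨i, hi⟩ ⟨j, hj⟩ with hQ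
  set R : (ℕ → V) → ℕ → ℕ → Finset V := fun x i j =>
    (W j).filter (fun w => ∀ j' < i, (G.Adj (x j') w ↔ Q j' j)) with hR
  have key : ∀ i ≤ k, ∃ x : ℕ → V, (∀ j < i, x j ∈ W j) ∧
      (∀ j' j, j' < j → j < i → (G.Adj (x j') (x j) ↔ Q j' j)) ∧
      ∀ j, i ≤ j → j < k → ε ^ i * N ≤ (R x i j).card := by
    intro i
    induction i with
    | zero =>
      intro _
      rcases isEmpty_or_nonempty V with hV | ⟨⟨v⟩⟩
      · rcases Nat.eq_zero_or_pos k with rfl | hk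
        · exact absurd ⟨(⟨⟨fun a => a.elim0, fun a => a.elim0⟩, fun {a} => a.elim0⟩ : H ↪g G)⟩ hfree
        · have := hW 0 hk
          rw [Finset.eq_empty_of_isEmpty (W 0)] at this
          simp at this
          linarith
      · exact ⟨fun _ => v, by simp, by simp, fun j _ hj => by simpa [hR] using hW j hj⟩
    | succ i ih =>
      intro hi
      obtain ⟨x, hx, hadj, hcard⟩ := ih (by omega)
      have hk0 : (0 : ℝ) < k := by exact_mod_cast (by omega : 0 < k)
      have hpow : ε ^ k * N ≤ ε ^ i * N :=
        mul_le_mul_of_nonneg_right (pow_le_pow_of_le_one hε.le hε1 (by omega)) hN.le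
      have hposk : 0 < ε ^ k * N := by positivity
      have hdk : ε ^ k / k * N ≤ ε ^ k * N := by
        gcongr
        exact div_le_self (by positivity) (by exact_mod_cast (by omega : 1 ≤ k))
      set A := R x i i with hA
      set good : V → ℕ → Finset V := fun a j =>
        (R x i j).filter (fun w => G.Adj a w ↔ Q i j) with hgood
      set bad : ℕ → Finset V := fun j =>
        A.filter (fun a => ((good a j).card : ℝ) < ε * (R x i j).card) with hbad
      have hbadc : ∀ j, i < j → j < k → ((bad j).card : ℝ) < ε ^ k / k * N := by
        intro j hij hjk
        by_contra hc
        push Not at hc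
        have hsubA : bad j ⊆ W i := (filter_subset _ _).trans (filter_subset _ _)
        obtain ⟨⟨a, ha, hal⟩, ⟨a', ha', hal'⟩⟩ := hcon i j hij hjk (bad j) hsubA (R x i j)
          (filter_subset _ _) hc (hdk.trans (hpow.trans (hcard j hij.le hjk)))
        by_cases hq : Q i j
        · have h1 := (mem_filter.1 ha).2
          have h2 : good a j = nb G a (R x i j) := by
            ext w; simp [hgood, mem_nb, hq]
          rw [h2] at h1
          linarith
        · have h1 := (mem_filter.1 ha').2
          have h2 : good a' j = nb Gᶜ a' (R x i j) := by
            ext w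
            simp only [hgood, mem_nb, mem_filter, compl_adj, hq, iff_false]
            refine and_congr_right fun hw => ⟨fun h => ⟨?_, h⟩, fun h => h.2⟩
            rintro rfl
            exact disjoint_left.1 (hd i j hij hjk) (hsubA ha') (mem_filter.1 hw).1
          rw [h2] at h1
          linarith
      have hlt : (((Ioo i k).biUnion bad).card : ℝ) < A.card := by
        have h1 : (((Ioo i k).biUnion bad).card : ℝ) ≤ ∑ j ∈ Ioo i k, ((bad j).card : ℝ) := by
          exact_mod_cast card_biUnion_le
        have h2 : ∑ j ∈ Ioo i k, ((bad j).card : ℝ) ≤ (Ioo i k).card • (ε ^ k / k * N) :=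
          sum_le_card_nsmul _ _ _ fun j hj => (hbadc j (mem_Ioo.1 hj).1 (mem_Ioo.1 hj).2).le
        rw [Nat.card_Ioo, nsmul_eq_mul] at h2
        have h3 : ((k - i - 1 : ℕ) : ℝ) ≤ k - 1 := by
          have : k - i - 1 + 1 ≤ k := by omega
          have : ((k - i - 1 : ℕ) : ℝ) + 1 ≤ k := by exact_mod_cast this
          linarith
        have h4 : ((k - i - 1 : ℕ) : ℝ) * (ε ^ k / k * N) ≤ (k - 1) * (ε ^ k / k * N) := by gcongr
        have h5 : ((k : ℝ) - 1) * (ε ^ k / k * N) = ε ^ k * N - ε ^ k / k * N := by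
          field_simp
        have h6 : 0 < ε ^ k / k * N := by positivity
        have := hcard i le_rfl (by omega)
        linarith
      obtain ⟨a, haA, hab⟩ := exists_mem_notMem_of_card_lt_card
        (by exact_mod_cast hlt : ((Ioo i k).biUnion bad).card < A.card)
      have haW := mem_filter.1 haA
      refine ⟨Function.update x i a, ?_, ?_, ?_⟩
      · intro j hj
        rcases Nat.lt_succ_iff_lt_or_eq.1 hj with h | rfl
        · rw [Function.update_of_ne h.ne]; exact hx j h
        · simpa using haW.1
      · intro j' j hjj hj
        rw [Function.update_of_ne (by omega : j' ≠ i)]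
        rcases Nat.lt_succ_iff_lt_or_eq.1 hj with h | rfl
        · rw [Function.update_of_ne h.ne]; exact hadj j' j hjj h
        · rw [Function.update_self]; exact haW.2 j' hjj
      · intro j hij hjk
        have h1 : R (Function.update x i a) (i + 1) j = good a j := by
          ext w
          simp only [hR, hgood, mem_filter, and_assoc]
          refine and_congr_right fun _ => ⟨fun h => ⟨fun j' hj' => ?_, ?_⟩, fun h j' hj' => ?_⟩
          · simpa [Function.update_of_ne hj'.ne] using h j' (by omega)
          · simpa using h i (by omega)
          · rcases Nat.lt_succ_iff_lt_or_eq.1 hj' with h' | rfl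
            · rw [Function.update_of_ne h'.ne]; exact h.1 j' h'
            · simpa using h.2
        rw [h1]
        have h2 : a ∉ bad j := fun h => hab (mem_biUnion.2 ⟨j, mem_Ioo.2 ⟨by omega, hjk⟩, h⟩)
        have h3 : ¬ ((good a j).card : ℝ) < ε * (R x i j).card := fun h =>
          h2 (mem_filter.2 ⟨haA, h⟩)
        push Not at h3
        have h4 := hcard j (by omega) hjk
        calc ε ^ (i + 1) * N = ε * (ε ^ i * N) := by ring
          _ ≤ ε * (R x i j).card := by gcongr
          _ ≤ _ := h3
  obtain ⟨x, hx, hadj, -⟩ := key k le_rfl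
  have hinj : Function.Injective (fun i : Fin k => x i) := by
    intro i j hij
    by_contra hne
    replace hij : x i = x j := hij
    rcases lt_or_gt_of_ne hne with h | h
    · exact disjoint_left.1 (hd i j h j.2) (hx i i.2) (hij ▸ hx j j.2)
    · exact disjoint_left.1 (hd j i h i.2) (hx j j.2) (hij ▸ hx i i.2)
  have hQi : ∀ i j : Fin k, Q i j ↔ H.Adj i j := fun i j => by simp [hQ]
  have hemb : ∀ i j : Fin k, G.Adj (x i) (x j) ↔ H.Adj i j := by
    intro i j
    rcases lt_trichotomy i j with h | rfl | h
    · rw [hadj i j h j.2, hQi]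
    · simp
    · rw [G.adj_comm, H.adj_comm, hadj j i h i.2, hQi]
  exact hfree ⟨⟨⟨_, hinj⟩, fun {i j} => hemb i j⟩⟩

/-- The number of pairs in `A ×ˢ B` adjacent in `G`. -/
noncomputable def ed (G : SimpleGraph V) (A B : Finset V) : ℕ := ∑ a ∈ A, (nb G a B).card

lemma ed_comm (G : SimpleGraph V) (A B : Finset V) : ed G A B = ed G B A := by
  have h := sum_card_bipartiteAbove_eq_sum_card_bipartiteBelow (s := A) (t := B) G.Adj
  simp only [bipartiteAbove, bipartiteBelow] at h
  rw [ed, ed]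
  simp only [nb]
  rw [h]
  refine sum_congr rfl fun b _ => ?_
  congr 1
  ext a
  simp [G.adj_comm]

/-- Sparse pairs can be trimmed to a prescribed size. -/
lemma exists_trim {G : SimpleGraph V} {A B : Finset V} {ε : ℝ} {M : ℕ} (hM : 1 ≤ M)
    (hA : M ≤ A.card) (hB : 2 * M ≤ B.card)
    (h : ∀ a ∈ A, ((nb G a B).card : ℝ) ≤ ε * B.card) :
    ∃ A' ⊆ A, ∃ B' ⊆ B, A'.card = M ∧ B'.card = M ∧
      ∀ b ∈ B', ((nb G b A').card : ℝ) ≤ 2 * ε * M := by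
  obtain ⟨A', hA', hAc⟩ := exists_subset_card_eq hA
  have hM' : (1 : ℝ) ≤ M := by exact_mod_cast hM
  have hε : 0 ≤ ε := by
    obtain ⟨a, ha⟩ : A.Nonempty := card_pos.1 (by omega)
    have h1 := (Nat.cast_nonneg _).trans (h a ha)
    have h2 : (0 : ℝ) < B.card := by exact_mod_cast (by omega : 0 < B.card)
    exact nonneg_of_mul_nonneg_left h1 h2
  set C := B.filter (fun b => ¬ ((nb G b A').card : ℝ) ≤ 2 * ε * M) with hC
  have hCs : 2 * C.card ≤ B.card := by
    by_contra hcon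
    push Not at hcon
    have hcon' : (B.card : ℝ) < 2 * C.card := by exact_mod_cast hcon
    have h1 : (ed G A' B : ℝ) ≤ M * (ε * B.card) := by
      rw [ed, ← hAc, ← nsmul_eq_mul]
      push_cast
      exact sum_le_card_nsmul _ _ _ fun a ha => h a (hA' ha)
    have h2 : ∑ b ∈ C, (2 * ε * M : ℝ) < ∑ b ∈ C, ((nb G b A').card : ℝ) := by
      refine sum_lt_sum_of_nonempty (card_pos.1 (by omega)) fun b hb => ?_
      have := (mem_filter.1 hb).2
      push Not at this
      exact this
    have h3 : ∑ b ∈ C, ((nb G b A').card : ℝ) ≤ ed G B A' := by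
      rw [ed]
      push_cast
      exact sum_le_sum_of_subset_of_nonneg (filter_subset _ _) fun _ _ _ => by positivity
    rw [sum_const, nsmul_eq_mul] at h2
    rw [ed_comm] at h3
    have h4 : (B.card : ℝ) * (ε * M) ≤ 2 * C.card * (ε * M) := by gcongr
    linarith
  have hle : M ≤ (B \ C).card := by
    have := le_card_sdiff C B
    omega
  obtain ⟨B', hB', hBc⟩ := exists_subset_card_eq hle
  refine ⟨A', hA', B', hB'.trans sdiff_subset, hAc, hBc, fun b hb => ?_⟩
  have := mem_sdiff.1 (hB' hb)
  by_contra hcon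
  exact this.2 (mem_filter.2 ⟨this.1, hcon⟩)

lemma ed_le_of_trim {G : SimpleGraph V} {A' B' A B : Finset V} {s : ℝ} {m : ℕ} (hA : A ⊆ A')
    (hB : B ⊆ B') (hBc : B.card = m)
    (h : ∀ b ∈ B', ((nb G b A').card : ℝ) ≤ s) : (ed G A B : ℝ) ≤ m * s := by
  rw [ed_comm, ed, ← hBc, ← nsmul_eq_mul]
  push_cast
  refine sum_le_card_nsmul _ _ _ fun b hb => (h b (hB hb)).trans' ?_
  exact_mod_cast card_le_card (nb_mono G b hA)

end Sparse

section Roedl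
open Classical Finset

universe u

lemma exists_coFam_sparse {k : ℕ} (hk : 1 ≤ k) (H : SimpleGraph (Fin k)) {ε : ℝ} (hε : 0 < ε)
    (hε1 : ε ≤ 1) (D : ℕ) :
    ∃ c : ℝ, 0 < c ∧ c ≤ 1 ∧ ∀ (V : Type u) (G : SimpleGraph V), ¬ Nonempty (H ↪g G) →
      ∀ (m : ℕ) (X : Finset V), 1 ≤ m → m ≤ c * X.card →
      CoFam (fun A B => (ed G A B : ℝ) ≤ ε * m ^ 2) (fun A B => (ed Gᶜ A B : ℝ) ≤ ε * m ^ 2)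
        (fun A => A.card = m) X D := by
  induction D with
  | zero =>
    refine ⟨1, one_pos, le_rfl, fun V G _ m X hm hX => ?_⟩
    rw [one_mul] at hX
    obtain ⟨A, hA, hAc⟩ := exists_subset_card_eq (by exact_mod_cast hX : m ≤ X.card)
    have hne : A.Nonempty := card_pos.1 (by omega)
    exact ⟨1, 1, by simp, HasFam.single hA hne hAc, HasFam.single hA hne hAc⟩
  | succ D ih =>
    obtain ⟨c, hc, hc1, ih⟩ := ih
    have hk' : (1 : ℝ) ≤ k := by exact_mod_cast hk
    set ε' := ε * c / 4 with hε'
    have hε'0 : 0 < ε' := by positivity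
    have hε'1 : ε' ≤ 1 := by
      have : ε * c ≤ 1 := mul_le_one₀ hε1 hc.le hc1
      linarith
    set c₀ := ε' ^ k / k with hc₀
    have hc₀0 : 0 < c₀ := by positivity
    have hc₀1 : c₀ ≤ 1 := by
      rw [hc₀, div_le_one (by linarith)]
      exact (pow_le_one₀ hε'0.le hε'1).trans hk'
    have hcc : c * c₀ ≤ 1 := mul_le_one₀ hc1 hc₀0.le hc₀1
    refine ⟨c * c₀ / (8 * k), by positivity, ?_, fun V G hfree m X hm hX => ?_⟩
    · rw [div_le_one (by positivity)]; linarith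
    have hm' : (1 : ℝ) ≤ m := by exact_mod_cast hm
    have hX' : 8 * k * m ≤ c * c₀ * X.card := by
      rw [div_mul_eq_mul_div, le_div_iff₀ (by positivity)] at hX
      linarith
    have hX8 : 8 * k * (m : ℝ) ≤ X.card := hX'.trans (mul_le_of_le_one_left (by positivity) hcc)
    have hXk : 8 * (k : ℝ) ≤ X.card := hX8.trans' (le_mul_of_one_le_right (by positivity) hm')
    set N := (X.card : ℝ) / (2 * k) with hN
    have hN1 : 1 ≤ N := by rw [hN, le_div_iff₀ (by positivity)]; linarith
    obtain ⟨g, hg⟩ := exists_grouping (V := V) id N (by linarith) k X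
      (fun x => by
        refine le_trans ?_ hN1
        have : (X.filter (fun u => id u = x)).card ≤ 1 := card_le_one.2 fun a ha b hb => by
          simp at ha hb; rw [ha.2, hb.2]
        exact_mod_cast this)
      (by rw [hN]; field_simp; rfl)
    set M := ⌈(m : ℝ) / c⌉₊ with hM
    have hMge : (m : ℝ) / c ≤ M := Nat.le_ceil _
    have hmc : 1 ≤ (m : ℝ) / c := by rw [le_div_iff₀ hc]; linarith
    have hMle : (M : ℝ) ≤ 2 * (m / c) := by
      have := Nat.ceil_lt_add_one (by positivity : 0 ≤ (m : ℝ) / c)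
      linarith
    have hM1 : 1 ≤ M := by
      have : (1 : ℝ) ≤ M := hmc.trans hMge
      exact_mod_cast this
    have hNM : 2 * (M : ℝ) ≤ c₀ * N := by
      have h1 : 4 * ((m : ℝ) / c) ≤ c₀ * N := by
        have h2 : c₀ * N = c * c₀ * X.card / (2 * k * c) := by rw [hN]; field_simp
        rw [h2, le_div_iff₀ (by positivity)]
        have h3 : 4 * ((m : ℝ) / c) * (2 * k * c) = 8 * k * m := by field_simp; ring
        linarith
      linarith
    have hmM : (m : ℝ) ≤ c * M := by rw [div_le_iff₀ hc] at hMge; linarith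
    obtain ⟨i, j, hij, hjk, A, hA, B, hB, hAc, hBc, h⟩ := exists_sparse_pair H hε'0 hε'1
      (by linarith : 0 < N) (fun j => X.filter (fun u => g (id u) = j))
      (fun i j hij _ => disjoint_left.2 fun x hx hx' => by
        have h1 := (mem_filter.1 hx).2
        have h2 := (mem_filter.1 hx').2
        omega)
      hg hfree
    have hAB : Disjoint A B := disjoint_left.2 fun x hx hx' => by
        have h1 := (mem_filter.1 (hA hx)).2
        have h2 := (mem_filter.1 (hB hx')).2
        omega
    have hMA : M ≤ A.card := by
      have : (M : ℝ) ≤ A.card := by linarith [(by positivity : (0 : ℝ) ≤ M)]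
      exact_mod_cast this
    have hMB : 2 * M ≤ B.card := by
      have : 2 * (M : ℝ) ≤ B.card := by linarith
      exact_mod_cast this
    have hbound : (m : ℝ) * (2 * ε' * M) ≤ ε * m ^ 2 := by
      have h1 : 2 * ε' * (M : ℝ) ≤ 2 * ε' * (2 * (m / c)) := by gcongr
      have h2 : 2 * ε' * (2 * ((m : ℝ) / c)) = ε * m := by rw [hε']; field_simp; ring
      calc (m : ℝ) * (2 * ε' * M) ≤ m * (ε * m) :=
            mul_le_mul_of_nonneg_left (h1.trans_eq h2) (by positivity)
        _ = _ := by ring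
    have fin : ∀ G' : SimpleGraph V, (∀ a ∈ A, ((nb G' a B).card : ℝ) ≤ ε' * B.card) →
        ∃ A' ⊆ A, ∃ B' ⊆ B, m ≤ c * A'.card ∧ m ≤ c * B'.card ∧
        ∀ A'' ⊆ A', ∀ B'' ⊆ B', A''.card = m → B''.card = m →
          (ed G' A'' B'' : ℝ) ≤ ε * m ^ 2 ∧ (ed G' B'' A'' : ℝ) ≤ ε * m ^ 2 := by
      intro G' hG'
      obtain ⟨A', hA', B', hB', hAc', hBc', hs⟩ := exists_trim hM1 hMA hMB hG'
      refine ⟨A', hA', B', hB', by rwa [hAc'], by rwa [hBc'], fun A'' hA'' B'' hB'' _ hm'' => ?_⟩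
      have := (ed_le_of_trim hA'' hB'' hm'' hs).trans hbound
      exact ⟨this, by rwa [ed_comm]⟩
    have hAX := hA.trans (filter_subset _ _)
    have hBX := hB.trans (filter_subset _ _)
    rcases h with h | h
    · obtain ⟨A', hA', B', hB', h1, h2, h3⟩ := fin G h
      exact (ih V G hfree m A' hm h1).merge (ih V G hfree m B' hm h2) (hA'.trans hAX)
        (hB'.trans hBX) (disjoint_of_subset_left hA' (disjoint_of_subset_right hB' hAB)) h3
    · obtain ⟨A', hA', B', hB', h1, h2, h3⟩ := fin Gᶜ h
      exact ((ih V G hfree m A' hm h1).symm.merge (ih V G hfree m B' hm h2).symm (hA'.trans hAX)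
        (hB'.trans hBX) (disjoint_of_subset_left hA' (disjoint_of_subset_right hB' hAB)) h3).symm

/-- The union of a pairwise sparse family contains a large set of small maximum degree. -/
lemma HasFam.exists_sparse {V : Type*} {G : SimpleGraph V} {X : Finset V} {ε : ℝ} {m P : ℕ}
    (hm : 1 ≤ m) (hP : 1 ≤ P) (hPε : 1 ≤ ε * P)
    (h : HasFam (fun A B => (ed G A B : ℝ) ≤ ε * m ^ 2) (fun A => A.card = m) X P) :
    ∃ Y ⊆ X, Y.Nonempty ∧ (m : ℝ) / 2 ≤ Y.card ∧
      ∀ v ∈ Y, ((nb G v Y).card : ℝ) ≤ 8 * ε * Y.card := by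
  obtain ⟨F, hF, h1, h2⟩ := h
  have hP' : (1 : ℝ) ≤ P := by exact_mod_cast hP
  have hm' : (1 : ℝ) ≤ m := by exact_mod_cast hm
  have hε : 0 < ε := by
    by_contra hc
    push Not at hc
    nlinarith
  set Y₀ := F.biUnion id with hY₀
  have hdis : (F : Set (Finset V)).PairwiseDisjoint id := fun A hA B hB hAB => (h2 A hA B hB hAB).1
  have hcard : (Y₀.card : ℝ) = P * m := by
    have e1 : ∑ A ∈ F, (id A).card = ∑ A ∈ F, m := sum_congr rfl fun A hA => (h1 A hA).2.2
    rw [hY₀, card_biUnion hdis, e1, sum_const, hF]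
    simp
  have hed : ∀ A, ((ed G A (F.biUnion id) : ℕ) : ℝ) ≤ ∑ B ∈ F, (ed G A B : ℝ) := by
    intro A
    have : ∑ B ∈ F, ed G A B = ∑ a ∈ A, ∑ B ∈ F, (nb G a B).card := by
      simp only [ed]; rw [sum_comm]
    rw [← Nat.cast_sum, this, ed]
    push_cast
    refine sum_le_sum fun a _ => ?_
    have h3 : nb G a (F.biUnion id) ⊆ F.biUnion (fun B => nb G a B) := by
      intro x hx
      obtain ⟨hx, hax⟩ := mem_nb.1 hx
      obtain ⟨B, hB, hxB⟩ := mem_biUnion.1 hx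
      exact mem_biUnion.2 ⟨B, hB, mem_nb.2 ⟨hxB, hax⟩⟩
    exact_mod_cast (card_le_card h3).trans card_biUnion_le
  have htot : (ed G Y₀ Y₀ : ℝ) ≤ 2 * ε * (P * m) ^ 2 := by
    have e1 : (ed G Y₀ Y₀ : ℝ) = ∑ A ∈ F, (ed G A Y₀ : ℝ) := by
      rw [ed, hY₀, sum_biUnion hdis]
      simp only [ed, id, Nat.cast_sum]
    have e2 : ∀ A ∈ F, (ed G A Y₀ : ℝ) ≤ m ^ 2 + P * (ε * m ^ 2) := by
      intro A hA
      refine (hed A).trans ?_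
      rw [← add_sum_erase F _ hA]
      refine add_le_add ?_ ?_
      · rw [ed]
        push_cast
        refine (sum_le_card_nsmul _ _ (m : ℝ) fun a _ => ?_).trans ?_
        · rw [← (h1 A hA).2.2]; exact_mod_cast card_le_card (nb_subset _ _ _)
        · rw [(h1 A hA).2.2]; simp [sq]
      · refine (sum_le_card_nsmul _ _ (ε * m ^ 2) fun B hB => ?_).trans ?_
        · exact (h2 A hA B (mem_of_mem_erase hB) (ne_of_mem_erase hB).symm).2
        · rw [nsmul_eq_mul, card_erase_of_mem hA, hF]
          gcongr
          omega
    rw [e1]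
    refine (sum_le_card_nsmul _ _ _ e2).trans ?_
    rw [hF, nsmul_eq_mul]
    have e3 : (P : ℝ) * m ^ 2 ≤ P * m ^ 2 * (ε * P) := le_mul_of_one_le_right (by positivity) hPε
    nlinarith
  set C := Y₀.filter (fun v => ¬ ((nb G v Y₀).card : ℝ) ≤ 4 * ε * (P * m)) with hC
  have hCs : 2 * (C.card : ℝ) ≤ P * m := by
    have e1 : (C.card : ℝ) * (4 * ε * (P * m)) ≤ ed G Y₀ Y₀ := by
      rw [← nsmul_eq_mul, ed]
      push_cast
      refine (card_nsmul_le_sum C _ _ fun v hv => ?_).trans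
        (sum_le_sum_of_subset_of_nonneg (filter_subset _ _) fun _ _ _ => by positivity)
      have := (mem_filter.1 hv).2
      push Not at this
      exact this.le
    have e2 : 2 * (C.card : ℝ) * (2 * ε * (P * m)) ≤ P * m * (2 * ε * (P * m)) := by nlinarith
    exact le_of_mul_le_mul_right e2 (by positivity)
  have hYc : (P * m : ℝ) / 2 ≤ (Y₀ \ C).card := by
    rw [card_sdiff_of_subset (filter_subset _ _), Nat.cast_sub (card_le_card (filter_subset _ _)),
      hcard]
    linarith
  have hPm : (m : ℝ) ≤ P * m := le_mul_of_one_le_left (by positivity) hP'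
  refine ⟨Y₀ \ C, ?_, ?_, by linarith, fun v hv => ?_⟩
  · exact sdiff_subset.trans (biUnion_subset.2 fun A hA => (h1 A hA).1)
  · rw [← card_pos]
    have : (0 : ℝ) < (Y₀ \ C).card := by linarith
    exact_mod_cast this
  · have e1 : ((nb G v (Y₀ \ C)).card : ℝ) ≤ (nb G v Y₀).card := by
      exact_mod_cast card_le_card (nb_mono G v sdiff_subset)
    have e2 : ((nb G v Y₀).card : ℝ) ≤ 4 * ε * (P * m) := by
      obtain ⟨hv1, hv2⟩ := mem_sdiff.1 hv
      by_contra hc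
      exact hv2 (mem_filter.2 ⟨hv1, hc⟩)
    have e3 : 8 * ε * (P * m / 2) ≤ 8 * ε * (Y₀ \ C).card := by gcongr
    linarith

/-- Rödl's theorem: graphs without an induced copy of `H` have linear-sized subsets of small
maximum degree, in the graph or in its complement. -/
theorem exists_sparse_or_dense {k : ℕ} (hk : 1 ≤ k) (H : SimpleGraph (Fin k)) {ε : ℝ}
    (hε : 0 < ε) :
    ∃ δ : ℝ, 0 < δ ∧ δ ≤ 1 ∧ ∀ (V : Type u) (G : SimpleGraph V), ¬ Nonempty (H ↪g G) →
      ∀ X : Finset V, X.Nonempty → ∃ Y ⊆ X, Y.Nonempty ∧ δ * X.card ≤ Y.card ∧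
        ((∀ v ∈ Y, ((nb G v Y).card : ℝ) ≤ ε * Y.card) ∨
          (∀ v ∈ Y, ((nb Gᶜ v Y).card : ℝ) ≤ ε * Y.card)) := by
  set ε' := min (ε / 8) 1 with hε'
  have hε'0 : 0 < ε' := by positivity
  have hε'8 : 8 * ε' ≤ ε := by have := min_le_left (ε / 8) 1; linarith
  obtain ⟨d, hd⟩ := exists_nat_ge (1 / ε')
  have hd2 : 1 ≤ ε' * ((2 ^ d : ℕ) : ℝ) := by
    have h1 : (d : ℝ) ≤ ((2 ^ d : ℕ) : ℝ) := by exact_mod_cast (Nat.lt_two_pow_self).le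
    rw [div_le_iff₀ hε'0] at hd
    nlinarith
  obtain ⟨c, hc, hc1, h⟩ := exists_coFam_sparse.{u} hk H hε'0 (min_le_right _ _) (2 * d)
  refine ⟨c / 4, by positivity, by linarith, fun V G hfree X hX => ?_⟩
  by_cases hcX : c * X.card < 1
  · obtain ⟨x, hx⟩ := hX
    refine ⟨{x}, by simpa using hx, by simp, by simp; linarith, .inl fun v hv => ?_⟩
    rw [mem_singleton] at hv
    have : nb G v {x} = ∅ := by
      ext y; simp only [mem_nb, mem_singleton, hv]; simp
      rintro rfl; simp
    rw [this]; simp; positivity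
  push Not at hcX
  set m := ⌊c * X.card⌋₊ with hm
  have hm1 : 1 ≤ m := by rw [hm, Nat.one_le_floor_iff]; exact hcX
  have hmle : (m : ℝ) ≤ c * X.card := Nat.floor_le (by positivity)
  have hmge : c * X.card / 2 ≤ m := by
    have h1 := Nat.lt_floor_add_one (c * (X.card : ℝ))
    have h2 : (1 : ℝ) ≤ m := by exact_mod_cast hm1
    linarith
  have fin : ∀ G' : SimpleGraph V, HasFam (fun A B => (ed G' A B : ℝ) ≤ ε' * m ^ 2)
      (fun A => A.card = m) X (2 ^ d) → ∃ Y ⊆ X, Y.Nonempty ∧ c / 4 * X.card ≤ Y.card ∧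
        (∀ v ∈ Y, ((nb G' v Y).card : ℝ) ≤ ε * Y.card) := by
    intro G' hF
    obtain ⟨Y, hY, hne, hYc, hYd⟩ := hF.exists_sparse hm1 Nat.one_le_two_pow hd2
    refine ⟨Y, hY, hne, by linarith, fun v hv => (hYd v hv).trans ?_⟩
    gcongr
  rcases (h V G hfree m X hm1 hmle).exists_large with hF | hF
  · obtain ⟨Y, hY, hne, hYc, hYd⟩ := fin G hF
    exact ⟨Y, hY, hne, hYc, .inl hYd⟩
  · obtain ⟨Y, hY, hne, hYc, hYd⟩ := fin Gᶜ hF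
    exact ⟨Y, hY, hne, hYc, .inr hYd⟩

end Roedl

section Combs
open Classical Finset

variable {V : Type*}

/-- A comb: every `u ∈ U` is attached to a neighbour `a u` of the apex `v`, and there are no
further edges between different teeth except inside `U`. -/
def Comb (G : SimpleGraph V) (v : V) (a : V → V) (U : Finset V) : Prop :=
  (∀ u ∈ U, G.Adj (a u) u ∧ G.Adj v (a u) ∧ ¬ G.Adj v u ∧ v ≠ u) ∧
    ∀ u ∈ U, ∀ u' ∈ U, a u ≠ a u' → ¬ G.Adj (a u) u' ∧ ¬ G.Adj (a u) (a u')

lemma Comb.mono {G : SimpleGraph V} {v : V} {a : V → V} {U U' : Finset V} (h : Comb G v a U)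
    (hU : U' ⊆ U) : Comb G v a U' :=
  ⟨fun u hu => h.1 u (hU hu), fun u hu u' hu' => h.2 u (hU hu) u' (hU hu')⟩

lemma Comb.exists_cycle {G : SimpleGraph V} {v : V} {a : V → V} {U : Finset V}
    (h : Comb G v a U) {p : ℕ → V} {s : ℕ} (hs : 1 ≤ s) (hp : IndPath G p s)
    (hpU : ∀ i ≤ s, p i ∈ U) (hpa : ∀ i j, i < j → j ≤ s → a (p i) ≠ a (p j)) :
    Nonempty (cycleGraph (s + 4) ↪g G) := by
  have hau : ∀ i ≤ s, ∀ j ≤ s, a (p i) ≠ p j := fun i hi j hj hij =>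
    (h.1 _ (hpU j hj)).2.2.1 (hij ▸ (h.1 _ (hpU i hi)).2.1)
  have hsne := hpa 0 s (by omega) le_rfl
  have hends := (h.2 _ (hpU 0 (by omega)) _ (hpU s le_rfl) hsne).2
  set q₁ : ℕ → V := fun i => if i = 0 then a (p 0) else if i = 1 then v else a (p s) with hq₁
  set q₂ : ℕ → V := fun i => if i = 0 then a (p 0) else if i = s + 2 then a (p s) else p (i - 1)
    with hq₂
  have e2 : ∀ i, 0 < i → i < s + 2 → q₂ i = p (i - 1) := fun i h1 h2 => by
    simp only [hq₂]; rw [if_neg (by omega), if_neg (by omega)]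
  have e20 : q₂ 0 = a (p 0) := by simp [hq₂]
  have e2s : q₂ (s + 2) = a (p s) := by simp [hq₂]
  have h1 : IndPath G q₁ 2 := by
    intro i j hij hj
    have hva := (h.1 _ (hpU 0 (by omega))).2.1
    have hvs := (h.1 _ (hpU s le_rfl)).2.1
    obtain ⟨rfl, rfl⟩ | ⟨rfl, rfl⟩ | ⟨rfl, rfl⟩ :
      (i = 0 ∧ j = 1) ∨ (i = 0 ∧ j = 2) ∨ (i = 1 ∧ j = 2) := by omega
    · simp [hq₁, hva.symm, hva.ne']
    · simp [hq₁, hsne, hends]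
    · simp [hq₁, hvs, hvs.ne]
  have h2 : IndPath G q₂ (s + 2) := by
    intro i j hij hj
    rcases Nat.eq_zero_or_pos i with rfl | hi
    · rw [e20]
      rcases Nat.lt_or_ge j (s + 2) with hj' | hj'
      · rw [e2 j hij hj']
        refine ⟨hau 0 (by omega) _ (by omega), ?_⟩
        rcases Nat.lt_or_ge 1 j with h1j | h1j
        · have := (h.2 _ (hpU 0 (by omega)) _ (hpU (j - 1) (by omega))
            (hpa 0 (j - 1) (by omega) (by omega))).1
          exact iff_of_false this (by omega)
        · obtain rfl : j = 1 := by omega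
          exact iff_of_true (h.1 _ (hpU 0 (by omega))).1 rfl
      · obtain rfl : j = s + 2 := by omega
        rw [e2s]
        exact ⟨hsne, iff_of_false hends (by omega)⟩
    · rw [e2 i hi (by omega)]
      rcases Nat.lt_or_ge j (s + 2) with hj' | hj'
      · rw [e2 j (by omega) hj']
        have := hp (i - 1) (j - 1) (by omega) (by omega)
        refine ⟨this.1, this.2.trans ?_⟩
        omega
      · obtain rfl : j = s + 2 := by omega
        rw [e2s]
        refine ⟨(hau s le_rfl _ (by omega)).symm, ?_⟩
        rcases Nat.lt_or_ge i (s + 1) with hi' | hi'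
        · have := (h.2 _ (hpU s le_rfl) _ (hpU (i - 1) (by omega))
            (hpa (i - 1) s (by omega) le_rfl).symm).1
          rw [G.adj_comm]
          exact iff_of_false this (by omega)
        · obtain rfl : i = s + 1 := by omega
          exact iff_of_true (h.1 _ (hpU s le_rfl)).1.symm (by omega)
  have := h1.glue h2 le_rfl (by omega) (by simp [hq₁, hq₂]) (by rw [e2s]; simp [hq₁]) (by
    intro i j hi hi' hj hj'
    obtain rfl : i = 1 := by omega
    rw [e2 j hj hj']
    have := (h.1 _ (hpU (j - 1) (by omega))).2.2
    simpa [hq₁] using ⟨this.2, this.1⟩)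
  rwa [show s + 4 = 2 + (s + 2) by omega]

/-- A very dense set without long antiholes contains a large complete pair. -/
lemma exists_complete_pair {G : SimpleGraph V} {Y : Finset V} {θ : ℝ} {ℓ : ℕ} (hℓ : 2 ≤ ℓ)
    (hθℓ : (3 * ℓ + 11) * θ ≤ 1) (hY : 2 ≤ θ * Y.card)
    (hdeg : ∀ v ∈ Y, ((nb Gᶜ v Y).card : ℝ) ≤ θ / 2 * Y.card)
    (hfree : ∀ m, ℓ ≤ m → ¬ Nonempty (cycleGraph m ↪g Gᶜ)) :
    ∃ A ⊆ Y, ∃ B ⊆ Y, Disjoint A B ∧ Anti Gᶜ A B ∧ θ * Y.card ≤ A.card ∧ θ * Y.card ≤ B.card := by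
  by_contra hcon
  push Not at hcon
  obtain ⟨m, hm, hc⟩ := exists_long_cycle (G := Gᶜ) (X := Y) (θ := θ * Y.card) (by linarith) hℓ
    (by
      have : (3 * (ℓ : ℝ) + 11) * θ * Y.card ≤ 1 * Y.card := by gcongr
      linarith)
    (fun v hv => by linarith [hdeg v hv])
    (fun A hA B hB hd ha h => hcon A hA B hB hd ha h)
  exact hfree m hm hc

end Combs

section Cotree
open Classical Finset

universe u

/-- In a comb whose fibres are small there is a large pure pair. -/
lemma Comb.exists_pure_pair {k ℓ : ℕ} (hk : 5 ≤ k) (hℓ : 2 ≤ ℓ) :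
    ∃ c : ℝ, 0 < c ∧ c ≤ 1 / 2 ∧ ∀ (V : Type u) (G : SimpleGraph V),
      ¬ Nonempty (cycleGraph k ↪g G) → (∀ m, ℓ ≤ m → ¬ Nonempty (cycleGraph m ↪g Gᶜ)) →
      ∀ (v : V) (a : V → V) (U : Finset V), Comb G v a U → U.Nonempty →
      (∀ x, ((U.filter (fun u => a u = x)).card : ℝ) ≤ c * U.card) →
      ∃ A ⊆ U, ∃ B ⊆ U, Disjoint A B ∧ c * U.card ≤ A.card ∧ c * U.card ≤ B.card ∧
        (Anti G A B ∨ Anti Gᶜ A B) := by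
  set θ : ℝ := 1 / (3 * ℓ + 11 + 2 * k * 3 ^ k) with hθd
  have hk' : (5 : ℝ) ≤ k := by exact_mod_cast hk
  have hden : 0 < (3 * ℓ + 11 + 2 * k * 3 ^ k : ℝ) := by positivity
  have hθ : 0 < θ := by positivity
  have hθmul : (3 * ℓ + 11 + 2 * k * 3 ^ k) * θ = 1 := by rw [hθd]; field_simp
  have hθℓ : (3 * ℓ + 11) * θ ≤ 1 := by
    have : 0 ≤ 2 * k * 3 ^ k * θ := by positivity
    linarith
  have hθk : 2 * k * 3 ^ k * θ ≤ 1 := by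
    have : 0 ≤ (3 * ℓ + 11) * θ := by positivity
    linarith
  have hθ1 : θ ≤ 1 := by nlinarith
  obtain ⟨δ, hδ, hδ1, hR⟩ := exists_sparse_or_dense.{u} (by omega : 1 ≤ k) (cycleGraph k)
    (by positivity : 0 < θ / 2)
  set c := min (θ * δ / 2) (δ / (2 * k)) with hc
  have hc0 : 0 < c := by positivity
  have hc1 : c ≤ θ * δ / 2 := min_le_left _ _
  have hc2 : c ≤ δ / (2 * k) := min_le_right _ _
  have hθδ : θ * δ ≤ 1 := mul_le_one₀ hθ1 hδ.le hδ1
  refine ⟨c, hc0, by linarith, fun V G hfk hfℓ v a U hcomb hne hfib => ?_⟩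
  have hU0 : (0 : ℝ) < U.card := by exact_mod_cast hne.card_pos
  have hU1 : 1 ≤ c * U.card := by
    obtain ⟨u, hu⟩ := hne
    refine le_trans ?_ (hfib (a u))
    exact_mod_cast card_pos.2 ⟨u, by simp [hu]⟩
  obtain ⟨Y, hYU, hYne, hYc, hY⟩ := hR V G hfk U hne
  have hY2 : 2 ≤ θ * Y.card := by
    have h1 : c * U.card ≤ θ * δ / 2 * U.card := by gcongr
    have h2 : θ * (δ * U.card) ≤ θ * Y.card := by gcongr
    linarith
  have hcY : c * U.card ≤ θ * Y.card := by
    have h1 : c * U.card ≤ θ * δ / 2 * U.card := by gcongr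
    have h2 : θ * (δ * U.card) ≤ θ * Y.card := by gcongr
    have h3 : 0 ≤ θ * δ / 2 * U.card := by positivity
    linarith
  rcases hY with hY | hY
  · by_contra hcon
    push Not at hcon
    set s := (Y.card : ℝ) / (2 * k) with hs
    have hY0 : (0 : ℝ) < Y.card := by exact_mod_cast hYne.card_pos
    obtain ⟨g, hg⟩ := exists_grouping a s (by positivity) (k - 3) Y (by
      intro x
      have h1 : ((Y.filter (fun u => a u = x)).card : ℝ) ≤ (U.filter (fun u => a u = x)).card := by
        exact_mod_cast card_le_card (filter_subset_filter _ hYU)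
      refine (h1.trans (hfib x)).trans ?_
      have h2 : c * U.card ≤ δ / (2 * k) * U.card := by gcongr
      refine h2.trans ?_
      rw [hs, div_mul_eq_mul_div]
      gcongr) (by
      have h1 : ((k - 3 : ℕ) : ℝ) ≤ k := by exact_mod_cast Nat.sub_le k 3
      have h2 : 2 * s * ((k - 3 : ℕ) : ℝ) ≤ 2 * s * k := by gcongr
      have h3 : 2 * s * k = Y.card := by rw [hs]; field_simp
      linarith)
    set R : ℕ → Finset V := fun j => Y.filter (fun u => g (a u) = j) with hRd
    have hRc : ∀ j < k - 3, 3 ^ (k - 4 + 1) * (θ * Y.card) ≤ (R j).card := by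
      intro j hj
      refine le_trans ?_ (hg j hj)
      rw [hs, le_div_iff₀ (by positivity)]
      have h1 : (3 : ℝ) ^ (k - 4 + 1) ≤ 3 ^ k := pow_le_pow_right₀ (by norm_num) (by omega)
      calc (3 : ℝ) ^ (k - 4 + 1) * (θ * Y.card) * (2 * k) ≤ 3 ^ k * (θ * Y.card) * (2 * k) := by
            gcongr
        _ = 2 * k * 3 ^ k * θ * Y.card := by ring
        _ ≤ 1 * Y.card := by gcongr
        _ = _ := one_mul _
    obtain ⟨p, hp, hp0, hpi, hpd⟩ := exists_transversal_path (G := G) (U := Y) (θ := θ * Y.card)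
      (by linarith)
      (fun u hu => (hY u hu).trans (by nlinarith))
      (fun A hA B hB hd ha h => by
        by_contra hc
        push Not at hc
        exact (hcon A (hA.trans hYU) B (hB.trans hYU) hd (hcY.trans h) (hcY.trans hc)).1 ha)
      (fun u => g (a u)) (k - 4) (R 0) (Ioo 0 (k - 3)) R (by simp; omega) (filter_subset _ _)
      (fun u hu => by
        have := (mem_filter.1 hu).2
        simp [this])
      (fun u hu u' hu' => by
        rw [(mem_filter.1 hu).2, (mem_filter.1 hu').2])
      (fun j _ => filter_subset _ _) (fun j _ u hu => (mem_filter.1 hu).2)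
      (hRc 0 (by omega)) (fun j hj => hRc j (mem_Ioo.1 hj).2)
    have hpU : ∀ i ≤ k - 4, p i ∈ U := by
      intro i hi
      rcases Nat.eq_zero_or_pos i with rfl | h0
      · exact hYU (mem_filter.1 hp0).1
      · exact hYU (mem_filter.1 (hpi i h0 hi).2).1
    have := hcomb.exists_cycle (by omega) hp hpU
      (fun i j hij hj h => hpd i j hij hj (by simp only [h]))
    rw [show k - 4 + 4 = k by omega] at this
    exact hfk this
  · obtain ⟨A, hA, B, hB, hd, ha, h1, h2⟩ := exists_complete_pair hℓ hθℓ hY2 hY hfℓ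
    exact ⟨A, hA.trans hYU, B, hB.trans hYU, hd, hcY.trans h1, hcY.trans h2, .inr ha⟩

/-- Iterating `Comb.exists_pure_pair` yields large families of pairwise anticomplete, and of
pairwise complete, sets. -/
lemma Comb.exists_coFam {k ℓ : ℕ} (hk : 5 ≤ k) (hℓ : 2 ≤ ℓ) :
    ∃ c : ℝ, 0 < c ∧ c ≤ 1 / 2 ∧ ∀ (V : Type u) (G : SimpleGraph V),
      ¬ Nonempty (cycleGraph k ↪g G) → (∀ m, ℓ ≤ m → ¬ Nonempty (cycleGraph m ↪g Gᶜ)) →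
      ∀ (v : V) (a : V → V) (b : ℝ), 0 < b → ∀ (D : ℕ) (U : Finset V), Comb G v a U →
      (∀ x, ((U.filter (fun u => a u = x)).card : ℝ) ≤ b) → b ≤ c ^ (D + 1) * U.card →
      CoFam (Anti G) (Anti Gᶜ) (fun A => b ≤ A.card) U D := by
  obtain ⟨c, hc, hc1, h⟩ := Comb.exists_pure_pair.{u} hk hℓ
  refine ⟨c, hc, hc1, fun V G hfk hfℓ v a b hb D => ?_⟩
  have hle : ∀ (D : ℕ) (U : Finset V), c ^ (D + 1) * U.card ≤ c * U.card := fun D U => by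
    gcongr
    exact pow_le_of_le_one hc.le (by linarith) (by omega)
  have hne : ∀ (D : ℕ) (U : Finset V), b ≤ c ^ (D + 1) * U.card → U.Nonempty := fun D U hU => by
    by_contra hcon
    rw [not_nonempty_iff_eq_empty] at hcon
    rw [hcon] at hU
    simp at hU
    linarith
  induction D with
  | zero =>
    intro U _ _ hU
    have hb' : b ≤ U.card := (hU.trans (hle 0 U)).trans
      (mul_le_of_le_one_left (by positivity) (by linarith))
    exact ⟨1, 1, by simp, HasFam.single subset_rfl (hne 0 U hU) hb',
      HasFam.single subset_rfl (hne 0 U hU) hb'⟩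
  | succ D ih =>
    intro U hU hfib hbU
    obtain ⟨A, hA, B, hB, hd, hAc, hBc, hAB⟩ := h V G hfk hfℓ v a U hU (hne _ U hbU)
      (fun x => (hfib x).trans (hbU.trans (hle _ U)))
    have sub : ∀ A ⊆ U, c * U.card ≤ A.card →
        CoFam (Anti G) (Anti Gᶜ) (fun A => b ≤ A.card) A D := by
      intro A hA hAc
      refine ih A (hU.mono hA) (fun x => (hfib x).trans' ?_) (hbU.trans ?_)
      · exact_mod_cast card_le_card (filter_subset_filter _ hA)
      · rw [pow_succ, mul_assoc]
        gcongr
    rcases hAB with hAB | hAB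
    · exact (sub A hA hAc).merge (sub B hB hBc) hA hB hd
        fun A' hA' B' hB' _ _ => ⟨hAB.mono hA' hB', (hAB.mono hA' hB').symm⟩
    · exact ((sub A hA hAc).symm.merge (sub B hB hBc).symm hA hB hd
        fun A' hA' B' hB' _ _ => ⟨hAB.mono hA' hB', (hAB.mono hA' hB').symm⟩).symm

end Cotree

section Core
open Classical Finset

variable {V : Type*}

/-- Equal-sized private neighbourhoods of a stable set of neighbours of `v` form a comb. -/
lemma exists_comb_of_priv {G : SimpleGraph V} {v : V} {T B : Finset V} {b : ℕ}
    (hT : Anti G T T) (hvT : ∀ x ∈ T, G.Adj v x) (hvB : ∀ u ∈ B, ¬ G.Adj v u ∧ v ≠ u)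
    (hb : ∀ x ∈ T, b ≤ (priv G T x B).card) :
    ∃ (a : V → V) (U : Finset V), U ⊆ B ∧ Comb G v a U ∧ U.card = T.card * b ∧
      ∀ x, (U.filter (fun u => a u = x)).card ≤ b := by
  choose! P hP hPc using fun x hx => exists_subset_card_eq (hb x hx)
  set a : V → V := fun u => if h : ∃ x ∈ T, G.Adj x u then h.choose else u with ha
  have haP : ∀ x ∈ T, ∀ u ∈ P x, a u = x := by
    intro x hx u hu
    have hpr := mem_priv.1 (hP x hx hu)
    have hex : ∃ x ∈ T, G.Adj x u := ⟨x, hx, hpr.2.1⟩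
    simp only [ha, dif_pos hex]
    exact hpr.2.2 _ hex.choose_spec.1 hex.choose_spec.2
  have hmem : ∀ u ∈ T.biUnion P, a u ∈ T ∧ u ∈ P (a u) := by
    intro u hu
    obtain ⟨x, hx, hux⟩ := mem_biUnion.1 hu
    rw [haP x hx u hux]
    exact ⟨hx, hux⟩
  refine ⟨a, T.biUnion P, ?_, ⟨?_, ?_⟩, ?_, ?_⟩
  · exact biUnion_subset.2 fun x hx => (hP x hx).trans (filter_subset _ _)
  · intro u hu
    obtain ⟨h1, h2⟩ := hmem u hu
    have hpr := mem_priv.1 (hP _ h1 h2)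
    exact ⟨hpr.2.1, hvT _ h1, hvB u hpr.1⟩
  · intro u hu u' hu' hne
    obtain ⟨h1, h2⟩ := hmem u hu
    obtain ⟨h1', h2'⟩ := hmem u' hu'
    exact ⟨fun h => hne ((mem_priv.1 (hP _ h1' h2')).2.2 _ h1 h), hT _ h1 _ h1'⟩
  · rw [card_biUnion, sum_congr rfl hPc, sum_const, smul_eq_mul]
    intro x hx y hy hxy
    refine Finset.disjoint_left.2 fun u hu hu' => hxy ?_
    rw [← haP x hx u hu, haP y hy u hu']
  · intro x
    by_cases hx : x ∈ T
    · rw [← hPc x hx]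
      refine card_le_card fun u hu => ?_
      obtain ⟨huU, rfl⟩ := mem_filter.1 hu
      exact (hmem u huU).2
    · rw [filter_false_of_mem]
      · simp
      · rintro u hu rfl
        exact hx (hmem u hu).1

/-- In a critical set every vertex `v` has a stable set of neighbours dominating many vertices
outside the closed neighbourhood of `v`. -/
lemma Crit.exists_dominating {G : SimpleGraph V} {X : Finset V} {τ : ℝ} (hτ1 : τ ≤ 1)
    (hX : Crit G τ X) {v : V} (hv : v ∈ X) :
    ∃ S ⊆ nb G v X, Anti G S S ∧ ∃ B ⊆ X, (∀ b ∈ B, ∃ a ∈ S, G.Adj a b) ∧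
      (∀ u ∈ B, ¬ G.Adj v u ∧ v ≠ u) ∧
      (X.card : ℝ) * ((nb G v X).card / X.card : ℝ) ^ τ ≤ B.card + (nb G v X).card + 1 := by
  have hne : X.Nonempty := ⟨v, hv⟩
  have hn : (0 : ℝ) < X.card := by exact_mod_cast hne.card_pos
  obtain ⟨S, hSA, hS, hSc⟩ := exists_stab G (nb G v X)
  have hSX : S ⊆ X := hSA.trans (nb_subset _ _ _)
  set R := X \ (S ∪ nbs G S X) with hR
  set B := nbs G S X \ insert v (nb G v X) with hB
  refine ⟨S, hSA, hS, B, sdiff_subset.trans (nbs_subset _ _ _), ?_, ?_, ?_⟩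
  · intro b hb
    exact (mem_nbs.1 (mem_sdiff.1 hb).1).2
  · intro u hu
    obtain ⟨h1, h2⟩ := mem_sdiff.1 hu
    rw [mem_insert, mem_nb] at h2
    push Not at h2
    exact ⟨h2.2 (nbs_subset _ _ _ h1), Ne.symm h2.1⟩
  · have hRX : R ⊆ X := sdiff_subset
    have h1 : stab G S + stab G R ≤ stab G X := stab_add_le hSX hRX
      (disjoint_of_subset_left subset_union_left disjoint_sdiff) (fun s hs r hr hsr => by
        have := (mem_sdiff.1 hr)
        exact this.2 (mem_union_right _ (mem_nbs.2 ⟨this.1, s, hs, hsr⟩)))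
    have h2 : S.card ≤ stab G S := card_le_stab subset_rfl hS
    have h3 : ((stab G (nb G v X) : ℕ) : ℝ) + stab G R ≤ stab G X := by
      rw [← hSc]; exact_mod_cast (by omega)
    have h4 := hX.stab_le hne (nb_subset G v X)
    have h5 := hX.stab_le hne hRX
    have hs : (0 : ℝ) < stab G X := by exact_mod_cast stab_pos G hne
    have h6 : ((nb G v X).card / X.card : ℝ) ^ τ + (R.card / X.card : ℝ) ^ τ ≤ 1 := by
      have : (stab G X : ℝ) * (((nb G v X).card / X.card : ℝ) ^ τ + (R.card / X.card : ℝ) ^ τ) ≤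
          stab G X * 1 := by linarith
      exact le_of_mul_le_mul_left this hs
    have hRle : (R.card / X.card : ℝ) ≤ 1 := by
      rw [div_le_one hn]; exact_mod_cast card_le_card hRX
    have h7 : (R.card / X.card : ℝ) ≤ (R.card / X.card : ℝ) ^ τ := by
      rcases (by positivity : (0 : ℝ) ≤ R.card / X.card).eq_or_lt with h0 | h0
      · rw [← h0]; positivity
      · exact Real.self_le_rpow_of_le_one h0.le hRle hτ1
    have h8 : (R.card : ℝ) ≤ X.card * (1 - ((nb G v X).card / X.card : ℝ) ^ τ) := by
      have : (R.card / X.card : ℝ) ≤ 1 - ((nb G v X).card / X.card : ℝ) ^ τ := by linarith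
      rw [div_le_iff₀ hn] at this
      linarith
    have h9 : X ⊆ R ∪ (B ∪ insert v (nb G v X)) := by
      intro x hx
      by_cases hxR : x ∈ R
      · exact mem_union_left _ hxR
      refine mem_union_right _ ?_
      have : x ∈ S ∪ nbs G S X := by
        by_contra h
        exact hxR (mem_sdiff.2 ⟨hx, h⟩)
      rcases mem_union.1 this with h | h
      · exact mem_union_right _ (mem_insert_of_mem (hSA h))
      · by_cases h' : x ∈ insert v (nb G v X)
        · exact mem_union_right _ h'
        · exact mem_union_left _ (mem_sdiff.2 ⟨h, h'⟩)
    have h10 : X.card ≤ R.card + (B.card + ((nb G v X).card + 1)) :=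
      (card_le_card h9).trans ((card_union_le _ _).trans (Nat.add_le_add_left
        ((card_union_le _ _).trans (Nat.add_le_add_left (card_insert_le _ _) _)) _))
    have h11 : (X.card : ℝ) ≤ R.card + (B.card + ((nb G v X).card + 1)) := by exact_mod_cast h10
    linarith

/-- A set of small positive maximum degree which is critical with small exponent contains a comb
whose teeth are large compared with their number. -/
lemma Crit.exists_comb {G : SimpleGraph V} {X : Finset V} {τ : ℝ} (hτ : 0 < τ) (hτ1 : τ ≤ 1 / 4)
    (hX : Crit G τ X) (hX2 : 2 ≤ X.card) {y₀ : ℝ} (hy₀ : y₀ ≤ 1 / 103 ^ 4)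
    (hdeg : ∀ v ∈ X, ((nb G v X).card : ℝ) ≤ y₀ * X.card) :
    ∃ (v : V) (a : V → V) (U : Finset V) (t b : ℕ), U ⊆ X ∧ Comb G v a U ∧ U.card = t * b ∧
      (∀ x, (U.filter (fun u => a u = x)).card ≤ b) ∧ 1 ≤ t ∧ 1 ≤ y₀ * (t : ℝ) ^ 2 ∧
      (X.card : ℝ) ≤ b * (t : ℝ) ^ 2 := by
  have hne : X.Nonempty := card_pos.1 (by omega)
  have hn : (0 : ℝ) < X.card := by exact_mod_cast hne.card_pos
  obtain ⟨v, hv, hmax⟩ := exists_max_image X (fun v => (nb G v X).card) hne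
  have hΔ : 0 < (nb G v X).card := by
    by_contra h0
    push Not at h0
    have hst : Anti G X X := by
      intro x hx y hy hxy
      have := (hmax x hx).trans h0
      rw [Nat.le_zero, card_eq_zero] at this
      exact notMem_empty y (this ▸ mem_nb.2 ⟨hy, hxy⟩)
    have h1 : X.card ≤ stab G X := card_le_stab subset_rfl hst
    have h2 := hX.stab_le hne (singleton_subset_iff.2 hv)
    have h3 : stab G {v} ≤ 1 := by
      obtain ⟨S, hS, -, hSc⟩ := exists_stab G {v}
      rw [← hSc]
      simpa using card_le_card hS
    have h4 : (stab G {v} : ℝ) ≤ 1 := by exact_mod_cast h3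
    have h5 : (X.card : ℝ) ≤ stab G X := by exact_mod_cast h1
    have h6 : (X.card : ℝ) * (1 / X.card) ^ τ ≤ 1 := by
      refine le_trans ?_ (h2.trans h4)
      simp only [card_singleton, Nat.cast_one]
      gcongr
    have hn2 : (2 : ℝ) ≤ X.card := by exact_mod_cast hX2
    rw [Real.div_rpow zero_le_one hn.le, Real.one_rpow, mul_one_div,
      div_le_one (by positivity)] at h6
    have h7 : (X.card : ℝ) ^ τ < (X.card : ℝ) ^ (1 : ℝ) :=
      Real.rpow_lt_rpow_of_exponent_lt (by linarith) (by linarith)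
    rw [Real.rpow_one] at h7
    linarith
  obtain ⟨S, hSA, hS, B, hBX, hcov, hvB, hBc⟩ := hX.exists_dominating (by linarith) hv
  obtain ⟨Δ, hΔd⟩ : ∃ Δ : ℝ, Δ = (nb G v X).card := ⟨_, rfl⟩
  rw [← hΔd] at hBc
  have hΔ1 : 1 ≤ Δ := by rw [hΔd]; exact_mod_cast hΔ
  obtain ⟨y, hy⟩ : ∃ y : ℝ, y = Δ / X.card := ⟨_, rfl⟩
  rw [← hy] at hBc
  have hy0 : 0 < y := by rw [hy]; positivity
  have hyy : y ≤ y₀ := by rw [hy, div_le_iff₀ hn, hΔd]; exact hdeg v hv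
  have hΔy : Δ = y * X.card := by rw [hy]; field_simp
  clear hy
  obtain ⟨z, hz⟩ : ∃ z : ℝ, z = y ^ (1 / 4 : ℝ) := ⟨_, rfl⟩
  have hz0 : 0 < z := by rw [hz]; positivity
  have hz4 : z ^ 4 = y := by
    rw [hz, ← Real.rpow_natCast, ← Real.rpow_mul hy0.le]; norm_num
  have hz1 : z ≤ 1 / 103 := by
    rw [← pow_le_pow_iff_left₀ hz0.le (by norm_num) (by norm_num : 4 ≠ 0), hz4]
    refine (hyy.trans hy₀).trans_eq (by norm_num)
  have hzτ : z ≤ y ^ τ := by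
    rw [hz]
    refine Real.rpow_le_rpow_of_exponent_ge hy0 ?_ hτ1
    refine (hyy.trans hy₀).trans (by norm_num)
  clear hz
  rcases _root_.exists_comb G S hn B hcov Δ (fun a ha => by
    have h1 : a ∈ X := nb_subset _ _ _ (hSA ha)
    rw [hΔd]
    exact_mod_cast (card_le_card (nb_mono G a hBX)).trans (hmax a h1)) with ⟨T, hTS, hTne, hT⟩ | hBs
  · set t := T.card with ht
    have ht1 : 1 ≤ t := hTne.card_pos
    have ht1' : (1 : ℝ) ≤ t := by exact_mod_cast ht1
    set b := ⌈(X.card : ℝ) / (t : ℝ) ^ 2⌉₊ with hb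
    obtain ⟨a, U, hUB, hU, hUc, hUf⟩ := exists_comb_of_priv (G := G) (v := v) (T := T) (B := B)
      (b := b) (hS.mono hTS hTS) (fun x hx => (mem_nb.1 (hSA (hTS hx))).2) hvB (fun x hx => by
        rw [hb, Nat.ceil_le, div_le_iff₀ (by positivity)]
        exact hT x hx)
    refine ⟨v, a, U, t, b, hUB.trans hBX, hU, hUc, hUf, ht1, ?_, ?_⟩
    · obtain ⟨x, hx⟩ := hTne
      have h1 := hT x hx
      have h2 : ((priv G T x B).card : ℝ) ≤ Δ := by
        have h3 : priv G T x B ⊆ nb G x X := fun u hu => by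
          have := mem_priv.1 hu
          exact mem_nb.2 ⟨hBX this.1, this.2.1⟩
        rw [hΔd]
        exact_mod_cast (card_le_card h3).trans (hmax x (nb_subset _ _ _ (hSA (hTS hx))))
      have h4 : (X.card : ℝ) * 1 ≤ X.card * (y₀ * (t : ℝ) ^ 2) := by
        calc (X.card : ℝ) * 1 ≤ (priv G T x B).card * (t : ℝ) ^ 2 := by linarith
          _ ≤ Δ * (t : ℝ) ^ 2 := by gcongr
          _ = X.card * (y * (t : ℝ) ^ 2) := by rw [hΔy]; ring
          _ ≤ _ := by gcongr
      exact le_of_mul_le_mul_left h4 hn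
    · have := Nat.le_ceil ((X.card : ℝ) / (t : ℝ) ^ 2)
      rwa [div_le_iff₀ (by positivity)] at this
  · exfalso
    have h1 : √(X.card * Δ) = X.card * z ^ 2 := by
      rw [hΔy, ← hz4, show (X.card : ℝ) * (z ^ 4 * X.card) = (X.card * z ^ 2) ^ 2 by ring,
        Real.sqrt_sq (by positivity)]
    rw [h1] at hBs
    have h2 : (X.card : ℝ) * z ≤ X.card * y ^ τ := by gcongr
    have h3 : X.card * z ≤ 100 * (X.card * z ^ 2) + 2 * (z ^ 4 * X.card) := by
      have h5 : 2 * (z ^ 4 * X.card) = 2 * Δ := by rw [hΔy, hz4]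
      linarith
    have h4 : z ≤ 100 * z ^ 2 + 2 * z ^ 4 := by
      have : X.card * z ≤ X.card * (100 * z ^ 2 + 2 * z ^ 4) := by linarith
      exact le_of_mul_le_mul_left this hn
    have h5 : z ^ 4 ≤ z ^ 2 := pow_le_pow_of_le_one hz0.le (by linarith) (by norm_num)
    nlinarith

/-- Sparse sets are not critical for small exponents. -/
lemma not_crit_of_sparse {G : SimpleGraph V} {c : ℝ} (hc : 0 < c) (hc1 : c ≤ 1 / 2) {N : ℕ}
    (hN : 1 ≤ N) (hcN : 1 ≤ c * 2 ^ N)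
    (hcomb : ∀ (v : V) (a : V → V) (b : ℝ), 0 < b → ∀ (D : ℕ) (U : Finset V), Comb G v a U →
      (∀ x, ((U.filter (fun u => a u = x)).card : ℝ) ≤ b) → b ≤ c ^ (D + 1) * U.card →
      CoFam (Anti G) (Anti Gᶜ) (fun A => b ≤ A.card) U D)
    {X : Finset V} (hX2 : 2 ≤ X.card) (hX : Crit G (1 / (10 * N)) X) {y₀ : ℝ}
    (hy₀ : y₀ ≤ 1 / 103 ^ 4) (hyc : y₀ ≤ c ^ 6)
    (hdeg : ∀ v ∈ X, ((nb G v X).card : ℝ) ≤ y₀ * X.card) : False := by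
  have hN' : (1 : ℝ) ≤ N := by exact_mod_cast hN
  have hτ : (0 : ℝ) < 1 / (10 * N) := by positivity
  have hτ1 : (1 : ℝ) / (10 * N) ≤ 1 / 4 := by
    apply one_div_le_one_div_of_le (by norm_num); linarith
  obtain ⟨v, a, U, t, b, hUX, hU, hUc, hfib, ht, hyt, hbt⟩ := hX.exists_comb hτ hτ1 hX2 hy₀ hdeg
  have hne : X.Nonempty := card_pos.1 (by omega)
  have hn : (0 : ℝ) < X.card := by exact_mod_cast hne.card_pos
  have ht0 : (0 : ℝ) < t := by exact_mod_cast ht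
  have hb0 : (0 : ℝ) < b := by
    by_contra h
    push Not at h
    nlinarith [sq_nonneg (t : ℝ)]
  have hc3t : 1 ≤ c ^ 3 * t := by
    have h1 : y₀ * (t : ℝ) ^ 2 ≤ c ^ 6 * (t : ℝ) ^ 2 := by gcongr
    have h2 : (1 : ℝ) ^ 2 ≤ (c ^ 3 * t) ^ 2 := by
      rw [show (c ^ 3 * (t : ℝ)) ^ 2 = c ^ 6 * (t : ℝ) ^ 2 by ring, one_pow]; linarith
    exact (sq_le_sq₀ zero_le_one (by positivity)).1 h2
  have hex : ∃ d : ℕ, c ^ (2 * d + 3) * t < 1 := by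
    obtain ⟨d, hd⟩ := exists_pow_lt_of_lt_one (by positivity : 0 < 1 / (t : ℝ))
      (by linarith : c < 1)
    refine ⟨d, ?_⟩
    rw [lt_div_iff₀ ht0] at hd
    refine lt_of_le_of_lt ?_ hd
    gcongr ?_ * _
    exact pow_le_pow_of_le_one hc.le (by linarith) (by omega)
  set d := Nat.find hex with hd
  have hd1 : c ^ (2 * d + 3) * t < 1 := Nat.find_spec hex
  have hd0 : 1 ≤ d := by
    by_contra h
    have h0 : d = 0 := by omega
    rw [h0] at hd1
    simp only [mul_zero, zero_add] at hd1
    linarith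
  have hd2 : 1 ≤ c ^ (2 * d + 1) * t := by
    have := Nat.find_min hex (m := d - 1) (by omega)
    push Not at this
    rwa [show 2 * (d - 1) + 3 = 2 * d + 1 by omega] at this
  have hco := hcomb v a b hb0 (2 * d) U hU (fun x => by exact_mod_cast hfib x) (by
    rw [hUc]
    push_cast
    calc (b : ℝ) = 1 * b := (one_mul _).symm
      _ ≤ c ^ (2 * d + 1) * t * b := by gcongr
      _ = _ := by ring)
  have hfam : ((2 ^ d : ℕ) : ℝ) * ((b : ℝ) / X.card) ^ (1 / (10 * N) : ℝ) ≤ 1 := by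
    rcases hco.exists_large with h | h
    · exact hX.fam_le hτ hne hb0.le (h.mono hUX (fun _ _ h => h) (fun _ _ _ _ _ _ h => h))
    · exact hX.compl.fam_le hτ hne hb0.le (h.mono hUX (fun _ _ h => h) (fun _ _ _ _ _ _ h => h))
  have htlt : (t : ℝ) < 2 ^ (N * (2 * d + 3)) := by
    have h1 : 1 ≤ c ^ (2 * d + 3) * 2 ^ (N * (2 * d + 3)) := by
      rw [pow_mul, ← mul_pow]
      exact one_le_pow₀ hcN
    have h2 : c ^ (2 * d + 3) * t < c ^ (2 * d + 3) * 2 ^ (N * (2 * d + 3)) := by linarith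
    exact lt_of_mul_lt_mul_left h2 (by positivity)
  have hbn : 1 / (t : ℝ) ^ 2 ≤ b / X.card := by
    rw [div_le_div_iff₀ (by positivity) hn]; linarith
  have hlow : ((1 / 2 : ℝ) ^ (2 * N * (2 * d + 3))) < b / X.card := by
    refine lt_of_lt_of_le ?_ hbn
    rw [one_div_pow]
    refine one_div_lt_one_div_of_lt (by positivity) ?_
    rw [mul_assoc, mul_comm 2, pow_mul]
    gcongr
  have hpow : ((1 / 2 : ℝ) ^ (2 * N * (2 * d + 3))) ^ (1 / (10 * N) : ℝ) ≥ (1 / 2) ^ d := by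
    rw [← Real.rpow_natCast, ← Real.rpow_mul (by norm_num), ← Real.rpow_natCast _ d]
    refine Real.rpow_le_rpow_of_exponent_ge (by norm_num) (by norm_num) ?_
    push_cast
    rw [mul_one_div, div_le_iff₀ (by positivity)]
    have hd0' : (1 : ℝ) ≤ d := by exact_mod_cast hd0
    nlinarith
  have hlt : (1 / 2 : ℝ) ^ d < (b / X.card) ^ (1 / (10 * N) : ℝ) :=
    lt_of_le_of_lt hpow (Real.rpow_lt_rpow (by positivity) hlow hτ)
  have : (2 : ℝ) ^ d * (1 / 2) ^ d < 2 ^ d * (b / X.card) ^ (1 / (10 * N) : ℝ) := by gcongr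
  rw [← mul_pow] at this
  push_cast at hfam
  norm_num at this
  norm_num at hfam
  linarith

end Core

section Long
open Classical Finset

universe u

/-- Let `X` be critical with exponent `τ` and `Y ⊆ X` of linear size. A subset of `Y` minimising
`kap / card ^ σ`, where `σ` is a large multiple of `τ`, contains at least half of `Y`. -/
lemma Crit.card_le_two_mul {V : Type*} {G : SimpleGraph V} {τ δ : ℝ} {Q : ℕ} (hτ : 0 < τ)
    {X Y Z : Finset V} (hX : Crit G τ X) (hYX : Y ⊆ X) (hZY : Z ⊆ Y) (hZ : Z.Nonempty)
    (hY : δ * X.card ≤ Y.card) (hδ : (1 / 2 : ℝ) ^ Q < δ)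
    (hk : (kap G Z : ℝ) * (Y.card : ℝ) ^ ((Q + 1) * τ) ≤ kap G Y * (Z.card : ℝ) ^ ((Q + 1) * τ)) :
    (Y.card : ℝ) ≤ 2 * Z.card := by
  have hz : (0 : ℝ) < Z.card := by exact_mod_cast hZ.card_pos
  have hy : (0 : ℝ) < Y.card := by exact_mod_cast (hZ.mono hZY).card_pos
  have hx : (0 : ℝ) < X.card := by exact_mod_cast (hZ.mono (hZY.trans hYX)).card_pos
  have hκ : (0 : ℝ) < kap G Z := by exact_mod_cast kap_pos G hZ
  have hκX : (0 : ℝ) < kap G X := by exact_mod_cast kap_pos G (hZ.mono (hZY.trans hYX))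
  have h1 := hX Z (hZY.trans hYX)
  have hκY : (kap G Y : ℝ) ≤ kap G X := by exact_mod_cast kap_mono G hYX
  have hpow : ∀ a : ℝ, 0 < a → a ^ ((Q + 1) * τ) = (a ^ (Q + 1)) ^ τ := by
    intro a ha
    rw [Real.rpow_mul ha.le, ← Real.rpow_natCast]
    push_cast
    rfl
  rw [hpow _ hy, hpow _ hz] at hk
  have h2 : (Z.card * (Y.card : ℝ) ^ (Q + 1)) ^ τ ≤ (X.card * (Z.card : ℝ) ^ (Q + 1)) ^ τ := by
    rw [Real.mul_rpow hz.le (by positivity), Real.mul_rpow hx.le (by positivity)]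
    refine le_of_mul_le_mul_left ?_ (mul_pos hκX hκ)
    calc (kap G X : ℝ) * kap G Z * ((Z.card : ℝ) ^ τ * ((Y.card : ℝ) ^ (Q + 1)) ^ τ)
        = (kap G X * (Z.card : ℝ) ^ τ) * (kap G Z * ((Y.card : ℝ) ^ (Q + 1)) ^ τ) := by ring
      _ ≤ (kap G Z * (X.card : ℝ) ^ τ) * (kap G X * ((Z.card : ℝ) ^ (Q + 1)) ^ τ) := by
        exact mul_le_mul h1 (hk.trans (by gcongr)) (by positivity) (by positivity)
      _ = _ := by ring
  have h3 := (Real.rpow_le_rpow_iff (by positivity) (by positivity) hτ).1 h2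
  by_contra! hlt
  have h4 : (Y.card : ℝ) ^ (Q + 1) ≤ X.card * (Z.card : ℝ) ^ Q := by
    refine le_of_mul_le_mul_left ?_ hz
    rw [pow_succ] at h3 ⊢
    rw [pow_succ] at h3
    linarith
  have h5 : (Z.card : ℝ) ^ Q ≤ (1 / 2 * Y.card) ^ Q := by
    gcongr
    linarith
  have h6 : (Y.card : ℝ) * (Y.card : ℝ) ^ Q ≤ X.card * (1 / 2) ^ Q * (Y.card : ℝ) ^ Q := by
    rw [mul_pow] at h5
    rw [pow_succ] at h4
    have : X.card * (Z.card : ℝ) ^ Q ≤ X.card * ((1 / 2) ^ Q * (Y.card : ℝ) ^ Q) := by gcongr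
    linarith
  have h7 := le_of_mul_le_mul_right h6 (by positivity)
  have h8 : X.card * (1 / 2 : ℝ) ^ Q < X.card * δ := by gcongr
  linarith

/-- Graphs without `C_k` and without long antiholes have polynomially large `kap`. -/
lemma exists_rpow_le_kap {k ℓ : ℕ} (hk : 5 ≤ k) (hℓ : 2 ≤ ℓ) :
    ∃ τ : ℝ, 0 < τ ∧ ∀ (V : Type u) (G : SimpleGraph V),
      ¬ Nonempty (cycleGraph k ↪g G) → (∀ m, ℓ ≤ m → ¬ Nonempty (cycleGraph m ↪g Gᶜ)) →
      ∀ W : Finset V, W.Nonempty → (W.card : ℝ) ^ τ ≤ kap G W := by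
  obtain ⟨c, hc, hc1, hcomb⟩ := Comb.exists_coFam.{u} hk hℓ
  obtain ⟨N, hcN⟩ : ∃ N : ℕ, (1 / 2 : ℝ) ^ N < c := exists_pow_lt_of_lt_one hc (by norm_num)
  have hN : 1 ≤ N := by
    by_contra h
    obtain rfl : N = 0 := by omega
    norm_num at hcN
    linarith
  have hcN' : 1 ≤ c * 2 ^ N := by
    rw [one_div_pow, div_lt_iff₀ (by positivity)] at hcN
    exact hcN.le
  obtain ⟨y₀, hy0, hy1, hyc⟩ : ∃ y₀ : ℝ, 0 < y₀ ∧ y₀ ≤ 1 / 103 ^ 4 ∧ y₀ ≤ c ^ 6 :=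
    ⟨min (1 / 103 ^ 4) (c ^ 6), lt_min (by norm_num) (by positivity), min_le_left _ _,
      min_le_right _ _⟩
  obtain ⟨θ, hθ, hθℓ, hθ1⟩ : ∃ θ : ℝ, 0 < θ ∧ (3 * ℓ + 11) * θ ≤ 1 ∧ θ ≤ 1 / 11 :=
    ⟨1 / (3 * ℓ + 11), by positivity, by rw [mul_one_div, div_self (by positivity)],
      one_div_le_one_div_of_le (by norm_num) (by linarith [Nat.cast_nonneg (α := ℝ) ℓ])⟩
  obtain ⟨ε, hε, hε1, hε2⟩ : ∃ ε : ℝ, 0 < ε ∧ ε ≤ y₀ / 2 ∧ ε ≤ θ / 2 :=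
    ⟨min (y₀ / 2) (θ / 2), lt_min (by positivity) (by positivity), min_le_left _ _,
      min_le_right _ _⟩
  obtain ⟨δ, hδ, hδ1, hrodl⟩ := exists_sparse_or_dense.{u} (by omega : 1 ≤ k) (cycleGraph k) hε
  have hθδ : θ * δ / 2 < δ := by nlinarith
  obtain ⟨Q, hQ⟩ : ∃ Q : ℕ, (1 / 2 : ℝ) ^ Q < θ * δ / 2 :=
    exists_pow_lt_of_lt_one (by positivity) (by norm_num)
  have hN' : (1 : ℝ) ≤ N := by exact_mod_cast hN
  obtain ⟨τ, hτd⟩ : ∃ τ : ℝ, τ = 1 / (10 * N) / (Q + 1) := ⟨_, rfl⟩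
  have hτ : 0 < τ := by rw [hτd]; positivity
  have hτQ : (Q + 1) * τ = 1 / (10 * N) := by rw [hτd]; field_simp
  clear hτd
  have hQτ : Q * τ ≤ 1 := by
    have : (1 : ℝ) / (10 * N) ≤ 1 := by
      rw [div_le_one (by positivity)]; linarith
    nlinarith
  refine ⟨τ, hτ, fun V G hfk hfℓ W hW => ?_⟩
  by_contra! hlt
  obtain ⟨X, hXW, hXne, hX, hXk⟩ := exists_crit G hτ hW
  have hw : (0 : ℝ) < W.card := by exact_mod_cast hW.card_pos
  have hx : (0 : ℝ) < X.card := by exact_mod_cast hXne.card_pos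
  have hκ : (kap G X : ℝ) < (X.card : ℝ) ^ τ := by
    have h1 : (0 : ℝ) < (W.card : ℝ) ^ τ := by positivity
    have h2 : (kap G W : ℝ) * (X.card : ℝ) ^ τ < (W.card : ℝ) ^ τ * (X.card : ℝ) ^ τ := by gcongr
    exact lt_of_mul_lt_mul_right (by linarith : _ < (X.card : ℝ) ^ τ * (W.card : ℝ) ^ τ) h1.le
  have hX2 : 2 ≤ X.card := by
    by_contra h
    have h1 : X.card = 1 := by have := hXne.card_pos; omega
    have h2 : (1 : ℝ) ≤ kap G X := by exact_mod_cast kap_pos G hXne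
    rw [h1, Nat.cast_one, Real.one_rpow] at hκ
    linarith
  have hκ2 : (2 : ℝ) ≤ kap G X := by exact_mod_cast two_le_kap G hX2
  have hpow : ∀ b : ℝ, 0 ≤ b → (2 : ℝ) < b ^ τ → 2 ^ Q < b := by
    intro b hb h
    by_contra! hle
    have h1 : b ^ τ ≤ ((2 : ℝ) ^ Q) ^ τ := Real.rpow_le_rpow hb hle hτ.le
    rw [← Real.rpow_natCast, ← Real.rpow_mul (by norm_num)] at h1
    have h2 : (2 : ℝ) ^ (Q * τ) ≤ 2 ^ (1 : ℝ) :=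
      Real.rpow_le_rpow_of_exponent_le (by norm_num) hQτ
    rw [Real.rpow_one] at h2
    linarith
  have hXQ : 2 < θ * δ * X.card := by
    have h1 := hpow _ hx.le (by linarith)
    have h2 : (1 / 2 : ℝ) ^ Q * 2 ^ Q < θ * δ / 2 * X.card := by gcongr
    rw [← mul_pow] at h2
    norm_num at h2
    linarith
  obtain ⟨Y, hYX, hYne, hYc, hs | hd⟩ := hrodl V G hfk X hXne
  · obtain ⟨Z, hZY, hZne, hZ, hZk⟩ := exists_crit G (by positivity : (0 : ℝ) < 1 / (10 * N)) hYne
    have hYZ := hX.card_le_two_mul hτ hYX hZY hZne hYc (hQ.trans hθδ) (by rwa [hτQ])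
    refine not_crit_of_sparse hc hc1 hN hcN' (hcomb V G hfk hfℓ) ?_ hZ hy1 hyc ?_
    · have h1 : (4 : ℝ) < Y.card := by nlinarith
      have : (2 : ℝ) < Z.card := by linarith
      exact_mod_cast this.le
    · intro v hv
      have h1 : ((nb G v Z).card : ℝ) ≤ (nb G v Y).card := by
        exact_mod_cast card_le_card (nb_mono G v hZY)
      have h2 := hs v (hZY hv)
      have h3 : ε * Y.card ≤ y₀ / 2 * (2 * Z.card) := by gcongr
      linarith
  · have hYθ : θ * δ * X.card ≤ θ * Y.card := by
      rw [mul_assoc]; gcongr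
    obtain ⟨A, hA, B, hB, hAB, hanti, hAc, hBc⟩ := exists_complete_pair (G := G) (Y := Y) hℓ hθℓ
      (by linarith) (fun v hv => (hd v hv).trans (by gcongr)) hfℓ
    have hne : ∀ A : Finset V, θ * Y.card ≤ A.card → A.Nonempty := by
      intro A hA
      refine card_pos.1 ?_
      have : (0 : ℝ) < A.card := by linarith
      exact_mod_cast this
    have hF : HasFam (Anti Gᶜ) (fun A => θ * δ * X.card ≤ A.card) X (1 + 1) :=
      HasFam.merge (HasFam.single subset_rfl (hne A hAc) (hYθ.trans hAc))
        (HasFam.single subset_rfl (hne B hBc) (hYθ.trans hBc)) (hA.trans hYX) (hB.trans hYX) hAB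
        (fun A' hA' B' hB' _ _ => ⟨hanti.mono hA' hB', (hanti.mono hA' hB').symm⟩)
    have h1 := hX.compl.fam_le hτ hXne (by positivity) hF
    rw [mul_div_assoc, div_self hx.ne', mul_one] at h1
    have h2 : ((1 / 2 : ℝ) ^ Q) ^ τ < (θ * δ) ^ τ := by
      refine Real.rpow_lt_rpow (by positivity) ?_ hτ
      have : 0 < θ * δ := by positivity
      linarith
    have h3 : (1 / 2 : ℝ) ≤ ((1 / 2 : ℝ) ^ Q) ^ τ := by
      rw [← Real.rpow_natCast, ← Real.rpow_mul (by norm_num)]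
      calc (1 / 2 : ℝ) = (1 / 2) ^ (1 : ℝ) := (Real.rpow_one _).symm
        _ ≤ _ := Real.rpow_le_rpow_of_exponent_ge (by norm_num) (by norm_num) hQτ
    push_cast at h1
    linarith

end Long

section Short
open Classical Finset

variable {V : Type*}

/-- The vertices outside a maximum stable set are dominated by it. -/
lemma exists_adj_of_card_eq_stab {G : SimpleGraph V} {W S : Finset V} (hS : Anti G S S)
    (hSW : S ⊆ W) (hc : S.card = stab G W) {u : V} (hu : u ∈ W) (huS : u ∉ S) :
    ∃ s ∈ S, G.Adj s u := by
  by_contra! h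
  have h1 : Anti G (insert u S) (insert u S) := by
    intro x hx y hy hxy
    rcases mem_insert.1 hx with rfl | hxS <;> rcases mem_insert.1 hy with rfl | hyS
    · exact G.irrefl hxy
    · exact h y hyS hxy.symm
    · exact h x hxS hxy
    · exact hS x hxS y hyS hxy
  have h2 := card_le_stab (insert_subset hu hSW) h1
  rw [card_insert_of_notMem huS] at h2
  omega

lemma card_le_of_triangle_free {G : SimpleGraph V} (hG : ¬ Nonempty (cycleGraph 3 ↪g G))
    (W : Finset V) : W.card ≤ stab G W + stab G W * stab G W := by
  obtain ⟨S, hSW, hS, hc⟩ := exists_stab G W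
  have hcov : W ⊆ S ∪ S.biUnion (fun s => nb G s W) := by
    intro u hu
    by_cases huS : u ∈ S
    · exact mem_union_left _ huS
    · obtain ⟨s, hs, hsu⟩ := exists_adj_of_card_eq_stab hS hSW hc hu huS
      exact mem_union_right _ (mem_biUnion.2 ⟨s, hs, mem_nb.2 ⟨hu, hsu⟩⟩)
  have hnb : ∀ s ∈ S, (nb G s W).card ≤ stab G W := by
    refine fun s _ => card_le_stab (nb_subset _ _ _) fun x hx y hy hxy => hG ?_
    have hsx := (mem_nb.1 hx).2
    have hsy := (mem_nb.1 hy).2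
    refine nonempty_cycleGraph_embedding (fun i => if i = 0 then s else if i = 1 then x else y) ?_
    intro i j hij hj
    interval_cases j <;> interval_cases i <;> simp [hsx, hsy, hxy, hsx.ne, hsy.ne, hxy.ne]
  calc W.card ≤ _ := card_le_card hcov
    _ ≤ _ := card_union_le _ _
    _ ≤ _ := Nat.add_le_add hc.le ((card_biUnion_le_card_mul _ _ _ hnb).trans_eq (by rw [hc]))

lemma card_le_of_square_free {G : SimpleGraph V} (hG : ¬ Nonempty (cycleGraph 4 ↪g G))
    (W : Finset V) :
    W.card ≤ stab G W + stab G W * stab Gᶜ W + stab G W * stab G W * stab Gᶜ W := by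
  obtain ⟨S, hSW, hS, hc⟩ := exists_stab G W
  have hcov : W ⊆ S ∪ S.biUnion (fun s => priv G S s W) ∪
      S.offDiag.biUnion (fun p => nb G p.1 W ∩ nb G p.2 W) := by
    intro u hu
    by_cases huS : u ∈ S
    · exact mem_union_left _ (mem_union_left _ huS)
    obtain ⟨s, hs, hsu⟩ := exists_adj_of_card_eq_stab hS hSW hc hu huS
    by_cases h : ∀ x ∈ S, G.Adj x u → x = s
    · exact mem_union_left _ (mem_union_right _ (mem_biUnion.2 ⟨s, hs, mem_priv.2 ⟨hu, hsu, h⟩⟩))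
    · push Not at h
      obtain ⟨x, hx, hxu, hxs⟩ := h
      refine mem_union_right _ (mem_biUnion.2 ⟨(x, s), mem_offDiag.2 ⟨hx, hs, hxs⟩, ?_⟩)
      exact mem_inter.2 ⟨mem_nb.2 ⟨hu, hxu⟩, mem_nb.2 ⟨hu, hsu⟩⟩
  have hpriv : ∀ s ∈ S, (priv G S s W).card ≤ stab Gᶜ W := by
    refine fun s hs => card_le_stab (filter_subset _ _) fun x hx y hy hxy => ?_
    obtain ⟨hxW, hsx, hx⟩ := mem_priv.1 hx
    obtain ⟨hyW, hsy, hy⟩ := mem_priv.1 hy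
    rw [compl_adj] at hxy
    have hxS : x ∉ S := fun h => hS s hs x h hsx
    have hyS : y ∉ S := fun h => hS s hs y h hsy
    have h1 : Anti G (insert x (insert y (S.erase s))) (insert x (insert y (S.erase s))) := by
      have hyx : ¬ G.Adj y x := fun h => hxy.2 h.symm
      have hx' : ∀ z ∈ S, z ≠ s → ¬ G.Adj z x := fun z hz hzs h => hzs (hx z hz h)
      have hy' : ∀ z ∈ S, z ≠ s → ¬ G.Adj z y := fun z hz hzs h => hzs (hy z hz h)
      intro u hu v hv huv
      simp only [mem_insert, mem_erase] at hu hv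
      rcases hu with rfl | rfl | hu <;> rcases hv with rfl | rfl | hv
      · exact G.irrefl huv
      · exact hxy.2 huv
      · exact hx' v hv.2 hv.1 huv.symm
      · exact hyx huv
      · exact G.irrefl huv
      · exact hy' v hv.2 hv.1 huv.symm
      · exact hx' u hu.2 hu.1 huv
      · exact hy' u hu.2 hu.1 huv
      · exact hS u hu.2 v hv.2 huv
    have h2 := card_le_stab (A := W)
      (insert_subset hxW (insert_subset hyW ((erase_subset _ _).trans hSW))) h1
    rw [card_insert_of_notMem (by simp [hxy.1, hxS]), card_insert_of_notMem (by simp [hyS]),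
      card_erase_of_mem hs] at h2
    have := card_pos.2 ⟨s, hs⟩
    omega
  have hcommon : ∀ p ∈ S.offDiag, (nb G p.1 W ∩ nb G p.2 W).card ≤ stab Gᶜ W := by
    rintro ⟨s, t⟩ hp
    obtain ⟨hs, ht, hst⟩ := mem_offDiag.1 hp
    refine card_le_stab (inter_subset_left.trans (nb_subset _ _ _)) fun x hx y hy hxy => hG ?_
    simp only [mem_inter, mem_nb] at hx hy hs ht hst
    rw [compl_adj] at hxy
    have hsx := hx.1.2
    have htx := hx.2.2
    have hsy := hy.1.2
    have hty := hy.2.2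
    refine nonempty_cycleGraph_embedding
      (fun i => if i = 0 then s else if i = 1 then x else if i = 2 then t else y) ?_
    intro i j hij hj
    interval_cases j <;> interval_cases i <;>
      simp [hsx, hsx.ne, htx.symm, htx.ne', hsy, hsy.ne, hty, hty.ne, hst, hxy, hS s hs t ht]
  calc W.card ≤ _ := card_le_card hcov
    _ ≤ _ := card_union_le _ _
    _ ≤ _ := Nat.add_le_add_right (card_union_le _ _) _
    _ ≤ _ := by
      gcongr
      · exact hc.le
      · exact (card_biUnion_le_card_mul _ _ _ hpriv).trans_eq (by rw [hc])
      · refine (card_biUnion_le_card_mul _ _ _ hcommon).trans ?_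
        gcongr
        rw [offDiag_card, hc]
        exact Nat.sub_le _ _

lemma card_le_pow_five {G : SimpleGraph V} {k : ℕ} (hk : k = 3 ∨ k = 4)
    (hG : ¬ Nonempty (cycleGraph k ↪g G)) {W : Finset V} (hW : W.Nonempty) :
    W.card ≤ max (stab G W) (stab Gᶜ W) ^ 5 := by
  have hα : stab G W ≤ max (stab G W) (stab Gᶜ W) := le_max_left _ _
  have hω : stab Gᶜ W ≤ max (stab G W) (stab Gᶜ W) := le_max_right _ _
  have h1 : 1 ≤ max (stab G W) (stab Gᶜ W) := (stab_pos G hW).trans hα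
  have hκ : kap G W ≤ max (stab G W) (stab Gᶜ W) * max (stab G W) (stab Gᶜ W) :=
    Nat.mul_le_mul hα hω
  generalize max (stab G W) (stab Gᶜ W) = M at *
  rcases h1.eq_or_lt with rfl | h2
  · by_contra! h
    have := two_le_kap G (A := W) (by omega)
    omega
  have hle : W.card ≤ M + M * M + M * M * M := by
    rcases hk with rfl | rfl
    · exact ((card_le_of_triangle_free hG W).trans
        (Nat.add_le_add hα (Nat.mul_le_mul hα hα))).trans (Nat.le_add_right _ _)
    · exact (card_le_of_square_free hG W).trans (by gcongr)
  have h3 : M ≤ M * M := Nat.le_mul_self M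
  have h4 : M * M ≤ M * M * M := Nat.le_mul_of_pos_right _ h1
  have h5 : 4 * (M * M * M) ≤ M ^ 5 := by
    rw [show M ^ 5 = M * M * (M * M * M) by ring]
    gcongr
    nlinarith
  omega

lemma stab_univ_le_cliqueNum_compl [Fintype V] (G : SimpleGraph V) :
    stab G univ ≤ Gᶜ.cliqueNum := by
  obtain ⟨S, -, hS, hc⟩ := exists_stab G univ
  rw [← hc]
  have hcl : Gᶜ.IsClique S := fun x hx y hy hxy => (compl_adj _ _ _).2 ⟨hxy, hS x hx y hy⟩
  exact hcl.card_le_cliqueNum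

lemma max_stab_univ_le [Fintype V] (G : SimpleGraph V) :
    max (stab G univ) (stab Gᶜ univ) ≤ max (alphaNum G) (omegaNum G) :=
  max_le_max (stab_univ_le_cliqueNum_compl G)
    ((stab_univ_le_cliqueNum_compl Gᶜ).trans_eq (by rw [compl_compl, omegaNum]))

/-- Polynomial bounds on the order of a graph give polynomial lower bounds. -/
lemma rpow_le_of_le_pow {n M p : ℕ} {τ : ℝ} (hp : p ≠ 0) (h : (n : ℝ) ^ τ ≤ (M : ℝ) ^ p) :
    (n : ℝ) ^ (τ / p) ≤ M := by
  have hn : (0 : ℝ) ≤ n := Nat.cast_nonneg n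
  have hM : (0 : ℝ) ≤ M := Nat.cast_nonneg M
  rw [div_eq_mul_inv, Real.rpow_mul hn]
  calc ((n : ℝ) ^ τ) ^ (p : ℝ)⁻¹ ≤ ((M : ℝ) ^ p) ^ (p : ℝ)⁻¹ := by gcongr
    _ = M := Real.pow_rpow_inv_natCast hM hp

end Short

/-- The set consisting of the cycle `C_k` together with the complements of all cycles of
length at least `ℓ` has the Erdős–Hajnal property. -/
theorem stmt_5 (k ℓ : ℕ) (hk : 3 ≤ k) (hℓ : 3 ≤ ℓ) :
    ∃ τ : ℝ, 0 < τ ∧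
      ∀ (V : Type) [Fintype V] (G : SimpleGraph V),
        ¬ Nonempty (cycleGraph k ↪g G) →
        (∀ m : ℕ, ℓ ≤ m → ¬ Nonempty ((cycleGraph m)ᶜ ↪g G)) →
        (Fintype.card V : ℝ) ^ τ ≤ ((max (alphaNum G) (omegaNum G) : ℕ) : ℝ) := by
  suffices h : ∃ (p : ℕ) (τ : ℝ), p ≠ 0 ∧ 0 < τ ∧ ∀ (V : Type) [Fintype V] (G : SimpleGraph V),
      ¬ Nonempty (cycleGraph k ↪g G) → (∀ m : ℕ, ℓ ≤ m → ¬ Nonempty ((cycleGraph m)ᶜ ↪g G)) →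
      Nonempty V → (Fintype.card V : ℝ) ^ τ ≤
        ((max (stab G Finset.univ) (stab Gᶜ Finset.univ) : ℕ) : ℝ) ^ p by
    obtain ⟨p, τ, hp, hτ, h⟩ := h
    refine ⟨τ / p, by positivity, fun V _ G hG hG' => ?_⟩
    rcases isEmpty_or_nonempty V with hV | hV
    · rw [Fintype.card_eq_zero, Nat.cast_zero, Real.zero_rpow (by positivity)]
      positivity
    · exact (rpow_le_of_le_pow hp (h V G hG hG' hV)).trans (by exact_mod_cast max_stab_univ_le G)
  rcases lt_or_ge k 5 with hk5 | hk5
  · refine ⟨5, 1, by norm_num, one_pos, fun V _ G hG _ _ => ?_⟩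
    rw [Real.rpow_one]
    exact_mod_cast card_le_pow_five (by omega) hG Finset.univ_nonempty
  · obtain ⟨τ, hτ, h⟩ := exists_rpow_le_kap hk5 (by omega : 2 ≤ ℓ)
    refine ⟨2, τ, by norm_num, hτ, fun V _ G hG hG' _ => ?_⟩
    refine (h V G hG (fun m hm ⟨f⟩ => hG' m hm ⟨?_⟩) _ Finset.univ_nonempty).trans ?_
    · rw [← compl_compl G]
      exact Embedding.complEquiv f
    · rw [sq]
      exact_mod_cast Nat.mul_le_mul (le_max_left _ _) (le_max_right _ _)
end

section
/- For all real δ, ε > 0 with ε < 1/20, there exists a real τ > 0 with the following property. Let G be a τ-critical graph, and let X ⊆ V(G) with |X| ≥ δ|G|, such that the induced subgraph G[X] has maximum degree at most εδ|G|. Then there is an integer t ≥ 1/(400ε) and a (t, δ|G|/(400ε t²))-comb ((a_i, B_i) : 1 ≤ i ≤ t) of G[X] such that {a_1, …, a_t} is a stable set, and there is a vertex v ∈ X adjacent to each of a_1, …, a_t and with no neighbours in B_1 ∪ ⋯ ∪ B_t. -/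
open SimpleGraph

/-- A graph `G` is `τ`-critical if `κ(G) < |G|^τ` but every proper induced subgraph `G'`
satisfies `κ(G') ≥ |G'|^τ`. -/
def TauCritical {V : Type*} [Fintype V] (τ : ℝ) (G : SimpleGraph V) : Prop :=
  (kappaNum G : ℝ) < (Fintype.card V : ℝ) ^ τ ∧
  ∀ X : Finset V, X ≠ Finset.univ →
    (X.card : ℝ) ^ τ ≤ (kappaNum (G.induce (X : Set V)) : ℝ)

/-- A `(t, k)`-comb in `G`: distinct vertices `a i`, pairwise disjoint sets `B i` avoiding
all the `a j`'s, with `a i` adjacent to all of `B i`, `a i` with no neighbour in `B j` for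
`j ≠ i`, and each `|B i| ≥ k`. -/
def IsComb {V : Type*} (G : SimpleGraph V) {t : ℕ} (k : ℝ)
    (a : Fin t → V) (B : Fin t → Finset V) : Prop :=
  Function.Injective a ∧
  Pairwise (Function.onFun Disjoint B) ∧
  (∀ i j, a i ∉ B j) ∧
  (∀ i, ∀ v ∈ B i, G.Adj (a i) v) ∧
  (∀ i j, i ≠ j → ∀ v ∈ B j, ¬ G.Adj (a i) v) ∧
  (∀ i, k ≤ ((B i).card : ℝ))

/-- The vertices of `B` whose only neighbour in `I` is `i`. -/
def privateNeighbors {V : Type*} [DecidableEq V] (G : SimpleGraph V) [DecidableRel G.Adj]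
    (I B : Finset V) (i : V) : Finset V :=
  B.filter fun b => G.Adj i b ∧ ∀ j ∈ I, G.Adj j b → j = i

section Comb

variable {V : Type*} [DecidableEq V] (G : SimpleGraph V) [DecidableRel G.Adj]

lemma privateNeighbors_mono {I B C : Finset V} (h : B ⊆ C) (i : V) :
    privateNeighbors G I B i ⊆ privateNeighbors G I C i :=
  Finset.filter_subset_filter _ h

/-- Greedily choose vertices of `A` with at least `2D/3` neighbours not yet covered. The set `I`
collects the chosen vertices which keep many private neighbours, and `m` counts the others. -/
lemma exists_greedy_cover (A : Finset V) {D : ℕ} (hD : 0 < D) (B : Finset V)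
    (hB : ∀ a ∈ A, (B.filter (G.Adj a)).card ≤ D) :
    ∃ I ⊆ A, ∃ m : ℕ, ∃ B' ⊆ B,
      (∀ i ∈ I, D ≤ 3 * (privateNeighbors G I B i).card) ∧
      (2 * I.card + m) * D ≤ 3 * ∑ i ∈ I, (B.filter (G.Adj i)).card ∧
      (∀ a ∈ A, 3 * (B'.filter (G.Adj a)).card < 2 * D) ∧
      B.card ≤ B'.card + (I.card + m) * D := by
  induction B using Finset.strongInduction with
  | H B ih =>
    by_cases hbig : ∃ a ∈ A, 2 * D ≤ 3 * (B.filter (G.Adj a)).card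
    swap
    · push Not at hbig
      exact ⟨∅, by simp, 0, B, subset_rfl, by simp, by simp, hbig, by simp⟩
    obtain ⟨a, haA, ha⟩ := hbig
    set C := B.filter (G.Adj a) with hC
    set B₁ := B \ C with hB₁
    have hCB : C ⊆ B := Finset.filter_subset _ _
    have hCne : C.Nonempty := by
      rw [← Finset.card_pos]
      omega
    have hss : B₁ ⊂ B := Finset.sdiff_ssubset hCB hCne
    obtain ⟨I, hIA, m, B', hB', hpriv, hsum, hsmall, hcard⟩ := ih B₁ hss fun x hx =>
      (Finset.card_le_card (Finset.filter_subset_filter _ hss.subset)).trans (hB x hx)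
    have hsplit : ∀ x, (B.filter (G.Adj x)).card
        = (B₁.filter (G.Adj x)).card + (C.filter (G.Adj x)).card := by
      intro x
      rw [← Finset.card_union_of_disjoint, ← Finset.filter_union, hB₁,
        Finset.sdiff_union_of_subset hCB]
      exact Finset.disjoint_filter_filter Finset.sdiff_disjoint
    have hsumsplit : ∑ i ∈ I, (B.filter (G.Adj i)).card
        = ∑ i ∈ I, (B₁.filter (G.Adj i)).card + ∑ i ∈ I, (C.filter (G.Adj i)).card := by
      rw [← Finset.sum_add_distrib]
      exact Finset.sum_congr rfl fun x _ => hsplit x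
    have hcardB : B.card = B₁.card + C.card := by
      rw [hB₁, Finset.card_sdiff_add_card_eq_card hCB]
    have hCD : C.card ≤ D := hB a haA
    have haB₁ : ∀ b ∈ B₁, ¬ G.Adj a b := by
      intro b hb hab
      simp only [hB₁, hC, Finset.mem_sdiff, Finset.mem_filter, not_and] at hb
      exact hb.2 hb.1 hab
    by_cases hfew : 3 * ∑ i ∈ I, (C.filter (G.Adj i)).card ≤ D
    · have haI : a ∉ I := by
        intro haI
        have h0 := hpriv a haI
        have : privateNeighbors G I B₁ a = ∅ := by
          refine Finset.filter_eq_empty_iff.2 fun b hb h => haB₁ b hb h.1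
        rw [this] at h0
        simp at h0
        omega
      refine ⟨insert a I, Finset.insert_subset haA hIA, m, B', hB'.trans hss.subset, ?_, ?_,
        hsmall, ?_⟩
      · intro i hi
        rcases Finset.mem_insert.1 hi with rfl | hiI
        · have hsub : C \ I.biUnion (fun j => C.filter (G.Adj j))
              ⊆ privateNeighbors G (insert i I) B i := by
            intro b hb
            simp only [Finset.mem_sdiff, Finset.mem_biUnion, Finset.mem_filter, not_exists,
              not_and] at hb
            refine Finset.mem_filter.2 ⟨hCB hb.1, (Finset.mem_filter.1 hb.1).2, ?_⟩
            intro j hj hjb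
            rcases Finset.mem_insert.1 hj with rfl | hj
            · rfl
            · exact absurd hjb (hb.2 j hj hb.1)
          have h1 := Finset.card_le_card hsub
          have h2 := Finset.le_card_sdiff (I.biUnion (fun j => C.filter (G.Adj j))) C
          have h3 : (I.biUnion (fun j => C.filter (G.Adj j))).card
              ≤ ∑ j ∈ I, (C.filter (G.Adj j)).card := Finset.card_biUnion_le
          omega
        · refine (hpriv i hiI).trans (Nat.mul_le_mul_left 3 (Finset.card_le_card ?_))
          intro b hb
          obtain ⟨hb1, hb2, hb3⟩ := Finset.mem_filter.1 hb
          refine Finset.mem_filter.2 ⟨hss.subset hb1, hb2, ?_⟩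
          intro j hj hjb
          rcases Finset.mem_insert.1 hj with rfl | hj
          · exact absurd hjb (haB₁ b hb1)
          · exact hb3 j hj hjb
      · rw [Finset.sum_insert haI, Finset.card_insert_of_notMem haI, hsumsplit, ← hC]
        have hexp : (2 * (I.card + 1) + m) * D = (2 * I.card + m) * D + 2 * D := by ring
        omega
      · rw [Finset.card_insert_of_notMem haI]
        nlinarith
    · refine ⟨I, hIA, m + 1, B', hB'.trans hss.subset, ?_, ?_, hsmall, ?_⟩
      · exact fun i hi => (hpriv i hi).trans (Nat.mul_le_mul_left 3
          (Finset.card_le_card (privateNeighbors_mono G hss.subset i)))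
      · rw [hsumsplit]
        nlinarith
      · nlinarith

/-- If no nonempty `I ⊆ A` is such that each `i ∈ I` has at least `Γ / |I|²` private neighbours
in `B`, then the set `B` covered by `A` is small. -/
lemma card_le_of_no_private (A : Finset V) {Γ : ℝ} (B : Finset V)
    (hcov : ∀ b ∈ B, ∃ a ∈ A, G.Adj a b)
    (hno : ∀ I ⊆ A, I.Nonempty → ∃ i ∈ I,
      ((privateNeighbors G I B i).card : ℝ) * (I.card : ℝ) ^ 2 < Γ) :
    ∀ Δ : ℝ, (∀ a ∈ A, ((B.filter (G.Adj a)).card : ℝ) ≤ Δ) →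
      (B.card : ℝ) ≤ 18.9 * √(Γ * Δ) := by
  induction B using Finset.strongInduction with
  | H B ih =>
    intro Δ hΔ
    rcases B.eq_empty_or_nonempty with rfl | ⟨b₀, hb₀⟩
    · simp only [Finset.card_empty, Nat.cast_zero]
      positivity
    obtain ⟨a₀, ha₀, hab₀⟩ := hcov b₀ hb₀
    have hΓ : 0 < Γ := by
      obtain ⟨i, -, hi⟩ := hno {a₀} (by simpa using ha₀) (by simp)
      exact lt_of_le_of_lt (by positivity) hi
    obtain ⟨a, haA, hmax⟩ := A.exists_max_image (fun a => (B.filter (G.Adj a)).card) ⟨a₀, ha₀⟩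
    set D := (B.filter (G.Adj a)).card with hDdef
    have hD : 0 < D := by
      refine lt_of_lt_of_le (Finset.card_pos.2 ⟨b₀, ?_⟩) (hmax a₀ ha₀)
      simp [hb₀, hab₀]
    obtain ⟨I, hIA, m, B', hB', hpriv, hsum, hsmall, hcard⟩ :=
      exists_greedy_cover G A hD B hmax
    have hmI : m ≤ I.card := by
      have h1 : ∑ i ∈ I, (B.filter (G.Adj i)).card ≤ I.card * D := by
        simpa using Finset.sum_le_card_nsmul I _ D fun i hi => hmax i (hIA hi)
      have h2 : (2 * I.card + m) * D ≤ (3 * I.card) * D := by nlinarith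
      have := Nat.le_of_mul_le_mul_right h2 hD
      omega
    have hss : B' ⊂ B := by
      refine lt_of_le_of_ne hB' ?_
      rintro rfl
      have := hsmall a haA
      omega
    have hrec : (B'.card : ℝ) ≤ 18.9 * √(Γ * (2 / 3 * D)) := by
      refine ih B' hss (fun b hb => hcov b (hB' hb)) ?_ _ ?_
      · intro J hJ hJne
        obtain ⟨i, hi, h⟩ := hno J hJ hJne
        refine ⟨i, hi, lt_of_le_of_lt ?_ h⟩
        have := Finset.card_le_card (privateNeighbors_mono G (I := J) hB' i)
        gcongr
      · intro x hx
        have : (3 * (B'.filter (G.Adj x)).card : ℝ) < 2 * D := by exact_mod_cast hsmall x hx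
        linarith
    have hcov' : 2 * (I.card : ℝ) * D ≤ √(12 * (Γ * D)) := by
      apply Real.le_sqrt_of_sq_le
      rcases I.eq_empty_or_nonempty with rfl | hIne
      · simp
        positivity
      obtain ⟨i, hi, h⟩ := hno I hIA hIne
      have h3 : (D : ℝ) ≤ 3 * (privateNeighbors G I B i).card := by exact_mod_cast hpriv i hi
      have h4 : (D : ℝ) * (I.card : ℝ) ^ 2 ≤ 3 * Γ := by
        have : (D : ℝ) * (I.card : ℝ) ^ 2
            ≤ 3 * (privateNeighbors G I B i).card * (I.card : ℝ) ^ 2 := by gcongr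
        linarith
      have h5 : 4 * (D : ℝ) * ((D : ℝ) * (I.card : ℝ) ^ 2) ≤ 4 * (D : ℝ) * (3 * Γ) := by gcongr
      linarith
    have hcardR : (B.card : ℝ) ≤ B'.card + 2 * I.card * D := by
      have : B.card ≤ B'.card + 2 * I.card * D := by
        refine hcard.trans ?_
        gcongr
        omega
      exact_mod_cast this
    have hs1 : √(12 * (Γ * D)) ≤ 3.4642 * √(Γ * D) := by
      rw [Real.sqrt_mul (by norm_num)]
      gcongr
      rw [Real.sqrt_le_left (by norm_num)]
      norm_num
    have hs2 : √(Γ * (2 / 3 * D)) ≤ 0.8165 * √(Γ * D) := by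
      rw [show Γ * (2 / 3 * D) = (2 / 3) * (Γ * D) by ring, Real.sqrt_mul (by norm_num)]
      gcongr
      rw [Real.sqrt_le_left (by norm_num)]
      norm_num
    have hs3 : √(Γ * D) ≤ √(Γ * Δ) := by
      gcongr
      exact hΔ a haA
    have hs4 : 0 ≤ √(Γ * D) := Real.sqrt_nonneg _
    linarith

end Comb

section Critical

variable {V : Type*} [Fintype V] {G : SimpleGraph V}

lemma card_le_alphaNum {S : Finset V} (hS : ∀ x ∈ S, ∀ y ∈ S, ¬ G.Adj x y) :
    S.card ≤ alphaNum G := by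
  refine SimpleGraph.IsClique.card_le_cliqueNum (G := Gᶜ) (tc := ?_)
  intro x hx y hy hxy
  exact (SimpleGraph.compl_adj _ _ _).2 ⟨hxy, hS x hx y hy⟩

lemma cliqueNum_induce_le (Y : Finset V) :
    (G.induce (Y : Set V)).cliqueNum ≤ G.cliqueNum := by
  obtain ⟨K, hK⟩ := (G.induce (Y : Set V)).exists_isNClique_cliqueNum
  have h := hK.map (f := Function.Embedding.subtype _)
  rw [← h.card_eq]
  refine SimpleGraph.IsClique.card_le_cliqueNum (tc := h.isClique.mono ?_)
  exact SimpleGraph.map_comap_le _ _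

lemma TauCritical.exists_stable {τ : ℝ} (hG : TauCritical τ G) {Y : Finset V}
    (hY : Y ≠ Finset.univ) :
    ∃ S ⊆ Y, (∀ x ∈ S, ∀ y ∈ S, ¬ G.Adj x y) ∧
      (Y.card : ℝ) ^ τ ≤ (S.card : ℝ) * omegaNum G := by
  obtain ⟨K, hK⟩ := (G.induce (Y : Set V))ᶜ.exists_isNClique_cliqueNum
  refine ⟨K.map (Function.Embedding.subtype _), ?_, ?_, ?_⟩
  · intro x hx
    obtain ⟨z, -, rfl⟩ := Finset.mem_map.1 hx
    exact z.2
  · intro x hx y hy hxy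
    obtain ⟨x, hxK, rfl⟩ := Finset.mem_map.1 hx
    obtain ⟨y, hyK, rfl⟩ := Finset.mem_map.1 hy
    have hne : x ≠ y := by
      rintro rfl
      exact G.loopless.irrefl _ hxy
    exact ((SimpleGraph.compl_adj _ _ _).1 (hK.isClique hxK hyK hne)).2 hxy
  · refine (hG.2 Y hY).trans ?_
    rw [Finset.card_map, hK.card_eq, kappaNum]
    push_cast
    have : omegaNum (G.induce (Y : Set V)) ≤ omegaNum G := cliqueNum_induce_le Y
    unfold alphaNum
    gcongr

lemma TauCritical.stable_lt {τ : ℝ} (hG : TauCritical τ G) {S : Finset V}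
    (hS : ∀ x ∈ S, ∀ y ∈ S, ¬ G.Adj x y) :
    (S.card : ℝ) * omegaNum G < (Fintype.card V : ℝ) ^ τ := by
  refine lt_of_le_of_lt ?_ hG.1
  rw [kappaNum]
  push_cast
  have := card_le_alphaNum hS
  gcongr

lemma one_le_cliqueNum [Nonempty V] (G : SimpleGraph V) : 1 ≤ G.cliqueNum := by
  obtain ⟨x⟩ := ‹Nonempty V›
  have h : G.IsClique ({x} : Finset V) := by simp
  simpa using h.card_le_cliqueNum

lemma two_le_cliqueNum {x y : V} (h : G.Adj x y) : 2 ≤ G.cliqueNum := by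
  classical
  have hc : G.IsClique ({x, y} : Finset V) := by
    simpa [SimpleGraph.isClique_pair] using fun _ => h
  simpa [Finset.card_pair h.ne] using hc.card_le_cliqueNum

lemma two_le_kappaNum [Nontrivial V] (G : SimpleGraph V) : 2 ≤ kappaNum G := by
  obtain ⟨x, y, hxy⟩ := exists_pair_ne V
  have h1 : 1 ≤ alphaNum G := one_le_cliqueNum Gᶜ
  have h2 : 1 ≤ omegaNum G := one_le_cliqueNum G
  unfold kappaNum
  by_cases h : G.Adj x y
  · have : 2 ≤ omegaNum G := two_le_cliqueNum h
    nlinarith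
  · have : 2 ≤ alphaNum G := two_le_cliqueNum ((SimpleGraph.compl_adj _ _ _).2 ⟨hxy, h⟩)
    nlinarith

lemma TauCritical.two_lt_card_rpow {τ : ℝ} (hτ : 0 < τ) (hG : TauCritical τ G) :
    2 < (Fintype.card V : ℝ) ^ τ := by
  have hpos : 0 < Fintype.card V := by
    by_contra h
    have h0 : Fintype.card V = 0 := by omega
    have := hG.1
    rw [h0, Nat.cast_zero, Real.zero_rpow hτ.ne'] at this
    exact absurd this (not_lt.2 (Nat.cast_nonneg _))
  have : Nonempty V := Fintype.card_pos_iff.1 hpos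
  have hne1 : Fintype.card V ≠ 1 := by
    intro h1
    have := hG.1
    rw [h1, Nat.cast_one, Real.one_rpow] at this
    have h2 : kappaNum G < 1 := by exact_mod_cast this
    have h3 : 1 ≤ kappaNum G :=
      Nat.mul_pos (one_le_cliqueNum Gᶜ) (one_le_cliqueNum G)
    omega
  have : Nontrivial V := Fintype.one_lt_card_iff_nontrivial.1 (by omega)
  refine lt_of_le_of_lt ?_ hG.1
  exact_mod_cast two_le_kappaNum G

end Critical

section Main

lemma stable_union {V : Type*} [DecidableEq V] {G : SimpleGraph V} {S T : Finset V} (hS : ∀ x ∈ S, ∀ y ∈ S, ¬ G.Adj x y)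
    (hT : ∀ x ∈ T, ∀ y ∈ T, ¬ G.Adj x y) (hST : ∀ x ∈ S, ∀ y ∈ T, ¬ G.Adj x y) :
    ∀ x ∈ S ∪ T, ∀ y ∈ S ∪ T, ¬ G.Adj x y := by
  intro x hx y hy hxy
  rcases Finset.mem_union.1 hx with hx | hx <;> rcases Finset.mem_union.1 hy with hy | hy
  · exact hS x hx y hy hxy
  · exact hST x hx y hy hxy
  · exact hST y hy x hx hxy.symm
  · exact hT x hx y hy hxy

variable {V : Type*} [DecidableEq V] {G : SimpleGraph V} [DecidableRel G.Adj]

/-- A stable set `I` of neighbours of `v`, each with many private non-neighbours of `v`, yields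
the desired comb. -/
lemma exists_comb_of_private {δ ε n : ℝ} (hδ : 0 < δ) (hε : 0 < ε) (hn : 0 < n)
    {X : Finset V} (hdeg : ∀ v ∈ X, ((X.filter (G.Adj v)).card : ℝ) ≤ ε * δ * n)
    {v : V} (hv : v ∈ X) {I : Finset V} (hI : I ⊆ X.filter (G.Adj v))
    (hst : ∀ x ∈ I, ∀ y ∈ I, ¬ G.Adj x y) (hne : I.Nonempty)
    (hpriv : ∀ i ∈ I, δ * n / (400 * ε) ≤
      ((privateNeighbors G I (X.filter fun w => ¬ G.Adj v w) i).card : ℝ) * (I.card : ℝ) ^ 2) :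
    ∃ t : ℕ, 1 / (400 * ε) ≤ (t : ℝ) ∧
      ∃ a : Fin t → V, ∃ Bs : Fin t → Finset V,
        IsComb G (δ * n / (400 * ε * (t : ℝ) ^ 2)) a Bs ∧
        (∀ i, a i ∈ X) ∧ (∀ i, Bs i ⊆ X) ∧
        (∀ i j, i ≠ j → ¬ G.Adj (a i) (a j)) ∧
        ∃ v ∈ X, (∀ i, G.Adj v (a i)) ∧ (∀ i, ∀ w ∈ Bs i, ¬ G.Adj v w) := by
  have hIX : ∀ i ∈ I, i ∈ X := fun i hi => (Finset.mem_filter.1 (hI hi)).1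
  have hIv : ∀ i ∈ I, G.Adj v i := fun i hi => (Finset.mem_filter.1 (hI hi)).2
  have hmem : ∀ {i w}, w ∈ privateNeighbors G I (X.filter fun w => ¬ G.Adj v w) i →
      w ∈ X ∧ ¬ G.Adj v w ∧ G.Adj i w ∧ ∀ j ∈ I, G.Adj j w → j = i := by
    intro i w hw
    obtain ⟨h1, h2⟩ := Finset.mem_filter.1 hw
    exact ⟨(Finset.mem_filter.1 h1).1, (Finset.mem_filter.1 h1).2, h2⟩
  have hcard : 0 < (I.card : ℝ) := by exact_mod_cast hne.card_pos
  let a : Fin I.card → V := fun k => (I.equivFin.symm k : V)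
  have haI : ∀ k, a k ∈ I := fun k => (I.equivFin.symm k).2
  have hinj : Function.Injective a := fun x y h => I.equivFin.symm.injective (Subtype.ext h)
  refine ⟨I.card, ?_, a, fun k => privateNeighbors G I (X.filter fun w => ¬ G.Adj v w) (a k),
    ⟨hinj, ?_, ?_, ?_, ?_, ?_⟩, fun k => hIX _ (haI k), fun k w hw => (hmem hw).1,
    fun i j _ => hst _ (haI i) _ (haI j), v, hv, fun k => hIv _ (haI k),
    fun k w hw => (hmem hw).2.1⟩
  · obtain ⟨i, hi⟩ := hne
    have h1 : ((privateNeighbors G I (X.filter fun w => ¬ G.Adj v w) i).card : ℝ)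
        ≤ ε * δ * n := by
      refine le_trans ?_ (hdeg i (hIX i hi))
      exact_mod_cast Finset.card_le_card fun w hw =>
        Finset.mem_filter.2 ⟨(hmem hw).1, (hmem hw).2.2.1⟩
    have h2 : δ * n / (400 * ε) ≤ ε * δ * n * (I.card : ℝ) ^ 2 :=
      (hpriv i hi).trans (by gcongr)
    rw [div_le_iff₀ (by positivity)] at h2 ⊢
    have h3 : (δ * n) * 1 ≤ (δ * n) * (20 * ε * I.card) ^ 2 := by linarith
    have h4 : 1 ≤ (20 * ε * I.card) ^ 2 := le_of_mul_le_mul_left h3 (by positivity)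
    have h5 : 1 ≤ 20 * ε * I.card := by
      by_contra h
      have : (20 * ε * I.card) ^ 2 < 1 := pow_lt_one₀ (by positivity) (by linarith) (by norm_num)
      linarith
    linarith
  · intro i j hij
    refine Finset.disjoint_left.2 fun w hwi hwj => hij (hinj ?_)
    exact (hmem hwj).2.2.2 _ (haI i) (hmem hwi).2.2.1
  · exact fun i j h => (hmem h).2.1 (hIv _ (haI i))
  · exact fun i w hw => (hmem hw).2.2.1
  · exact fun i j hij w hw h => hij (hinj ((hmem hw).2.2.2 _ (haI i) h))
  · intro k
    rw [← div_div, div_le_iff₀ (by positivity)]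
    exact hpriv _ (haI k)

/-- The numerical estimate comparing the number of vertices removed in one step of the greedy
construction of a large stable set with the gain in that step. -/
lemma removal_cost_le {δ c n τ d : ℝ} (hδ : 0 < δ) (hc : 0 ≤ c) (hn : 0 < n)
    (hτ4 : τ ≤ 1 / 4) (hd : 1 ≤ d) (hdn : d ≤ n)
    (hdq : d ≤ (δ / (2 + 18.9 * √c)) ^ 4 * n) :
    (1 + d + 18.9 * √(c * n * d)) * n ^ τ ≤ δ * n * d ^ τ := by
  obtain ⟨y, hy0, hy⟩ : ∃ y : ℝ, 0 < y ∧ d = y ^ 4 * n := by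
    refine ⟨(d / n) ^ (1 / 4 : ℝ), by positivity, ?_⟩
    rw [← Real.rpow_natCast, ← Real.rpow_mul (by positivity)]
    norm_num
    field_simp
  have hM : 0 < 2 + 18.9 * √c := by positivity
  have hy1 : y ≤ 1 := by
    have : y ^ 4 ≤ 1 := by
      rw [hy] at hdn
      nlinarith
    exact (pow_le_one_iff_of_nonneg hy0.le (by norm_num)).1 this
  have hyδ : (2 + 18.9 * √c) * y ≤ δ := by
    have h1 : y ^ 4 ≤ (δ / (2 + 18.9 * √c)) ^ 4 := by
      rw [hy] at hdq
      exact le_of_mul_le_mul_right hdq hn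
    have h2 := (pow_le_pow_iff_left₀ hy0.le (by positivity) (by norm_num)).1 h1
    rw [le_div_iff₀ hM] at h2
    linarith
  have hsqrt : √(c * n * d) = √c * (y ^ 2 * n) := by
    rw [hy, show c * n * (y ^ 4 * n) = c * (y ^ 2 * n) ^ 2 by ring, Real.sqrt_mul hc,
      Real.sqrt_sq (by positivity)]
  have hrem : 1 + d + 18.9 * √(c * n * d) ≤ δ * n * y := by
    have h1 : d ≤ y ^ 2 * n := by
      rw [hy]
      have : y ^ 4 ≤ y ^ 2 := pow_le_pow_of_le_one hy0.le hy1 (by norm_num)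
      gcongr
    rw [hsqrt]
    have h2 : (2 + 18.9 * √c) * y * (y * n) ≤ δ * (y * n) := by gcongr
    linarith
  have hyτ : y ≤ (y ^ 4) ^ τ := by
    rw [← Real.rpow_natCast, ← Real.rpow_mul hy0.le]
    nth_rewrite 1 [← Real.rpow_one y]
    apply Real.rpow_le_rpow_of_exponent_ge hy0 hy1
    push_cast
    linarith
  calc (1 + d + 18.9 * √(c * n * d)) * n ^ τ ≤ δ * n * y * n ^ τ := by gcongr
    _ ≤ δ * n * (y ^ 4) ^ τ * n ^ τ := by gcongr
    _ = δ * n * d ^ τ := by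
      rw [hy, Real.mul_rpow (by positivity) hn.le]
      ring

variable [Fintype V]

/-- In a critical graph, a set with few edges contains a vertex with a stable set of neighbours,
all of which have many private neighbours. -/
lemma TauCritical.exists_private {δ ε τ q : ℝ} (hδ : 0 < δ) (hε : 0 < ε)
    (hε20 : ε < 1 / 20) (hτ : 0 < τ) (hτ4 : τ ≤ 1 / 4) (hq : 0 < q) (hq1 : q ≤ δ ^ 2)
    (hq2 : q ≤ 0.005 * δ) (hq3 : q ≤ (δ / (2 + 18.9 * √(δ / (400 * ε)))) ^ 4)
    (hqτ : 1 / 2 ≤ q ^ τ) (hG : TauCritical τ G) {X : Finset V}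
    (hX : δ * (Fintype.card V : ℝ) ≤ X.card)
    (hdeg : ∀ v ∈ X, ((X.filter (G.Adj v)).card : ℝ) ≤ ε * δ * (Fintype.card V : ℝ)) :
    ∃ v ∈ X, ∃ I ⊆ X.filter (G.Adj v), (∀ x ∈ I, ∀ y ∈ I, ¬ G.Adj x y) ∧ I.Nonempty ∧
      ∀ i ∈ I, δ * (Fintype.card V : ℝ) / (400 * ε) ≤
        ((privateNeighbors G I (X.filter fun w => ¬ G.Adj v w) i).card : ℝ)
          * (I.card : ℝ) ^ 2 := by
  by_contra! hno
  have hn2 := hG.two_lt_card_rpow hτ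
  have hlt := fun S => hG.stable_lt (S := S)
  set n : ℝ := (Fintype.card V : ℝ) with hn
  have hn0 : 0 < n := by
    refine lt_of_le_of_ne (Nat.cast_nonneg _) fun h => ?_
    rw [← h, Real.zero_rpow hτ.ne'] at hn2
    linarith
  have hV : 0 < Fintype.card V := by
    rw [hn] at hn0
    exact_mod_cast hn0
  have hqn : 1 < q * n := by
    by_contra! h
    have h1 : (q * n) ^ τ ≤ 1 := Real.rpow_le_one (by positivity) h hτ.le
    rw [Real.mul_rpow hq.le hn0.le] at h1
    nlinarith
  have hω : (1 : ℝ) ≤ omegaNum G := by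
    have : Nonempty V := Fintype.card_pos_iff.1 hV
    exact_mod_cast one_le_cliqueNum G
  have hcover : ∀ v ∈ X, ∀ Y ⊆ X, ∀ S ⊆ Y.filter (G.Adj v), (∀ x ∈ S, ∀ y ∈ S, ¬ G.Adj x y) →
      ∀ Δ : ℝ, (∀ s ∈ S, ((Y.filter (G.Adj s)).card : ℝ) ≤ Δ) →
      ((Y.filter fun w => ¬ G.Adj v w ∧ ∃ s ∈ S, G.Adj s w).card : ℝ)
        ≤ 18.9 * √(δ * n / (400 * ε) * Δ) := by
    intro v hv Y hY S hS hst Δ hΔ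
    refine card_le_of_no_private G S _ (fun b hb => (Finset.mem_filter.1 hb).2.2) ?_ Δ ?_
    · intro I hI hIne
      obtain ⟨i, hi, h⟩ := hno v hv I
        ((hI.trans hS).trans (Finset.filter_subset_filter _ hY))
        (fun x hx y hy => hst x (hI hx) y (hI hy)) hIne
      refine ⟨i, hi, lt_of_le_of_lt ?_ h⟩
      gcongr
      refine privateNeighbors_mono G ?_ i
      intro w hw
      obtain ⟨h1, h2⟩ := Finset.mem_filter.1 hw
      exact Finset.mem_filter.2 ⟨hY h1, h2.1⟩
    · intro s hs
      refine le_trans ?_ (hΔ s hs)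
      exact_mod_cast Finset.card_le_card
        (Finset.filter_subset_filter _ (Finset.filter_subset _ _))
  have hne_univ : ∀ (Y : Finset V) v, Y.filter (G.Adj v) ≠ Finset.univ := by
    intro Y v h
    have := Finset.mem_univ v
    rw [← h] at this
    exact G.loopless.irrefl v (Finset.mem_filter.1 this).2
  have hsmall : ∀ v ∈ X, ((X.filter (G.Adj v)).card : ℝ) ≤ q * n := by
    intro v hv
    by_contra! hbig
    obtain ⟨S, hSN, hSst, hScard⟩ := hG.exists_stable (hne_univ X v)
    have hcov := hcover v hv X subset_rfl S hSN hSst _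
      fun s hs => hdeg s (Finset.mem_filter.1 (hSN hs)).1
    have hsqrt : √(δ * n / (400 * ε) * (ε * δ * n)) = δ * n / 20 := by
      rw [show δ * n / (400 * ε) * (ε * δ * n) = (δ * n / 20) ^ 2 by field_simp; norm_num,
        Real.sqrt_sq (by positivity)]
    rw [hsqrt] at hcov
    set C := X.filter fun w => ¬ G.Adj v w ∧ ∃ s ∈ S, G.Adj s w with hC
    set N := X.filter (G.Adj v) with hN
    set P := X.filter fun w => ¬ G.Adj v w ∧ ∀ s ∈ S, ¬ G.Adj s w with hP
    have hXsub : X ⊆ N ∪ C ∪ P := by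
      intro w hw
      simp only [hN, hC, hP, Finset.mem_union, Finset.mem_filter]
      by_cases h1 : G.Adj v w
      · simp [hw, h1]
      · by_cases h2 : ∃ s ∈ S, G.Adj s w
        · exact Or.inl (Or.inr ⟨hw, h1, h2⟩)
        · push Not at h2
          exact Or.inr ⟨hw, h1, h2⟩
    have hXcard : (X.card : ℝ) ≤ N.card + C.card + P.card := by
      have h1 := Finset.card_le_card hXsub
      have h2 := Finset.card_union_le (N ∪ C) P
      have h3 := Finset.card_union_le N C
      exact_mod_cast (by omega : X.card ≤ N.card + C.card + P.card)
    have hδn : 0 < δ * n := by positivity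
    have hPcard : q * n ≤ P.card := by
      have h1 := hdeg v hv
      have h2 : ε * (δ * n) ≤ 1 / 20 * (δ * n) := by gcongr
      have h3 : q * n ≤ 0.005 * δ * n := by gcongr
      linarith
    have hPne : P ≠ Finset.univ := by
      have : 0 < N.card := by
        have : (0 : ℝ) < N.card := by linarith
        exact_mod_cast this
      obtain ⟨w, hw⟩ := Finset.card_pos.1 this
      intro h
      have hw' := Finset.mem_univ w
      rw [← h] at hw'
      exact (Finset.mem_filter.1 hw').2.1 (Finset.mem_filter.1 hw).2
    obtain ⟨T, hTP, hTst, hTcard⟩ := hG.exists_stable hPne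
    have hunion := hlt _ (stable_union hSst hTst
      fun x hx y hy => (Finset.mem_filter.1 (hTP hy)).2.2 x hx)
    rw [Finset.card_union_of_disjoint (Finset.disjoint_left.2 fun w hwS hwT =>
      (Finset.mem_filter.1 (hTP hwT)).2.1 (Finset.mem_filter.1 (hSN hwS)).2)] at hunion
    push_cast at hunion
    have h1 : (q * n) ^ τ ≤ (N.card : ℝ) ^ τ := by gcongr
    have h2 : (q * n) ^ τ ≤ (P.card : ℝ) ^ τ := by gcongr
    have h3 : 1 / 2 * n ^ τ ≤ (q * n) ^ τ := by
      rw [Real.mul_rpow hq.le hn0.le]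
      gcongr
    linarith
  have hgrow : ∀ Y ⊆ X, ∃ T ⊆ Y, (∀ x ∈ T, ∀ y ∈ T, ¬ G.Adj x y) ∧
      (Y.card : ℝ) * n ^ τ ≤ δ * n * (T.card * omegaNum G) := by
    intro Y
    induction Y using Finset.strongInduction with
    | H Y ih =>
      intro hY
      rcases Y.eq_empty_or_nonempty with rfl | hYne
      · exact ⟨∅, subset_rfl, by simp, by simp⟩
      obtain ⟨v, hvY, hmax⟩ := Y.exists_max_image (fun a => (Y.filter (G.Adj a)).card) hYne
      rcases Nat.eq_zero_or_pos (Y.filter (G.Adj v)).card with hd0 | hdpos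
      · obtain ⟨T, hTY, hTst, hTcard⟩ := ih (Y.erase v) (Finset.erase_ssubset hvY)
          ((Finset.erase_subset _ _).trans hY)
        have hvT : v ∉ T := fun h => Finset.notMem_erase v Y (hTY h)
        refine ⟨{v} ∪ T, Finset.union_subset (by simpa using hvY)
          (hTY.trans (Finset.erase_subset _ _)), stable_union (by simp) hTst ?_, ?_⟩
        · intro x hx y hy hxy
          rw [Finset.mem_singleton.1 hx] at hxy
          have : y ∈ Y.filter (G.Adj v) :=
            Finset.mem_filter.2 ⟨Finset.mem_of_mem_erase (hTY hy), hxy⟩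
          rw [Finset.card_eq_zero.1 hd0] at this
          exact Finset.notMem_empty _ this
        · rw [Finset.card_union_of_disjoint (by simpa using hvT), Finset.card_singleton,
            ← Finset.card_erase_add_one hvY]
          push_cast
          have hn1 : 1 ≤ n := by
            rw [hn]
            exact_mod_cast hV
          have h1 : n ^ τ ≤ √n := by
            rw [Real.sqrt_eq_rpow]
            exact Real.rpow_le_rpow_of_exponent_le hn1 (by linarith)
          have h2 : √n ≤ δ * n := by
            rw [Real.sqrt_le_left (by positivity)]
            have : q * n * n ≤ δ ^ 2 * n * n := by gcongr
            nlinarith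
          have h3 : δ * n * 1 ≤ δ * n * omegaNum G := by gcongr
          linarith
      · obtain ⟨S, hSN, hSst, hScard⟩ := hG.exists_stable (hne_univ Y v)
        have hcov := hcover v (hY hvY) Y hY S hSN hSst (Y.filter (G.Adj v)).card
          fun s hs => by exact_mod_cast hmax s (Finset.mem_filter.1 (hSN hs)).1
        set C := Y.filter fun w => ¬ G.Adj v w ∧ ∃ s ∈ S, G.Adj s w with hC
        set N := Y.filter (G.Adj v) with hN
        set P := Y.filter fun w => w ≠ v ∧ ¬ G.Adj v w ∧ ∀ s ∈ S, ¬ G.Adj s w with hP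
        have hPY : P ⊂ Y := by
          refine (Finset.ssubset_iff_of_subset (Finset.filter_subset _ _)).2 ⟨v, hvY, ?_⟩
          simp
        have hYsub : Y ⊆ {v} ∪ N ∪ C ∪ P := by
          intro w hw
          simp only [hN, hC, hP, Finset.mem_union, Finset.mem_filter, Finset.mem_singleton]
          by_cases h0 : w = v
          · simp [h0]
          by_cases h1 : G.Adj v w
          · simp [hw, h1]
          · by_cases h2 : ∃ s ∈ S, G.Adj s w
            · exact Or.inl (Or.inr ⟨hw, h1, h2⟩)
            · push Not at h2
              exact Or.inr ⟨hw, h0, h1, h2⟩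
        have hYcard : (Y.card : ℝ) ≤ 1 + N.card + C.card + P.card := by
          have h1 := Finset.card_le_card hYsub
          have h2 := Finset.card_union_le ({v} ∪ N ∪ C) P
          have h3 := Finset.card_union_le ({v} ∪ N) C
          have h4 := Finset.card_union_le {v} N
          rw [Finset.card_singleton] at h4
          exact_mod_cast (by omega : Y.card ≤ 1 + N.card + C.card + P.card)
        obtain ⟨T, hTP, hTst, hTcard⟩ := ih P hPY (hPY.subset.trans hY)
        refine ⟨S ∪ T, Finset.union_subset (hSN.trans (Finset.filter_subset _ _))
          (hTP.trans hPY.subset), stable_union hSst hTst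
          fun x hx y hy => (Finset.mem_filter.1 (hTP hy)).2.2.2 x hx, ?_⟩
        rw [Finset.card_union_of_disjoint (Finset.disjoint_left.2 fun w hwS hwT =>
          (Finset.mem_filter.1 (hTP hwT)).2.2.1 (Finset.mem_filter.1 (hSN hwS)).2)]
        push_cast
        have hNq : (N.card : ℝ) ≤ q * n := by
          refine le_trans ?_ (hsmall v (hY hvY))
          exact_mod_cast Finset.card_le_card (Finset.filter_subset_filter _ hY)
        have hcost := removal_cost_le (c := δ / (400 * ε)) (d := N.card) hδ (by positivity) hn0
          hτ4 (by exact_mod_cast hdpos) (Nat.cast_le.2 (Finset.card_le_univ N))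
          (hNq.trans (by gcongr))
        rw [show δ / (400 * ε) * n * N.card = δ * n / (400 * ε) * N.card by ring] at hcost
        have h1 : (Y.card : ℝ) * n ^ τ
            ≤ (1 + N.card + 18.9 * √(δ * n / (400 * ε) * N.card) + P.card) * n ^ τ := by
          gcongr
          linarith
        have h2 : δ * n * (N.card : ℝ) ^ τ ≤ δ * n * (S.card * omegaNum G) := by gcongr
        linarith
  obtain ⟨T, -, hTst, hTcard⟩ := hgrow X subset_rfl
  have h1 : δ * n * n ^ τ ≤ X.card * n ^ τ := by gcongr
  have h2 : n ^ τ ≤ T.card * omegaNum G :=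
    le_of_mul_le_mul_left (h1.trans hTcard) (by positivity)
  exact absurd (hlt T hTst) (not_lt.2 h2)

end Main

lemma exists_rpow_ge_half {q : ℝ} (hq : 0 < q) : ∃ τ : ℝ, 0 < τ ∧ τ ≤ 1 / 4 ∧ 1 / 2 ≤ q ^ τ := by
  have hcont : Filter.Tendsto (fun τ : ℝ => q ^ τ) (nhdsWithin 0 (Set.Ioi 0)) (nhds 1) := by
    have h : ContinuousAt (fun τ : ℝ => q ^ τ) 0 := Real.continuousAt_const_rpow hq.ne'
    simpa using h.tendsto.mono_left nhdsWithin_le_nhds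
  have h1 := hcont.eventually (lt_mem_nhds (by norm_num : (1 / 2 : ℝ) < 1))
  have h2 : ∀ᶠ τ : ℝ in nhdsWithin 0 (Set.Ioi 0), τ ∈ Set.Ioo (0 : ℝ) (1 / 4) :=
    Ioo_mem_nhdsGT (by norm_num)
  obtain ⟨τ, hτ1, hτ2⟩ := (h1.and h2).exists
  exact ⟨τ, hτ2.1, hτ2.2.le, hτ1.le⟩

/-- The key lemma: for all `δ, ε > 0` with `ε < 1/20` there exists `τ > 0` such that for
every `τ`-critical graph `G` and `X ⊆ V(G)` with `|X| ≥ δ|G|` inducing a subgraph of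
maximum degree at most `εδ|G|`, there is a `(t, δ|G|/(400 ε t²))`-comb of `G[X]` with
`t ≥ 1/(400ε)`, with `{a_1, …, a_t}` stable, and a vertex `v ∈ X` adjacent to all the `a_i`
and with no neighbour in `B_1 ∪ ⋯ ∪ B_t`. -/
theorem stmt_7 (δ ε : ℝ) (hδ : 0 < δ) (hε : 0 < ε) (hε20 : ε < 1 / 20) :
    ∃ τ : ℝ, 0 < τ ∧
      ∀ (V : Type) [Fintype V] [DecidableEq V] (G : SimpleGraph V) [DecidableRel G.Adj]
        (X : Finset V),
        TauCritical τ G →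
        δ * (Fintype.card V : ℝ) ≤ (X.card : ℝ) →
        (∀ v ∈ X, ((X.filter (G.Adj v)).card : ℝ) ≤ ε * δ * (Fintype.card V : ℝ)) →
        ∃ t : ℕ, 1 / (400 * ε) ≤ (t : ℝ) ∧
          ∃ a : Fin t → V, ∃ Bs : Fin t → Finset V,
            IsComb G (δ * (Fintype.card V : ℝ) / (400 * ε * (t : ℝ) ^ 2)) a Bs ∧
            (∀ i, a i ∈ X) ∧ (∀ i, Bs i ⊆ X) ∧
            (∀ i j, i ≠ j → ¬ G.Adj (a i) (a j)) ∧
            ∃ v ∈ X, (∀ i, G.Adj v (a i)) ∧ (∀ i, ∀ w ∈ Bs i, ¬ G.Adj v w) := by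
  obtain ⟨q, hq, hqle⟩ : ∃ q : ℝ, 0 < q ∧ q ≤ δ ^ 2 ∧ q ≤ 0.005 * δ ∧
      q ≤ (δ / (2 + 18.9 * √(δ / (400 * ε)))) ^ 4 :=
    ⟨min (δ ^ 2) (min (0.005 * δ) ((δ / (2 + 18.9 * √(δ / (400 * ε)))) ^ 4)),
      by positivity, by simp⟩
  obtain ⟨τ, hτ, hτ4, hqτ⟩ := exists_rpow_ge_half hq
  refine ⟨τ, hτ, ?_⟩
  intro V _ _ G _ X hG hX hdeg
  have hn : (0 : ℝ) < Fintype.card V := by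
    refine lt_of_le_of_ne (Nat.cast_nonneg _) fun h => ?_
    have := hG.two_lt_card_rpow hτ
    rw [← h, Real.zero_rpow hτ.ne'] at this
    linarith
  obtain ⟨v, hv, I, hI, hst, hne, hpriv⟩ := hG.exists_private hδ hε hε20 hτ hτ4 hq hqle.1
    hqle.2.1 hqle.2.2 hqτ hX hdeg
  exact exists_comb_of_private hδ hε hn hdeg hv hI hst hne hpriv
end
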